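/- arXiv:2407.19640 — 5 statements merged into one kernel-verified Lean document; each statement's English description precedes it below -/
import Mathlib

section
/- Let τ > 0, n a positive integer, and let f : C([−τ,0],ℝⁿ) → ℝⁿ be Lipschitz continuous with respect to the uniform norm on C([−τ,0],ℝⁿ). If x, y : [−τ,∞) → ℝⁿ are continuous, differentiable on [0,∞) (one-sided at 0), satisfy x′(t) = f(x_t) and y′(t) = f(y_t) for all t ≥ 0, and x(s) = y(s) for all s ∈ [−τ,0], then x(t) = y(t) for all t ≥ 0. -/
/-!
Uniqueness follows from the method of steps. Put `d = x - y` and suppose `d = 0` on `[-τ, a]` with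
`a ≥ 0`. Let `M` be the maximum of `‖d‖` on `[a, a + h]`. For `t` in that interval the history
segments satisfy `‖x_t - y_t‖ ≤ M`, so `‖d'(t)‖ ≤ L * M`, and the mean value inequality gives
`‖d(t)‖ ≤ L * M * h` on `[a, a + h]`. If `L * h < 1`, evaluating at the maximum forces `M = 0`
(`dde_step`). As `h` does not depend on `a`, the intervals of length `h` exhaust `[0, ∞)`.
-/

/-- The history segment `x_t : s ↦ x (t + s)` as an element of `C([-τ, 0], E)`, for `t ≥ 0` and `x`
continuous on `[-τ, ∞)`. -/
def historySegment {E : Type*} [TopologicalSpace E] {τ : ℝ} {x : ℝ → E}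
    (hxc : ContinuousOn x (Set.Ici (-τ))) {t : ℝ} (ht : 0 ≤ t) :
    C(Set.Icc (-τ) (0 : ℝ), E) where
  toFun s := x (t + s)
  continuous_toFun := hxc.comp_continuous (by fun_prop) fun s => by
    have := s.2.1
    simp only [Set.mem_Ici]
    linarith

/-- One step of the method of steps: agreement on `[-τ, a]` extends to `[-τ, a + h]` as soon as
`L * h < 1`. -/
theorem dde_step {E : Type*} [NormedAddCommGroup E] [NormedSpace ℝ E] {τ : ℝ} (hτ : 0 < τ)
    {f : C(Set.Icc (-τ) (0 : ℝ), E) → E} {L : NNReal} (hf : LipschitzWith L f) {x y : ℝ → E}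
    (hxc : ContinuousOn x (Set.Ici (-τ))) (hyc : ContinuousOn y (Set.Ici (-τ)))
    (hx : ∀ t (ht : 0 ≤ t), HasDerivWithinAt x (f (historySegment hxc ht)) (Set.Ici 0) t)
    (hy : ∀ t (ht : 0 ≤ t), HasDerivWithinAt y (f (historySegment hyc ht)) (Set.Ici 0) t)
    {a h : ℝ} (ha : 0 ≤ a) (hh : 0 ≤ h) (hLh : L * h < 1)
    (heq : ∀ s ∈ Set.Icc (-τ) a, x s = y s) :
    ∀ s ∈ Set.Icc (-τ) (a + h), x s = y s := by
  have hdc : ContinuousOn (fun t => x t - y t) (Set.Icc a (a + h)) :=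
    (hxc.sub hyc).mono fun t ht => by
      simp only [Set.mem_Ici]
      linarith [ht.1]
  obtain ⟨m, hm, hmax⟩ := isCompact_Icc.exists_isMaxOn
    (Set.nonempty_Icc.2 (by linarith : a ≤ a + h)) hdc.norm
  set M := ‖x m - y m‖ with hM
  have hM0 : 0 ≤ M := norm_nonneg _
  have hle : ∀ s ∈ Set.Icc (-τ) (a + h), ‖x s - y s‖ ≤ M := by
    intro s hs
    rcases le_total s a with hsa | hsa
    · simpa [heq s ⟨hs.1, hsa⟩] using hM0
    · exact hmax ⟨hsa, hs.2⟩
  have hmvt : ‖(x m - y m) - (x a - y a)‖ ≤ L * M * (m - a) := by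
    -- `‖t‖` stands for `t`: it makes the derivative a total function of `t`, as the mean value
    -- inequality requires, while agreeing with `t` on `[a, a + h]`.
    refine norm_image_sub_le_of_norm_deriv_right_le_segment
      (f' := fun t => f (historySegment hxc (norm_nonneg t)) -
        f (historySegment hyc (norm_nonneg t))) hdc ?_ ?_ m hm
    · intro t ht
      have ht0 : 0 ≤ t := ha.trans ht.1
      have hsub : Set.Ici t ⊆ Set.Ici 0 := Set.Ici_subset_Ici.2 ht0
      simp only [Real.norm_of_nonneg ht0]
      exact ((hx t ht0).mono hsub).sub ((hy t ht0).mono hsub)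
    · intro t ht
      have ht0 : 0 ≤ t := ha.trans ht.1
      simp only [Real.norm_of_nonneg ht0]
      rw [← dist_eq_norm]
      refine (hf.dist_le_mul _ _).trans (mul_le_mul_of_nonneg_left ?_ L.2)
      refine (ContinuousMap.dist_le hM0).2 fun s => ?_
      rw [dist_eq_norm]
      exact hle (t + s) ⟨by linarith [s.2.1], by linarith [s.2.2, ht.2]⟩
  have hMle : M ≤ L * h * M := by
    rw [heq a ⟨by linarith, le_rfl⟩, sub_self, sub_zero] at hmvt
    calc M ≤ L * M * (m - a) := hmvt
      _ ≤ L * M * h := mul_le_mul_of_nonneg_left (by linarith [hm.2]) (mul_nonneg L.2 hM0)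
      _ = L * h * M := by ring
  have hMzero : M ≤ 0 := by nlinarith
  intro s hs
  exact sub_eq_zero.1 (norm_le_zero_iff.1 ((hle s hs).trans hMzero))

/-- Uniqueness of solutions of the delay differential equation `x'(t) = f(x_t)` with
Lipschitz right-hand side `f : C([-τ,0], ℝⁿ) → ℝⁿ`: two solutions with the same
initial history on `[-τ,0]` agree for all `t ≥ 0`. The history segment
`x_t ∈ C([-τ,0],ℝⁿ)` is characterized by `x_t(s) = x(t+s)` for `s ∈ [-τ,0]`. -/
theorem dde_functional_uniqueness
    (n : ℕ) (hn : 0 < n) (τ : ℝ) (hτ : 0 < τ)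
    (f : C(Set.Icc (-τ) (0 : ℝ), EuclideanSpace ℝ (Fin n)) → EuclideanSpace ℝ (Fin n))
    (L : NNReal) (hf : LipschitzWith L f)
    (x y : ℝ → EuclideanSpace ℝ (Fin n))
    (hxc : ContinuousOn x (Set.Ici (-τ)))
    (hyc : ContinuousOn y (Set.Ici (-τ)))
    (hx : ∀ t, 0 ≤ t → ∀ xt : C(Set.Icc (-τ) (0 : ℝ), EuclideanSpace ℝ (Fin n)),
      (∀ s : Set.Icc (-τ) (0 : ℝ), xt s = x (t + s)) →
      HasDerivWithinAt x (f xt) (Set.Ici 0) t)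
    (hy : ∀ t, 0 ≤ t → ∀ yt : C(Set.Icc (-τ) (0 : ℝ), EuclideanSpace ℝ (Fin n)),
      (∀ s : Set.Icc (-τ) (0 : ℝ), yt s = y (t + s)) →
      HasDerivWithinAt y (f yt) (Set.Ici 0) t)
    (hinit : ∀ s ∈ Set.Icc (-τ) (0 : ℝ), x s = y s) :
    ∀ t, 0 ≤ t → x t = y t := by
  have hL : (0 : ℝ) < L + 1 := by positivity
  have hsteps : ∀ k : ℕ, ∀ s ∈ Set.Icc (-τ) (k * (1 / ((L : ℝ) + 1))), x s = y s := by
    intro k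
    induction k with
    | zero => simpa using hinit
    | succ k ih =>
      have hLh : (L : ℝ) * (1 / ((L : ℝ) + 1)) < 1 := by
        rw [mul_one_div, div_lt_one hL]
        linarith
      have := dde_step hτ hf hxc hyc (fun t ht => hx t ht _ fun _ => rfl)
        (fun t ht => hy t ht _ fun _ => rfl) (by positivity) (by positivity) hLh ih
      intro s hs
      refine this s ⟨hs.1, hs.2.trans_eq ?_⟩
      push_cast
      ring
  intro t ht
  obtain ⟨k, hk⟩ := exists_nat_ge (t * (L + 1))
  refine hsteps k t ⟨by linarith, ?_⟩
  rwa [mul_one_div, le_div_iff₀ hL]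
end

section
/- Let 0 < τ₁ < ⋯ < τ_k =: τ, and let f : (ℝⁿ)^{k+1} → ℝⁿ satisfy ‖f(u₀,…,u_k) − f(v₀,…,v_k)‖ ≤ L · max_{0≤j≤k} ‖u_j − v_j‖ for all arguments. Let x, y : [−τ,∞) → ℝⁿ be continuous, differentiable on [0,∞), and satisfy x′(t) = f(x(t), x(t−τ₁), …, x(t−τ_k)) and y′(t) = f(y(t), y(t−τ₁), …, y(t−τ_k)) for all t ≥ 0. Then for every t ≥ 0, sup_{−τ≤s≤t} ‖x(s) − y(s)‖ ≤ e^{Lt} · max_{s∈[−τ,0]} ‖x(s) − y(s)‖. In particular the solution depends continuously on the initial history. -/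
/-! The difference `d = x - y` is compared with the weight `e^{Ls}`. Let `M` be the maximum of `‖d‖` on
the initial interval, fix `T ≥ 0`, and let `t₀ ∈ [0,T]` maximise `e^{-Ls} ‖d s‖` over `[0,T]`, with
maximum value `W`. If `W > M`, then `‖d s‖ ≤ W e^{L max(s,0)}` on all of `[-τ,T]`, so the Lipschitz
condition gives `‖d' s‖ ≤ L W e^{Ls}` on `[0,T]`, and integrating from `‖d 0‖ ≤ M` yields
`‖d s‖ ≤ M + W (e^{Ls} - 1)`. At `s = t₀` the left side is `W e^{L t₀}`, hence `W ≤ M`, a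
contradiction. Therefore `‖d s‖ ≤ M e^{Ls}` for all `s ∈ [0,T]`. Using the exponent `L` itself in the
weight means that no limiting argument and no first-crossing argument is needed. -/

/-- Continuous dependence on the initial history for a DDE with `k` constant discrete
delays `0 < τ₁ < ⋯ < τ_k =: τ` and right-hand side `f : (ℝⁿ)^{k+1} → ℝⁿ` satisfying
`‖f(u₀,…,u_k) - f(v₀,…,v_k)‖ ≤ L · max_j ‖u_j - v_j‖`. For two solutions `x, y` of
`x'(t) = f(x(t), x(t-τ₁), …, x(t-τ_k))` and every `t ≥ 0`,
`sup_{-τ ≤ s ≤ t} ‖x(s) - y(s)‖ ≤ e^{Lt} · max_{s ∈ [-τ,0]} ‖x(s) - y(s)‖`. -/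
theorem dde_continuous_dependence
    (n k : ℕ) (hn : 0 < n) (hk : 0 < k)
    (τ : Fin k → ℝ) (hτpos : ∀ j, 0 < τ j) (hτmono : StrictMono τ)
    (τmax : ℝ) (hτmax : τmax = τ ⟨k - 1, Nat.sub_lt hk Nat.one_pos⟩)
    (f : (Fin (k + 1) → EuclideanSpace ℝ (Fin n)) → EuclideanSpace ℝ (Fin n))
    (L : ℝ) (hL : 0 ≤ L)
    (hf : ∀ u v : Fin (k + 1) → EuclideanSpace ℝ (Fin n),
      ‖f u - f v‖ ≤ L * ⨆ j : Fin (k + 1), ‖u j - v j‖)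
    (x y : ℝ → EuclideanSpace ℝ (Fin n))
    (hxc : ContinuousOn x (Set.Ici (-τmax)))
    (hyc : ContinuousOn y (Set.Ici (-τmax)))
    (hx : ∀ t, 0 ≤ t →
      HasDerivWithinAt x (f (Fin.cons (x t) (fun j => x (t - τ j)))) (Set.Ici 0) t)
    (hy : ∀ t, 0 ≤ t →
      HasDerivWithinAt y (f (Fin.cons (y t) (fun j => y (t - τ j)))) (Set.Ici 0) t) :
    ∀ t, 0 ≤ t →
      (⨆ s : Set.Icc (-τmax) t, ‖x s - y s‖) ≤
        Real.exp (L * t) * ⨆ s : Set.Icc (-τmax) (0 : ℝ), ‖x s - y s‖ := by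
  intro T hT
  have hτle : ∀ j, τ j ≤ τmax := fun j => by
    rw [hτmax]
    apply hτmono.monotone
    rw [Fin.le_def]
    have := j.2
    simp only
    omega
  have hτ0 : 0 < τmax := hτmax ▸ hτpos _
  have hdc : ContinuousOn (fun s => x s - y s) (Set.Ici (-τmax)) := hxc.sub hyc
  set M : ℝ := ⨆ s : Set.Icc (-τmax) (0 : ℝ), ‖x s - y s‖ with hM
  have hMle : ∀ s, -τmax ≤ s → s ≤ 0 → ‖x s - y s‖ ≤ M := by
    intro s h1 h2
    have hb : BddAbove (Set.range fun s : Set.Icc (-τmax) (0 : ℝ) => ‖x s - y s‖) := by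
      have hcomp := (isCompact_Icc (a := -τmax) (b := (0 : ℝ))).bddAbove_image
        (f := fun s => ‖x s - y s‖) (hdc.norm.mono Set.Icc_subset_Ici_self)
      rwa [Set.image_eq_range] at hcomp
    exact le_ciSup hb ⟨s, h1, h2⟩
  have hM0 : 0 ≤ M := (norm_nonneg _).trans (hMle 0 (by linarith) le_rfl)
  have hsub : Set.Icc 0 T ⊆ Set.Ici (-τmax) := fun s hs => by
    have := hs.1
    simp only [Set.mem_Ici]
    linarith
  obtain ⟨t₀, ht₀, hmax⟩ := (isCompact_Icc (a := (0 : ℝ)) (b := T)).exists_isMaxOn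
    ⟨0, le_rfl, hT⟩ (f := fun s => Real.exp (-(L * s)) * ‖x s - y s‖)
    ((by fun_prop : Continuous fun s => Real.exp (-(L * s))).continuousOn.mul
      (hdc.norm.mono hsub))
  set W : ℝ := Real.exp (-(L * t₀)) * ‖x t₀ - y t₀‖ with hW
  have hWle : ∀ s, 0 ≤ s → s ≤ T → ‖x s - y s‖ ≤ W * Real.exp (L * s) := by
    intro s h1 h2
    have h : Real.exp (-(L * s)) * ‖x s - y s‖ ≤ W := hmax ⟨h1, h2⟩
    rwa [Real.exp_neg, inv_mul_le_iff₀ (Real.exp_pos _), mul_comm] at h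
  have hWM : W ≤ M := by
    by_contra! hlt
    have hW0 : 0 < W := hM0.trans_lt hlt
    -- The weighted bound at time `t` also dominates all of the history `[-τmax, t]`.
    have hhist : ∀ t, 0 ≤ t → t ≤ T → ∀ s, -τmax ≤ s → s ≤ t →
        ‖x s - y s‖ ≤ W * Real.exp (L * t) := by
      intro t h0 hT' s h1 h2
      rcases le_total s 0 with hs | hs
      · have h1e : 1 ≤ Real.exp (L * t) := Real.one_le_exp (by positivity)
        exact (hMle s h1 hs).trans (hlt.le.trans (le_mul_of_one_le_right hW0.le h1e))
      · exact (hWle s hs (h2.trans hT')).trans (by gcongr)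
    have hB : ∀ t, HasDerivAt (fun t => M + W * (Real.exp (L * t) - 1))
        (L * (W * Real.exp (L * t))) t := by
      intro t
      have h := (((((hasDerivAt_id t).const_mul L).exp).sub_const 1).const_mul W).const_add M
      refine HasDerivAt.congr_deriv h ?_
      simp only [id]
      ring
    have key := image_norm_le_of_norm_deriv_right_le_deriv_boundary
      (f := fun s => x s - y s)
      (f' := fun t => f (Fin.cons (x t) (fun j => x (t - τ j))) -
        f (Fin.cons (y t) (fun j => y (t - τ j))))
      (a := 0) (b := T) (hdc.mono hsub)
      (fun t ht => ((hx t ht.1).sub (hy t ht.1)).mono (Set.Ici_subset_Ici.2 ht.1))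
      (by simpa using hMle 0 (by linarith) le_rfl) hB
      (fun t ht => by
        refine (hf _ _).trans (mul_le_mul_of_nonneg_left (ciSup_le fun j => ?_) hL)
        refine Fin.cases ?_ (fun i => ?_) j
        · simpa using hhist t ht.1 ht.2.le t (by linarith [ht.1]) le_rfl
        · simpa using hhist t ht.1 ht.2.le (t - τ i) (by linarith [ht.1, hτle i])
            (by linarith [hτpos i]))
      ht₀
    have hWeq : ‖x t₀ - y t₀‖ = W * Real.exp (L * t₀) := by
      rw [hW, mul_right_comm, ← Real.exp_add]
      simp
    linarith
  have : Nonempty (Set.Icc (-τmax) T) := ⟨⟨0, by linarith, hT⟩⟩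
  refine ciSup_le fun s => ?_
  obtain ⟨s, h1, h2⟩ := s
  simp only
  rw [mul_comm]
  rcases le_total s 0 with hs | hs
  · exact (hMle s h1 hs).trans
      (le_mul_of_one_le_right hM0 (Real.one_le_exp (by positivity)))
  · exact (hWle s hs h2).trans (by gcongr)
end

section
/- Let ρ, τ > 0 with ρτ < π/2, and let x be a solution of the delay logistic equation with initial history φ satisfying φ(s) > 0 for all s ∈ [−τ,0]. Then x(t) → 1 as t → +∞. -/
open Filter Topology

/-!
With `α = ρτ` and `y(t) = log x(τt)` the equation becomes Wright's equation
`y'(t) = -α (exp (y(t - 1)) - 1)`, and the claim is that `y → 0` whenever `0 < α < π/2`.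
Write `z = exp y - 1`.

Comparison arguments (`eventually_le_of_feedback`) turn an eventual lower bound for `z` into an
eventual upper bound and conversely. Six such steps, starting from `z > -1`, show that eventually
`-31/50 ≤ z ≤ 41/50` (`eventually_box`).

Inside this box there is an energy argument. Let `Φ(s) = ∫ t in s..T, z t * z (t - s)`. By Parseval
`Φ` is a cosine series with nonnegative weights, and
`1 + (2/π) cos w - (π/2) sin w / w - (3/50) cos² w ≥ 0` for all `w`, so
`0.97 Φ(0) + (2/π) Φ(1) - 0.03 Φ(2) - (π/2) ∫₀¹ Φ ≥ 0` (`frequency_inequality`). Along a solution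
`z(t) z(t - 1)` is an exact derivative, and the integral of `z` over `[t - 1, t]` is
`(y(t) - y(t + 1)) / α`, where `z(t) y(t + 1)` is again an exact derivative. As `π / (2α) ≥ 1` and
`z y ≥ 0`, what remains is
`∫₀ᵀ (0.97 z(t)² - 0.03 z(t) z(t - 2) - z(t) y(t)) dt ≥ -C` uniformly in `T` (`energy_inequality`).

On the other hand `z y = z log(1 + z)` has a quintic minorant, and a sum-of-squares certificate
(`sos_identity`) shows that on the box the integrand is at most `-z(t - 1)⁴ / 50` plus the derivative
of a polynomial in `z(t), z(t - 1)` plus a term telescoping under `t ↦ t - 1`. Hence `∫ z⁴ < ∞`, and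
since `z` has a bounded derivative, `z → 0`.
-/

open MeasureTheory Set

namespace DelayLogistic

/-! ### Parseval identity for the autocorrelation -/

/-- The autocorrelation `s ↦ ∫ t in s..T, z t * z (t - s)` of `z` cut off to `[0, T]` is, for
`0 ≤ s ≤ 2`, a cosine series with nonnegative weights. This is Parseval's identity on `[0, T + 2]`
for the cut-off `ζ` of `z`, applied to `ζ + ζ(· - s)`; the interval is longer than `T` by the
largest shift, so that translation does not wrap around. -/
theorem autocorr_hasSum (z : ℝ → ℝ) (hz : Continuous z) (T : ℝ) (hT : 2 ≤ T) :
    ∃ w ω : ℤ → ℝ, (∀ n, 0 ≤ w n) ∧ ∀ s ∈ Icc (0 : ℝ) 2,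
      HasSum (fun n => w n * Real.cos (ω n * s)) (∫ t in s..T, z t * z (t - s)) := by
  have hN : (0 : ℝ) < T + 2 := by linarith
  set ζ : ℝ → ℝ := indicator (Ioc 0 T) z with hζ
  obtain ⟨K, hK⟩ : ∃ K, ∀ t, ‖ζ t‖ ≤ K := by
    obtain ⟨K, hK⟩ := (isCompact_Icc (a := (0:ℝ)) (b := T)).exists_bound_of_continuousOn
      hz.continuousOn
    refine ⟨max K 0, fun t => ?_⟩
    by_cases ht : t ∈ Ioc 0 T
    · rw [hζ, indicator_of_mem ht]
      exact (hK t (Ioc_subset_Icc_self ht)).trans (le_max_left _ _)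
    · rw [hζ, indicator_of_notMem ht]; simp
  have hζm : Measurable ζ := hz.measurable.indicator measurableSet_Ioc
  have hmem : ∀ s, MemLp (fun t => ((ζ t + ζ (t - s) : ℝ) : ℂ)) 2
      (volume.restrict (Ioc 0 (T + 2))) := by
    intro s
    refine MemLp.of_bound ?_ (K + K) (Eventually.of_forall fun t => ?_)
    · exact (Complex.measurable_ofReal.comp
        (hζm.add (hζm.comp (measurable_id.sub_const s)))).aestronglyMeasurable
    · rw [Complex.norm_real]
      exact (norm_add_le _ _).trans (add_le_add (hK _) (hK _))
  set c : ℤ → ℂ := fun n => fourierCoeffOn hN (fun t => (ζ t : ℂ)) n with hc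
  set ω : ℤ → ℝ := fun n => 2 * Real.pi * n / (T + 2) with hω
  have hintg : ∀ s n, IntervalIntegrable (fun t => Complex.exp (-(ω n * t : ℝ) * Complex.I) *
      (ζ (t - s) : ℂ)) volume 0 (T + 2) := by
    intro s n
    rw [intervalIntegrable_iff_integrableOn_Ioc_of_le hN.le]
    refine Measure.integrableOn_of_bounded (M := K) (by simp) ?_ (Eventually.of_forall fun t => ?_)
    · refine Measurable.aestronglyMeasurable ?_
      refine Measurable.mul (by fun_prop) (Complex.measurable_ofReal.comp
        (hζm.comp (measurable_id.sub_const s)))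
    · rw [norm_mul, Complex.norm_real]
      have : ‖Complex.exp (-(ω n * t : ℝ) * Complex.I)‖ = 1 := by
        rw [← Complex.ofReal_neg, Complex.norm_exp_ofReal_mul_I]
      rw [this, one_mul]; exact hK _
  have hfour : ∀ (f : ℝ → ℂ) n, fourierCoeffOn hN f n =
      ((T + 2 : ℝ) : ℂ)⁻¹ * ∫ t in (0:ℝ)..(T+2), Complex.exp (-(ω n * t : ℝ) * Complex.I) * f t := by
    intro f n
    rw [fourierCoeffOn_eq_integral]
    simp only [sub_zero, one_div, Complex.real_smul, Complex.ofReal_inv, smul_eq_mul]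
    congr 1
    apply intervalIntegral.integral_congr
    intro t _
    simp only
    congr 1
    rw [fourier_coe_apply]
    congr 1
    simp only [hω]
    push_cast
    ring
  have hshift : ∀ s ∈ Icc (0 : ℝ) 2, ∀ n,
      ∫ t in (0:ℝ)..(T+2), Complex.exp (-(ω n * t : ℝ) * Complex.I) * (ζ (t - s) : ℂ) =
      Complex.exp (-(ω n * s : ℝ) * Complex.I) *
        ∫ t in (0:ℝ)..(T+2), Complex.exp (-(ω n * t : ℝ) * Complex.I) * (ζ t : ℂ) := by
    intro s hs n
    rw [← intervalIntegral.integral_const_mul]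
    have e1 : ∀ t, Complex.exp (-(ω n * t : ℝ) * Complex.I) * (ζ (t - s) : ℂ) =
        (fun u => Complex.exp (-(ω n * s : ℝ) * Complex.I) *
          (Complex.exp (-(ω n * u : ℝ) * Complex.I) * (ζ u : ℂ))) (t - s) := by
      intro t
      simp only
      rw [← mul_assoc, ← Complex.exp_add]
      congr 2
      push_cast
      ring
    rw [intervalIntegral.integral_congr (fun t _ => e1 t),
      intervalIntegral.integral_comp_sub_right (fun u => Complex.exp (-(ω n * s : ℝ) * Complex.I) *
          (Complex.exp (-(ω n * u : ℝ) * Complex.I) * (ζ u : ℂ)))]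
    -- both integrals only see the support `Ioc 0 T`
    rw [intervalIntegral.integral_of_le (by linarith), intervalIntegral.integral_of_le (by linarith)]
    have hz0 : ∀ u, u ∉ Ioc 0 T → (Complex.exp (-(ω n * s : ℝ) * Complex.I) *
          (Complex.exp (-(ω n * u : ℝ) * Complex.I) * (ζ u : ℂ))) = 0 := by
      intro u hu
      rw [hζ, indicator_of_notMem hu]; simp
    rw [setIntegral_eq_of_subset_of_forall_sdiff_eq_zero (s := Ioc 0 T) measurableSet_Ioc
        (Ioc_subset_Ioc (by linarith [hs.1]) (by linarith [hs.2])) (fun u hu => hz0 u hu.2),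
      setIntegral_eq_of_subset_of_forall_sdiff_eq_zero (s := Ioc 0 T) (t := Ioc 0 (T + 2)) measurableSet_Ioc
        (Ioc_subset_Ioc (by linarith [hs.1]) (by linarith [hs.2])) (fun u hu => hz0 u hu.2)]
  have hcs : ∀ s ∈ Icc (0 : ℝ) 2, ∀ n,
      fourierCoeffOn hN (fun t => ((ζ t + ζ (t - s) : ℝ) : ℂ)) n =
        (1 + Complex.exp (-(ω n * s : ℝ) * Complex.I)) * c n := by
    intro s hs n
    simp only [hc, hfour]
    have : ∀ t, Complex.exp (-(ω n * t : ℝ) * Complex.I) * ((ζ t + ζ (t - s) : ℝ) : ℂ) =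
      Complex.exp (-(ω n * t : ℝ) * Complex.I) * (ζ t : ℂ) +
      Complex.exp (-(ω n * t : ℝ) * Complex.I) * (ζ (t - s) : ℂ) := by
      intro t; push_cast; ring
    simp_rw [this]
    have h0 := hintg 0 n
    simp only [sub_zero] at h0
    rw [intervalIntegral.integral_add h0 (hintg s n), hshift s hs n]
    ring
  have hns : ∀ θ : ℝ, ‖1 + Complex.exp (-(θ : ℝ) * Complex.I)‖ ^ 2 = 2 + 2 * Real.cos θ := by
    intro θ
    rw [← Complex.ofReal_neg, Complex.exp_mul_I, ← Complex.normSq_eq_norm_sq, Complex.normSq_apply]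
    simp [← Complex.ofReal_cos, ← Complex.ofReal_sin,
      -Complex.ofReal_neg]
    nlinarith [Real.sin_sq_add_cos_sq θ]
  have hpars : ∀ s ∈ Icc (0 : ℝ) 2, HasSum (fun n => (T + 2) * ‖c n‖ ^ 2 *
      (2 + 2 * Real.cos (ω n * s))) (∫ t in (0:ℝ)..(T + 2), (ζ t + ζ (t - s)) ^ 2) := by
    intro s hs
    have h := (hasSum_sq_fourierCoeffOn hN (hmem s)).mul_left (T + 2)
    simp only [hcs s hs, norm_mul, mul_pow, hns, sub_zero, Complex.norm_real, Real.norm_eq_abs,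
      sq_abs, smul_eq_mul] at h
    rw [mul_inv_cancel_left₀ hN.ne'] at h
    refine (h.congr_fun ?_)
    intro n; ring
  have hii : ∀ s s' : ℝ, IntervalIntegrable (fun t => ζ (t - s) * ζ (t - s')) volume 0 (T + 2) := by
    intro s s'
    rw [intervalIntegrable_iff_integrableOn_Ioc_of_le hN.le]
    refine Measure.integrableOn_of_bounded (M := K * K) (by simp) ?_ (Eventually.of_forall fun t => ?_)
    · exact ((hζm.comp (measurable_id.sub_const s)).mul
        (hζm.comp (measurable_id.sub_const s'))).aestronglyMeasurable
    · rw [norm_mul]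
      exact mul_le_mul (hK _) (hK _) (norm_nonneg _) ((norm_nonneg _).trans (hK 0))
  have hcross : ∀ s ∈ Icc (0:ℝ) 2,
      ∫ t in (0:ℝ)..(T + 2), ζ t * ζ (t - s) = ∫ t in s..T, z t * z (t - s) := by
    intro s hs
    rw [intervalIntegral.integral_of_le hN.le, intervalIntegral.integral_of_le (hs.2.trans hT)]
    rw [setIntegral_eq_of_subset_of_forall_sdiff_eq_zero (s := Ioc s T) measurableSet_Ioc
      (Ioc_subset_Ioc hs.1 (by linarith))]
    · refine setIntegral_congr_fun measurableSet_Ioc fun t ht => ?_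
      have h1 : t ∈ Ioc 0 T := ⟨by linarith [ht.1, hs.1], ht.2⟩
      have h2 : t - s ∈ Ioc 0 T := ⟨by linarith [ht.1], by linarith [ht.2, hs.1]⟩
      simp only [hζ, indicator_of_mem h1, indicator_of_mem h2]
    · intro t ht
      by_cases h1 : t ∈ Ioc 0 T
      · have h2 : t - s ∉ Ioc 0 T := fun h2 => ht.2 ⟨by linarith [h2.1], h1.2⟩
        simp only [hζ, indicator_of_notMem h2, mul_zero]
      · simp only [hζ, indicator_of_notMem h1, zero_mul]
  have hsq : ∀ s ∈ Icc (0:ℝ) 2, ∫ t in (0:ℝ)..(T + 2), ζ (t - s) * ζ (t - s) =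
      ∫ t in (0:ℝ)..T, z t * z t := by
    intro s hs
    rw [intervalIntegral.integral_comp_sub_right (fun u => ζ u * ζ u)]
    rw [intervalIntegral.integral_of_le (by linarith), intervalIntegral.integral_of_le (by linarith)]
    rw [setIntegral_eq_of_subset_of_forall_sdiff_eq_zero (s := Ioc 0 T) measurableSet_Ioc
        (Ioc_subset_Ioc (by linarith [hs.1]) (by linarith [hs.2]))]
    · refine setIntegral_congr_fun measurableSet_Ioc fun t ht => ?_
      simp only [hζ, indicator_of_mem ht]
    · intro u hu
      simp only [hζ, indicator_of_notMem hu.2, mul_zero]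
  have hexp : ∀ s ∈ Icc (0:ℝ) 2, ∫ t in (0:ℝ)..(T + 2), (ζ t + ζ (t - s)) ^ 2 =
      2 * (∫ t in (0:ℝ)..T, z t * z t) + 2 * ∫ t in s..T, z t * z (t - s) := by
    intro s hs
    have e : ∀ t, (ζ t + ζ (t - s)) ^ 2 = ζ (t - 0) * ζ (t - 0) + ζ (t - s) * ζ (t - s)
        + 2 * (ζ (t - 0) * ζ (t - s)) := by intro t; rw [sub_zero]; ring
    simp_rw [e]
    rw [intervalIntegral.integral_add ((hii 0 0).add (hii s s)) ((hii 0 s).const_mul 2),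
      intervalIntegral.integral_add (hii 0 0) (hii s s), intervalIntegral.integral_const_mul,
      hsq s hs, hsq 0 ⟨le_rfl, by norm_num⟩]
    simp only [sub_zero]
    rw [hcross s hs]
    ring
  refine ⟨fun n => (T + 2) * ‖c n‖ ^ 2, ω, fun n => by positivity, fun s hs => ?_⟩
  have h0 := hpars 0 ⟨le_rfl, by norm_num⟩
  rw [hexp 0 ⟨le_rfl, by norm_num⟩] at h0
  simp only [sub_zero, mul_zero, Real.cos_zero] at h0
  have h1 := hpars s hs
  rw [hexp s hs] at h1
  -- `h1` is the series of `2 Φ(0) + 2 Φ(s)`, where `Φ` is the autocorrelation, and `h0` that of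
  -- `4 Φ(0)`; the combination isolates `Φ(s)`
  have h2 := (h1.mul_left (1/2)).sub (h0.mul_left (1/4))
  have e1 : ∀ A B : ℝ, 1 / 2 * (2 * A + 2 * B) - 1 / 4 * (2 * A + 2 * A) = B := by
    intro A B; ring
  rw [e1] at h2
  refine h2.congr_fun fun n => ?_
  ring

/-! ### Nonnegativity of the frequency multiplier -/

theorem nonneg_of_deriv_nonneg {f f' : ℝ → ℝ} (hd : ∀ x, HasDerivAt f (f' x) x) (h0 : f 0 = 0)
    (h : ∀ x, 0 ≤ x → 0 ≤ f' x) {x : ℝ} (hx : 0 ≤ x) : 0 ≤ f x := by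
  have : MonotoneOn f (Ici 0) := by
    refine monotoneOn_of_deriv_nonneg (convex_Ici 0)
      (fun x _ => (hd x).continuousAt.continuousWithinAt)
      (fun x _ => (hd x).differentiableAt.differentiableWithinAt) fun x hx => ?_
    rw [(hd x).deriv]
    rw [interior_Ici] at hx
    exact h x (le_of_lt hx)
  simpa [h0] using this (mem_Ici.2 le_rfl) (mem_Ici.2 hx) hx

theorem sin_lower3 {x : ℝ} (hx : 0 ≤ x) : x - x ^ 3 / 6 ≤ Real.sin x := by
  have := nonneg_of_deriv_nonneg (f := fun x => Real.sin x - (x - x ^ 3 / 6))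
    (f' := fun x => Real.cos x - (1 - x ^ 2 / 2))
    (fun x => by
      refine HasDerivAt.congr_deriv ((Real.hasDerivAt_sin x).sub ((hasDerivAt_id x).sub
        ((hasDerivAt_pow 3 x).div_const 6))) ?_
      simp; ring) (by simp)
    (fun x _ => by linarith [Real.one_sub_sq_div_two_le_cos (x := x)]) hx
  linarith

theorem cos_upper4 {x : ℝ} (hx : 0 ≤ x) : Real.cos x ≤ 1 - x ^ 2 / 2 + x ^ 4 / 24 := by
  have := nonneg_of_deriv_nonneg (f := fun x => (1 - x ^ 2 / 2 + x ^ 4 / 24) - Real.cos x)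
    (f' := fun x => Real.sin x - (x - x ^ 3 / 6))
    (fun x => by
      refine HasDerivAt.congr_deriv (((((hasDerivAt_const x (1:ℝ)).sub
        ((hasDerivAt_pow 2 x).div_const 2))).add ((hasDerivAt_pow 4 x).div_const 24)).sub
        (Real.hasDerivAt_cos x)) ?_
      simp; ring) (by simp)
    (fun x hx => by linarith [sin_lower3 hx]) hx
  linarith

theorem sin_upper5 {x : ℝ} (hx : 0 ≤ x) : Real.sin x ≤ x - x ^ 3 / 6 + x ^ 5 / 120 := by
  have := nonneg_of_deriv_nonneg (f := fun x => (x - x ^ 3 / 6 + x ^ 5 / 120) - Real.sin x)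
    (f' := fun x => (1 - x ^ 2 / 2 + x ^ 4 / 24) - Real.cos x)
    (fun x => by
      refine HasDerivAt.congr_deriv ((((hasDerivAt_id x).sub
        ((hasDerivAt_pow 3 x).div_const 6)).add ((hasDerivAt_pow 5 x).div_const 120)).sub
        (Real.hasDerivAt_sin x)) ?_
      simp; ring) (by simp)
    (fun x hx => by linarith [cos_upper4 hx]) hx
  linarith

theorem cos_lower6 {x : ℝ} (hx : 0 ≤ x) :
    1 - x ^ 2 / 2 + x ^ 4 / 24 - x ^ 6 / 720 ≤ Real.cos x := by
  have := nonneg_of_deriv_nonneg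
    (f := fun x => Real.cos x - (1 - x ^ 2 / 2 + x ^ 4 / 24 - x ^ 6 / 720))
    (f' := fun x => (x - x ^ 3 / 6 + x ^ 5 / 120) - Real.sin x)
    (fun x => by
      refine HasDerivAt.congr_deriv ((Real.hasDerivAt_cos x).sub
        ((((hasDerivAt_const x (1:ℝ)).sub ((hasDerivAt_pow 2 x).div_const 2)).add
        ((hasDerivAt_pow 4 x).div_const 24)).sub ((hasDerivAt_pow 6 x).div_const 720))) ?_
      simp; ring) (by simp)
    (fun x hx => by linarith [sin_upper5 hx]) hx
  linarith

theorem two_div_pi_bounds : 0.63661 ≤ 2 / Real.pi ∧ 2 / Real.pi ≤ 0.63663 := by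
  have h1 := Real.pi_gt_d6
  have h2 := Real.pi_lt_d6
  constructor
  · rw [le_div_iff₀ Real.pi_pos]; nlinarith
  · rw [div_le_iff₀ Real.pi_pos]; nlinarith

set_option maxHeartbeats 1000000 in
/-- The multiplier `1 + (2/π) cos w - (π/2) sin w / w - (3/50) cos² w` is nonnegative; it has a
double zero at `w = π/2`. The Taylor expansion at `0` is used for `w ≤ 1`, and the expansion in
`θ = |w - π/2|` elsewhere. -/
theorem G_nonneg_of_nonneg {w : ℝ} (hw : 0 ≤ w) :
    0 ≤ 1 + 2 / Real.pi * Real.cos w - Real.pi / 2 * Real.sinc w - 3 / 50 * Real.cos w ^ 2 := by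
  obtain ⟨hR1, hR2⟩ := two_div_pi_bounds
  have hP1 : 1.57079 ≤ Real.pi / 2 := by linarith [Real.pi_gt_d6]
  have hP2 : Real.pi / 2 ≤ 1.5708 := by linarith [Real.pi_lt_d6]
  have hRP : 2 / Real.pi * (Real.pi / 2) = 1 := by field_simp
  set R := 2 / Real.pi with hR
  set P := Real.pi / 2 with hP
  rcases le_or_gt w 1 with h1 | h1
  -- near the origin: Taylor expansion at `0`
  · have hs : Real.sinc w ≤ 1 - w ^ 2 / 6 + w ^ 4 / 120 := by
      rcases hw.eq_or_lt with rfl | hw'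
      · simp
      · rw [Real.sinc_of_ne_zero hw'.ne', div_le_iff₀ hw']
        linarith [sin_upper5 hw]
    have hc := cos_lower6 hw
    have hc2 : Real.cos w ^ 2 ≤ 1 - w ^ 2 + w ^ 4 / 3 := by
      have := cos_upper4 (x := 2 * w) (by linarith)
      rw [Real.cos_two_mul] at this
      nlinarith
    have e1 : R * (1 - w ^ 2 / 2 + w ^ 4 / 24 - w ^ 6 / 720) ≤ R * Real.cos w :=
      mul_le_mul_of_nonneg_left hc (by linarith)
    have e2 : P * Real.sinc w ≤ P * (1 - w ^ 2 / 6 + w ^ 4 / 120) :=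
      mul_le_mul_of_nonneg_left hs (by linarith)
    have hw2 : 0 ≤ w ^ 2 := by positivity
    have hw21 : w ^ 2 ≤ 1 := by nlinarith
    have e3 : 0.63661 * (1 - w ^ 2 / 2 + w ^ 4 / 24 - w ^ 6 / 720) ≤
        R * (1 - w ^ 2 / 2 + w ^ 4 / 24 - w ^ 6 / 720) := by
      refine mul_le_mul_of_nonneg_right hR1 ?_
      have : w ^ 6 ≤ 1 := pow_le_one₀ hw h1
      nlinarith [sq_nonneg (w^2)]
    have e4 : P * (1 - w ^ 2 / 6 + w ^ 4 / 120) ≤ 1.5708 * (1 - w ^ 2 / 6 + w ^ 4 / 120) := by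
      refine mul_le_mul_of_nonneg_right hP2 ?_
      nlinarith [sq_nonneg (w^2)]
    have h4 : w ^ 4 ≤ w ^ 2 := pow_le_pow_of_le_one hw h1 (by norm_num)
    have h6 : w ^ 6 ≤ w ^ 2 := pow_le_pow_of_le_one hw h1 (by norm_num)
    nlinarith
  have hw0 : 0 < w := by linarith
  rw [Real.sinc_of_ne_zero hw0.ne']
  suffices h : 0 ≤ w * (1 + R * Real.cos w - 3 / 50 * Real.cos w ^ 2) - P * Real.sin w by
    have : 1 + R * Real.cos w - P * (Real.sin w / w) - 3 / 50 * Real.cos w ^ 2 =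
      (w * (1 + R * Real.cos w - 3 / 50 * Real.cos w ^ 2) - P * Real.sin w) / w := by
      field_simp
      ring
    rw [this]
    exact div_nonneg h hw0.le
  rcases le_or_gt w P with h2 | h2
  -- left of the double zero `π / 2`
  · obtain ⟨θ, rfl⟩ : ∃ θ, w = P - θ := ⟨P - w, by ring⟩
    have hθ : 0 ≤ θ := by linarith
    have hθ1 : θ ≤ 0.5708 := by linarith
    rw [hP, Real.cos_pi_div_two_sub, Real.sin_pi_div_two_sub, ← hP]
    have s1 := sin_lower3 hθ
    have s2 := sin_upper5 hθ
    have c1 := cos_upper4 hθ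
    have q1 : Real.sin θ ^ 2 ≤ θ ^ 2 - θ ^ 4 / 3 + 2 * θ ^ 6 / 45 := by
      have := cos_lower6 (x := 2 * θ) (by linarith)
      rw [Real.cos_two_mul, Real.cos_sq'] at this
      nlinarith
    have key : (P - θ) * (1 + R * Real.sin θ - 3 / 50 * Real.sin θ ^ 2) - P * Real.cos θ =
        P * (1 - Real.cos θ) - (θ - Real.sin θ) - R * (θ * Real.sin θ)
          - 3 / 50 * ((P - θ) * Real.sin θ ^ 2) := by
      linear_combination Real.sin θ * hRP
    rw [key]
    have hθ2 : 0 ≤ θ ^ 2 := by positivity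
    have t1 : P * (θ ^ 2 / 2 - θ ^ 4 / 24) ≤ P * (1 - Real.cos θ) :=
      mul_le_mul_of_nonneg_left (by linarith) (by linarith)
    have hs0 : θ * Real.sin θ ≤ θ * (θ - θ ^ 3 / 6 + θ ^ 5 / 120) :=
      mul_le_mul_of_nonneg_left s2 hθ
    have t2 : R * (θ * Real.sin θ) ≤ R * (θ * (θ - θ ^ 3 / 6 + θ ^ 5 / 120)) :=
      mul_le_mul_of_nonneg_left hs0 (by linarith)
    have t3 : (P - θ) * Real.sin θ ^ 2 ≤ (P - θ) * (θ ^ 2 - θ ^ 4 / 3 + 2 * θ ^ 6 / 45) :=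
      mul_le_mul_of_nonneg_left q1 (by linarith)
    have main : 0 ≤ P * (1 / 2 - θ ^ 2 / 24) - θ / 6 - R * (1 - θ ^ 2 / 6 + θ ^ 4 / 120)
        - 3 / 50 * ((P - θ) * (1 - θ ^ 2 / 3 + 2 * θ ^ 4 / 45)) := by
      have hθ4 : θ ^ 4 ≤ 0.5708 ^ 2 * θ ^ 2 := by nlinarith
      have hθ22 : θ ^ 2 ≤ 0.5708 * θ := by nlinarith
      have hθ3 : 0 ≤ θ ^ 3 := by positivity
      have a1 : 1.57079 * (1 / 2 - θ ^ 2 / 24 - 3 / 50 * (1 - θ ^ 2 / 3 + 2 * θ ^ 4 / 45))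
        ≤ P * (1 / 2 - θ ^ 2 / 24 - 3 / 50 * (1 - θ ^ 2 / 3 + 2 * θ ^ 4 / 45)) :=
        mul_le_mul_of_nonneg_right hP1 (by nlinarith)
      have a2 : R * (1 - θ ^ 2 / 6 + θ ^ 4 / 120) ≤ 0.63663 * (1 - θ ^ 2 / 6 + θ ^ 4 / 120) :=
        mul_le_mul_of_nonneg_right hR2 (by nlinarith)
      have a3 : θ ^ 3 ≤ 0.5708 * θ ^ 2 := by nlinarith
      have a5 : 0 ≤ θ ^ 5 := by positivity
      linarith [sq_nonneg (θ - 0.57)]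
    have := mul_nonneg hθ2 main
    linarith
  -- right of the double zero
  · obtain ⟨θ, rfl⟩ : ∃ θ, w = P + θ := ⟨w - P, by ring⟩
    have hθ : 0 ≤ θ := by linarith
    rw [show P + θ = θ + Real.pi / 2 by rw [hP]; ring, Real.cos_add_pi_div_two,
      Real.sin_add_pi_div_two, ← hP]
    have key : (θ + P) * (1 + R * (-Real.sin θ) - 3 / 50 * (-Real.sin θ) ^ 2) - P * Real.cos θ =
        P * (1 - Real.cos θ) + (θ - Real.sin θ) - R * (θ * Real.sin θ)
          - 3 / 50 * ((P + θ) * Real.sin θ ^ 2) := by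
      linear_combination -Real.sin θ * hRP
    rw [key]
    have hs1 := Real.sin_le_one θ
    have hsq1 : Real.sin θ ^ 2 ≤ 1 := Real.sin_sq_le_one θ
    have b1 : θ * Real.sin θ ≤ θ := by nlinarith
    have b2 : R * (θ * Real.sin θ) ≤ R * θ := mul_le_mul_of_nonneg_left b1 (by linarith)
    have b2' : R * θ ≤ 0.63663 * θ := mul_le_mul_of_nonneg_right hR2 hθ
    have b3 : (P + θ) * Real.sin θ ^ 2 ≤ P + θ := by nlinarith
    rcases le_or_gt θ 2 with h3 | h3
    · have c1 := cos_upper4 hθ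
      have s2 := sin_upper5 hθ
      have q1 : Real.sin θ ^ 2 ≤ θ ^ 2 := by
        rw [sq_le_sq, abs_of_nonneg hθ]; exact Real.abs_sin_le_abs.trans (by rw [abs_of_nonneg hθ])
      have t1 : P * (θ ^ 2 / 2 - θ ^ 4 / 24) ≤ P * (1 - Real.cos θ) :=
        mul_le_mul_of_nonneg_left (by linarith) (by linarith)
      have hs0 : θ * Real.sin θ ≤ θ * (θ - θ ^ 3 / 6 + θ ^ 5 / 120) :=
        mul_le_mul_of_nonneg_left s2 hθ
      have t2 : R * (θ * Real.sin θ) ≤ R * (θ * (θ - θ ^ 3 / 6 + θ ^ 5 / 120)) :=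
        mul_le_mul_of_nonneg_left hs0 (by linarith)
      have t3 : (P + θ) * Real.sin θ ^ 2 ≤ (P + θ) * θ ^ 2 :=
        mul_le_mul_of_nonneg_left q1 (by linarith)
      have hθ2 : 0 ≤ θ ^ 2 := by positivity
      have main : 0 ≤ P * (1 / 2 - θ ^ 2 / 24) + (θ / 6 - θ ^ 3 / 120)
          - R * (1 - θ ^ 2 / 6 + θ ^ 4 / 120) - 3 / 50 * (P + θ) := by
        have a0 : θ ^ 2 ≤ 4 := by nlinarith
        have a1 : 1.57079 * (1 / 2 - θ ^ 2 / 24 - 3 / 50)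
          ≤ P * (1 / 2 - θ ^ 2 / 24 - 3 / 50) :=
          mul_le_mul_of_nonneg_right hP1 (by nlinarith)
        have a2 : R * (1 - θ ^ 2 / 6 + θ ^ 4 / 120) ≤ 0.63663 * (1 - θ ^ 2 / 6 + θ ^ 4 / 120) :=
          mul_le_mul_of_nonneg_right hR2 (by nlinarith [sq_nonneg (θ^2)])
        have a3 : θ ^ 3 ≤ 4 * θ := by nlinarith
        have a4 : θ ^ 4 ≤ 4 * θ ^ 2 := by nlinarith
        nlinarith
      have := mul_nonneg hθ2 main
      linarith
    · rcases le_or_gt θ 4 with h4 | h4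
      · have hcos : Real.cos θ ≤ 0 := by
          apply Real.cos_nonpos_of_pi_div_two_le_of_le <;> linarith
        have : P * 1 ≤ P * (1 - Real.cos θ) :=
          mul_le_mul_of_nonneg_left (by linarith) (by linarith)
        nlinarith
      · have : 0 ≤ P * (1 - Real.cos θ) :=
          mul_nonneg (by linarith) (by linarith [Real.cos_le_one θ])
        nlinarith

/-! ### The frequency inequality -/

/-- The multiplier is even, so it is nonnegative on the whole line. -/
theorem G_nonneg (w : ℝ) :
    0 ≤ 1 + 2 / Real.pi * Real.cos w - Real.pi / 2 * Real.sinc w - 3 / 50 * Real.cos w ^ 2 := by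
  have := G_nonneg_of_nonneg (abs_nonneg w)
  rcases abs_choice w with h | h <;> rw [h] at this
  · exact this
  · simpa [Real.sinc_neg] using this

theorem integral_cos_mul_eq_sinc (a : ℝ) : ∫ s in (0 : ℝ)..1, Real.cos (a * s) = Real.sinc a := by
  rcases eq_or_ne a 0 with rfl | ha
  · simp
  · rw [intervalIntegral.integral_comp_mul_left (fun s => Real.cos s) ha, integral_cos,
      Real.sinc_of_ne_zero ha]
    simp [div_eq_inv_mul]

/-- With `Φ(s) = ∫ t in s..T, z t * z (t - s)`, each term of the cosine series of
`0.97 Φ(0) + (2/π) Φ(1) - 0.03 Φ(2) - (π/2) ∫₀¹ Φ` is a nonnegative weight times the nonnegative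
multiplier `G_nonneg`, because `cos 2ω = 2 cos² ω - 1`. -/
theorem frequency_inequality (z : ℝ → ℝ) (hz : Continuous z) (T : ℝ) (hT : 2 ≤ T) :
    0 ≤ (1 - 3 / 100) * (∫ t in (0 : ℝ)..T, z t * z t)
      + 2 / Real.pi * (∫ t in (1 : ℝ)..T, z t * z (t - 1))
      - 3 / 100 * (∫ t in (2 : ℝ)..T, z t * z (t - 2))
      - Real.pi / 2 * (∫ s in (0 : ℝ)..1, ∫ t in s..T, z t * z (t - s)) := by
  obtain ⟨w, ω, hw, h⟩ := autocorr_hasSum z hz T hT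
  have h0 := h 0 (by norm_num)
  have h1 := h 1 (by norm_num)
  have h2 := h 2 (by norm_num)
  simp only [mul_zero, Real.cos_zero, mul_one, sub_zero] at h0 h1
  have hI : HasSum (fun n => w n * Real.sinc (ω n))
      (∫ s in (0 : ℝ)..1, ∫ t in s..T, z t * z (t - s)) := by
    have key := intervalIntegral.hasSum_intervalIntegral_of_summable_norm (a := 0) (b := 1)
      (f := fun n : ℤ => (⟨fun s => w n * Real.cos (ω n * s), by fun_prop⟩ : C(ℝ, ℝ))) (by
        refine Summable.of_nonneg_of_le (fun n => norm_nonneg _) (fun n => ?_) h0.summable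
        rw [ContinuousMap.norm_le _ (hw n)]
        intro s
        simp only [ContinuousMap.restrict_apply, ContinuousMap.coe_mk, norm_mul, Real.norm_eq_abs,
          abs_of_nonneg (hw n)]
        exact mul_le_of_le_one_right (hw n) (Real.abs_cos_le_one _))
    have e : ∫ s in (0 : ℝ)..1, ∫ t in s..T, z t * z (t - s) =
        ∫ s in (0 : ℝ)..1, ∑' n : ℤ, w n * Real.cos (ω n * s) := by
      refine intervalIntegral.integral_congr fun s hs => ?_
      rw [uIcc_of_le zero_le_one] at hs
      exact (h s ⟨hs.1, by linarith [hs.2]⟩).tsum_eq.symm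
    rw [e]
    simpa [integral_cos_mul_eq_sinc] using key
  have := (((h0.mul_left (1 - 3 / 100)).add (h1.mul_left (2 / Real.pi))).sub
    (h2.mul_left (3 / 100))).sub (hI.mul_left (Real.pi / 2))
  refine this.nonneg fun n => ?_
  have hc : Real.cos (ω n * 2) = 2 * Real.cos (ω n) ^ 2 - 1 := by
    rw [mul_comm, Real.cos_two_mul]
  have := mul_nonneg (hw n) (G_nonneg (ω n))
  rw [hc]
  linarith

/-! ### The energy inequality along solutions -/

/-- Along a solution `z(t) z(t - 1)` is the derivative of `-(z - y) / α`, hence its integral is bounded. -/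
theorem integral_mul_delay_one {α : ℝ} {y z : ℝ → ℝ} (hα : 0 < α) (hy : Continuous y)
    (hzy : ∀ t, z t = Real.exp (y t) - 1) (hy1 : ∀ t, |y t| ≤ 1) (hz1 : ∀ t, |z t| ≤ 1)
    (hd : ∀ t, -1 ≤ t → HasDerivAt y (-α * z (t - 1)) t) {T : ℝ} (hT : 2 ≤ T) :
    ∫ t in (1 : ℝ)..T, z t * z (t - 1) ≤ 4 / α := by
  have hz : Continuous z := by
    rw [show z = fun t => Real.exp (y t) - 1 from funext hzy]; fun_prop
  have hder : ∀ t ∈ uIcc 1 T, HasDerivAt (fun t => -(1 / α) * (z t - y t)) (z t * z (t - 1)) t := by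
    intro t ht
    rw [uIcc_of_le (by linarith)] at ht
    have h := hd t (by linarith [ht.1])
    have h2 : HasDerivAt z (Real.exp (y t) * (-α * z (t - 1))) t := by
      rw [show z = fun t => Real.exp (y t) - 1 from funext hzy]
      simpa [hzy] using (h.exp.sub_const 1)
    refine ((h2.sub h).const_mul _).congr_deriv ?_
    have : Real.exp (y t) = z t + 1 := by rw [hzy]; ring
    rw [this]; field_simp; ring
  rw [intervalIntegral.integral_eq_sub_of_hasDerivAt hder
    (Continuous.intervalIntegrable (by fun_prop) _ _)]
  have e1 := abs_le.1 (hy1 T)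
  have e2 := abs_le.1 (hy1 1)
  have e3 := abs_le.1 (hz1 T)
  have e4 := abs_le.1 (hz1 1)
  rw [show -(1 / α) * (z T - y T) - -(1 / α) * (z 1 - y 1) = (y T - z T + (z 1 - y 1)) / α by ring]
  gcongr
  linarith

theorem integral_mul_delay_two {z : ℝ → ℝ} (hz : Continuous z) (hz1 : ∀ t, |z t| ≤ 1) (T : ℝ) :
    (∫ t in (0 : ℝ)..T, z t * z (t - 2)) - 2 ≤ ∫ t in (2 : ℝ)..T, z t * z (t - 2) := by
  have hc : Continuous fun t => z t * z (t - 2) := by fun_prop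
  rw [← intervalIntegral.integral_add_adjacent_intervals (hc.intervalIntegrable 0 2)
    (hc.intervalIntegrable 2 T)]
  have : ‖∫ t in (0 : ℝ)..2, z t * z (t - 2)‖ ≤ 1 * |2 - 0| :=
    intervalIntegral.norm_integral_le_of_norm_le_const fun t _ => by
      rw [norm_mul]; exact mul_le_one₀ (hz1 _) (norm_nonneg _) (hz1 _)
  rw [Real.norm_eq_abs] at this
  have := (abs_le.1 this).2
  norm_num at this
  linarith

/-- The sliding mean of `z` over `[t - 1, t]` is a difference of values of `y`. -/
theorem integral_window {α : ℝ} {y z : ℝ → ℝ} (hα : 0 < α) (hz : Continuous z)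
    (hd : ∀ t, -1 ≤ t → HasDerivAt y (-α * z (t - 1)) t) {t : ℝ} (ht : 1 ≤ t) :
    ∫ s in (0 : ℝ)..1, z (t - s) = (y t - y (t + 1)) / α := by
  have e : ∫ s in (0 : ℝ)..1, z (t - s) = ∫ s in t..(t + 1), z (s - 1) := by
    rw [intervalIntegral.integral_comp_sub_left, intervalIntegral.integral_comp_sub_right]
    simp
  rw [e]
  have hder : ∀ s ∈ uIcc t (t + 1), HasDerivAt (fun s => -(1 / α) * y s) (z (s - 1)) s := by
    intro s hs
    rw [uIcc_of_le (by linarith)] at hs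
    refine ((hd s (by linarith [hs.1])).const_mul _).congr_deriv ?_
    field_simp
  rw [intervalIntegral.integral_eq_sub_of_hasDerivAt hder
    (Continuous.intervalIntegrable (by fun_prop) _ _)]
  field_simp; ring

/-- Lower bound for the averaged autocorrelation: after exchanging the integrals and inserting
`integral_window`, the main term is `(∫ z y) / α`, while `z(t) y(t + 1)` is the derivative of
`-y(t + 1)² / (2α)` and contributes a bounded amount. -/
theorem integral_autocorr_lower {α : ℝ} {y z : ℝ → ℝ} (hα : 0 < α) (hy : Continuous y)
    (hz : Continuous z) (hy1 : ∀ t, |y t| ≤ 1) (hz1 : ∀ t, |z t| ≤ 1)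
    (hd : ∀ t, -1 ≤ t → HasDerivAt y (-α * z (t - 1)) t) {T : ℝ} (hT : 2 ≤ T) :
    (∫ t in (0 : ℝ)..T, z t * y t) / α - 1 / α - 1 / α ^ 2 - 1 ≤
      ∫ s in (0 : ℝ)..1, ∫ t in s..T, z t * z (t - s) := by
  have hcc : Continuous (Function.uncurry fun s t => z t * z (t - s)) := by
    unfold Function.uncurry; fun_prop
  have hc1 : Continuous fun s => ∫ t in s..1, z t * z (t - s) := by
    have := (intervalIntegral.continuous_parametric_intervalIntegral_of_continuous (μ := volume)
      (a₀ := (1 : ℝ)) hcc continuous_id).neg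
    refine this.congr fun s => ?_
    exact (intervalIntegral.integral_symm _ _).symm
  have hc2 : Continuous fun s => ∫ t in (1 : ℝ)..T, z t * z (t - s) :=
    intervalIntegral.continuous_parametric_intervalIntegral_of_continuous' hcc 1 T
  have hsplit : ∫ s in (0 : ℝ)..1, ∫ t in s..T, z t * z (t - s) =
      (∫ s in (0 : ℝ)..1, ∫ t in s..1, z t * z (t - s)) +
        ∫ s in (0 : ℝ)..1, ∫ t in (1 : ℝ)..T, z t * z (t - s) := by
    rw [← intervalIntegral.integral_add (hc1.intervalIntegrable _ _) (hc2.intervalIntegrable _ _)]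
    refine intervalIntegral.integral_congr fun s _ => ?_
    have hc : Continuous fun t => z t * z (t - s) := by fun_prop
    exact (intervalIntegral.integral_add_adjacent_intervals (hc.intervalIntegrable _ _)
      (hc.intervalIntegrable _ _)).symm
  have hb1 : ‖∫ s in (0 : ℝ)..1, ∫ t in s..1, z t * z (t - s)‖ ≤ 1 * |1 - 0| := by
    refine intervalIntegral.norm_integral_le_of_norm_le_const fun s hs => ?_
    rw [uIoc_of_le zero_le_one] at hs
    have : ‖∫ t in s..1, z t * z (t - s)‖ ≤ 1 * |1 - s| :=
      intervalIntegral.norm_integral_le_of_norm_le_const fun t _ => by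
        rw [norm_mul]; exact mul_le_one₀ (hz1 _) (norm_nonneg _) (hz1 _)
    rw [abs_of_nonneg (by linarith [hs.2])] at this
    linarith [hs.1]
  have hswap : ∫ s in (0 : ℝ)..1, ∫ t in (1 : ℝ)..T, z t * z (t - s) =
      ∫ t in (1 : ℝ)..T, ∫ s in (0 : ℝ)..1, z t * z (t - s) := by
    refine intervalIntegral_intervalIntegral_swap ?_
    exact (hcc.continuousOn.integrableOn_compact
      ((isCompact_uIcc (a := (0 : ℝ)) (b := 1)).prod (isCompact_uIcc (a := 1) (b := T)))).mono_set
      (prod_mono uIoc_subset_uIcc uIoc_subset_uIcc)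
  have hwin : ∫ t in (1 : ℝ)..T, ∫ s in (0 : ℝ)..1, z t * z (t - s) =
      (∫ t in (1 : ℝ)..T, z t * y t) / α - (∫ t in (1 : ℝ)..T, z t * y (t + 1)) / α := by
    rw [← sub_div, ← intervalIntegral.integral_sub
      (Continuous.intervalIntegrable (by fun_prop) _ _)
      (Continuous.intervalIntegrable (by fun_prop) _ _), ← intervalIntegral.integral_div]
    refine intervalIntegral.integral_congr fun t ht => ?_
    rw [uIcc_of_le (by linarith)] at ht
    simp only [intervalIntegral.integral_const_mul]
    rw [integral_window hα hz hd ht.1]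
    ring
  have hsq : ∫ t in (1 : ℝ)..T, z t * y (t + 1) =
      -(1 / (2 * α)) * y (T + 1) ^ 2 - -(1 / (2 * α)) * y (1 + 1) ^ 2 := by
    refine intervalIntegral.integral_eq_sub_of_hasDerivAt
      (f := fun t => -(1 / (2 * α)) * y (t + 1) ^ 2) (fun t ht => ?_)
      (Continuous.intervalIntegrable (by fun_prop) _ _)
    rw [uIcc_of_le (by linarith)] at ht
    have h := (hd (t + 1) (by linarith [ht.1])).comp_add_const t 1
    refine ((h.pow 2).const_mul _).congr_deriv ?_
    rw [add_sub_cancel_right]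
    field_simp
    ring
  have hsq' : ∫ t in (1 : ℝ)..T, z t * y (t + 1) ≤ 1 / α := by
    rw [hsq]
    have h1 : y (1 + 1) ^ 2 ≤ 1 := (sq_le_one_iff_abs_le_one _).2 (hy1 _)
    have h2 := sq_nonneg (y (T + 1))
    rw [show -(1 / (2 * α)) * y (T + 1) ^ 2 - -(1 / (2 * α)) * y (1 + 1) ^ 2 =
      (y (1 + 1) ^ 2 - y (T + 1) ^ 2) / 2 / α by field_simp; ring]
    have h3 : (y (1 + 1) ^ 2 - y (T + 1) ^ 2) / 2 ≤ 1 := by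
      generalize y (1 + 1) = a at h1 ⊢
      linarith
    gcongr
  have hsplit2 : ∫ t in (0 : ℝ)..T, z t * y t =
      (∫ t in (0 : ℝ)..1, z t * y t) + ∫ t in (1 : ℝ)..T, z t * y t := by
    have hc : Continuous fun t => z t * y t := by fun_prop
    exact (intervalIntegral.integral_add_adjacent_intervals (hc.intervalIntegrable _ _)
      (hc.intervalIntegrable _ _)).symm
  have hb2 : ‖∫ t in (0 : ℝ)..1, z t * y t‖ ≤ 1 * |1 - 0| :=
    intervalIntegral.norm_integral_le_of_norm_le_const fun t _ => by
      rw [norm_mul]; exact mul_le_one₀ (hz1 _) (norm_nonneg _) (hy1 _)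
  rw [Real.norm_eq_abs] at hb1 hb2
  norm_num at hb1 hb2
  have b1 := (abs_le.1 hb1).1
  have b2 := (abs_le.1 hb2).2
  rw [hsplit, hswap, hwin, hsplit2, add_div]
  have c1 : (∫ t in (0 : ℝ)..1, z t * y t) / α ≤ 1 / α := by gcongr
  have c2 : (∫ t in (1 : ℝ)..T, z t * y (t + 1)) / α ≤ 1 / α / α := by gcongr
  have c3 : 1 / α / α = 1 / α ^ 2 := by field_simp
  linarith

/-- The frequency inequality evaluated along a solution. The factor `π / (2α) ≥ 1` in front of
`∫ z y ≥ 0` may be dropped, and this is where `α < π/2` enters. -/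
theorem energy_inequality {α : ℝ} {y z : ℝ → ℝ} (hα : 0 < α) (hα2 : α < Real.pi / 2)
    (hy : Continuous y)
    (hzy : ∀ t, z t = Real.exp (y t) - 1) (hy1 : ∀ t, |y t| ≤ 1) (hz1 : ∀ t, |z t| ≤ 1)
    (hd : ∀ t, -1 ≤ t → HasDerivAt y (-α * z (t - 1)) t) :
    ∃ C : ℝ, ∀ T, 2 ≤ T →
      -C ≤ ∫ t in (0 : ℝ)..T, ((1 - 3 / 100) * z t ^ 2 - 3 / 100 * z t * z (t - 2) - z t * y t) := by
  have hz : Continuous z := by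
    rw [show z = fun t => Real.exp (y t) - 1 from funext hzy]; fun_prop
  have hπ := Real.pi_pos
  refine ⟨2 / Real.pi * (4 / α) + 1 + Real.pi / 2 * (1 / α + 1 / α ^ 2 + 1), fun T hT => ?_⟩
  have hF := frequency_inequality z hz T hT
  have h1 := mul_le_mul_of_nonneg_left (integral_mul_delay_one hα hy hzy hy1 hz1 hd hT)
    (show 0 ≤ 2 / Real.pi by positivity)
  have h2 := integral_mul_delay_two hz hz1 T
  have h3 := mul_le_mul_of_nonneg_left (integral_autocorr_lower hα hy hz hy1 hz1 hd hT)
    (show 0 ≤ Real.pi / 2 by positivity)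
  have hzy0 : ∀ t, 0 ≤ z t * y t := by
    intro t
    rw [hzy]
    rcases le_total 0 (y t) with h | h
    · exact mul_nonneg (by linarith [Real.one_le_exp h]) h
    · exact mul_nonneg_of_nonpos_of_nonpos (by linarith [Real.exp_le_one_iff.2 h]) h
  have h4 : 0 ≤ ∫ t in (0 : ℝ)..T, z t * y t :=
    intervalIntegral.integral_nonneg (by linarith) fun t _ => hzy0 t
  have h5 : ∫ t in (0 : ℝ)..T, z t * y t ≤ Real.pi / 2 * ((∫ t in (0 : ℝ)..T, z t * y t) / α) := by
    rw [mul_div_left_comm]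
    refine le_mul_of_one_le_right h4 ?_
    rw [one_le_div hα]; exact hα2.le
  have e : ∫ t in (0 : ℝ)..T, ((1 - 3 / 100) * z t ^ 2 - 3 / 100 * z t * z (t - 2) - z t * y t) =
      (1 - 3 / 100) * (∫ t in (0 : ℝ)..T, z t * z t)
        - 3 / 100 * (∫ t in (0 : ℝ)..T, z t * z (t - 2)) - ∫ t in (0 : ℝ)..T, z t * y t := by
    rw [← intervalIntegral.integral_const_mul, ← intervalIntegral.integral_const_mul,
      ← intervalIntegral.integral_sub (Continuous.intervalIntegrable (by fun_prop) _ _)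
      (Continuous.intervalIntegrable (by fun_prop) _ _),
      ← intervalIntegral.integral_sub (Continuous.intervalIntegrable (by fun_prop) _ _)
      (Continuous.intervalIntegrable (by fun_prop) _ _)]
    refine intervalIntegral.integral_congr fun t _ => ?_
    ring
  rw [e]
  nlinarith

/-! ### The sum-of-squares certificate -/

noncomputable section

/-- Polynomial whose derivative along solutions is used as a boundary term, in `u = z(t)`,
`v = z(t - 1)`. -/
def hPoly (u v : ℝ) : ℝ :=
  -99/25 * u * v + 191/500 * u * v^2 + 12/125 * u^2 * v - 81/100 * u^3 + 467/1000 * u * v^3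
  + 33/500 * u^2 * v^2 + 3/4 * u^3 * v + 539/1000 * u^4 - 33/1000 * u * v^4
  + 31/1000 * u^2 * v^3 + 17/1000 * u^3 * v^2 - 61/500 * u^4 * v - 9/100 * u^5

/-- Partial derivative of `hPoly` in the first variable. -/
def hPoly₁ (u v : ℝ) : ℝ :=
  -99/25 * v + 191/500 * v^2 + 24/125 * u * v - 243/100 * u^2 + 467/1000 * v^3
  + 33/250 * u * v^2 + 9/4 * u^2 * v + 539/250 * u^3 - 33/1000 * v^4 + 31/500 * u * v^3
  + 51/1000 * u^2 * v^2 - 61/125 * u^3 * v - 9/20 * u^4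

/-- Partial derivative of `hPoly` in the second variable. -/
def hPoly₂ (u v : ℝ) : ℝ :=
  -99/25 * u + 191/250 * u * v + 12/125 * u^2 + 1401/1000 * u * v^2 + 33/250 * u^2 * v
  + 3/4 * u^3 - 33/250 * u * v^3 + 93/1000 * u^2 * v^2 + 17/500 * u^3 * v - 61/500 * u^4

/-- Polynomial used as a telescoping term `rPoly (z t) (z (t - 1)) - rPoly (z (t - 1)) (z (t - 2))`,
whose integral over `[0, T]` stays bounded. -/
def rPoly (u v : ℝ) : ℝ :=
  399/200 * v^2 - 393/200 * u^2 - 393/1000 * v^3 + 2267/1000 * u * v^2 + 1501/1000 * u^2 * v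
  - 11/1000 * u^3 + 11/1000 * v^4 - 227/500 * u * v^3 - 281/250 * u^2 * v^2 + 469/1000 * u^3 * v
  + 161/200 * u^4 - 83/1000 * v^5 + 57/1000 * u * v^4 - 13/1000 * u^2 * v^3
  - 121/100 * u^3 * v^2 - 479/500 * u^4 * v - 293/1000 * u^5

/-- Sum of squares multiplying `1` in `sos_identity`. -/
def sosOne (a b c : ℝ) : ℝ :=
    (  (39192 * b - 4976 * a^2 - 5772 * a * c + 6692 * c^2 + 16401 * a * b + 337 * b * c
        - 1024 * b^2 - 4481 * a^3 - 3046 * a^2 * c + 5822 * a * c^2 - 5072 * c^3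
        - 30826 * a^2 * b + 6794 * a * b^2 - 64784 * b^3 + 3419 * a * b * c + 3968 * b^2 * c
        - 27591 * b * c^2)^2
      + (3359 * a^2 + 2493 * a * c - 1665 * c^2 + 11639 * a * b + 9234 * b * c + 8589 * b^2
        - 2409 * a^3 - 7580 * a^2 * c - 3513 * a * c^2 + 3381 * c^3 - 37673 * a^2 * b
        + 16167 * a * b^2 - 3000 * b^3 - 6675 * a * b * c - 15614 * b^2 * c + 3253 * b * c^2)^2
      + (1158 * a * c + 119 * c^2 - 1174 * a * b + 4419 * b * c - 4347 * b^2 - 552 * a^3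
        - 2427 * a^2 * c - 2149 * a * c^2 + 1187 * c^3 - 1279 * a^2 * b + 42219 * a * b^2
        - 1625 * b^3 - 7395 * a * b * c - 3725 * b^2 * c + 3358 * b * c^2)^2
      + (1028 * c^2 - 7680 * a * b - 4952 * b * c - 3035 * b^2 + 994 * a^3 + 2450 * a^2 * c
        - 291 * a * c^2 - 1526 * c^3 + 1918 * a^2 * b + 29129 * a * b^2 - 3608 * b^3
        - 3640 * a * b * c + 9701 * b^2 * c + 2175 * b * c^2)^2
      + (39724 * a * b + 8495 * b * c - 10011 * b^2 - 8168 * a^3 - 11313 * a^2 * c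
        + 2966 * a * c^2 + 2140 * c^3 - 5303 * a^2 * b + 12196 * a * b^2 - 3526 * b^3
        + 16547 * a * b * c - 20340 * b^2 * c + 3652 * b * c^2)^2
      + (14459 * b * c - 3766 * b^2 - 382 * a^3 - 4061 * a^2 * c - 3110 * a * c^2 + 2848 * c^3
        + 260 * a^2 * b + 15405 * a * b^2 + 4167 * b^3 - 3803 * a * b * c - 2752 * b^2 * c
        + 8272 * b * c^2)^2
      + (30330 * b^2 + 370 * a^3 + 474 * a^2 * c - 128 * a * c^2 - 98 * c^3 - 5561 * a^2 * b
        - 23344 * a * b^2 - 14308 * b^3 - 7387 * a * b * c + 21786 * b^2 * c + 5471 * b * c^2)^2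
      + (1605 * a^3 + 2378 * a^2 * c + 823 * a * c^2 - 544 * c^3 + 1631 * a^2 * b
        - 71178 * a * b^2 + 6293 * b^3 + 504 * a * b * c + 2640 * b^2 * c - 4089 * b * c^2)^2
      + (1873 * a^2 * c + 384 * a * c^2 - 227 * c^3 + 1540 * a^2 * b - 7876 * a * b^2 + 903 * b^3
        + 506 * a * b * c - 7400 * b^2 * c + 528 * b * c^2)^2
      + (2154 * a * c^2 - 60 * c^3 + 659 * a^2 * b - 6113 * a * b^2 + 5039 * b^3
        + 4749 * a * b * c + 3238 * b^2 * c - 2006 * b * c^2)^2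
      + (1280 * c^3 - 196 * a^2 * b + 86 * a * b^2 - 3886 * b^3 - 3325 * a * b * c
        - 20853 * b^2 * c + 2868 * b * c^2)^2
      + (4725 * a^2 * b - 2593 * a * b^2 - 5407 * b^3 - 521 * a * b * c + 4262 * b^2 * c
        - 1148 * b * c^2)^2
      + (26022 * a * b^2 - 2827 * b^3 + 3965 * a * b * c - 797 * b^2 * c + 1582 * b * c^2)^2
      + (37020 * b^3 - 506 * a * b * c - 547 * b^2 * c - 2371 * b * c^2)^2
      + (9689 * a * b * c + 9921 * b^2 * c - 1248 * b * c^2)^2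
      + (24951 * b^2 * c + 568 * b * c^2)^2
      + (6546 * b * c^2)^2) / 400000000

/-- Sum of squares multiplying the box constraint on `z(t) = b + a`. -/
def sosX (a b c : ℝ) : ℝ :=
    (  (32354 * b - 7247 * a^2 - 6571 * a * c + 7034 * c^2 - 12078 * a * b + 24997 * b * c
        - 7498 * b^2)^2
      + (3746 * a^2 - 390 * a * c - 1341 * c^2 + 7552 * a * b - 3153 * b * c + 12004 * b^2)^2
      + (1752 * a * c + 238 * c^2 - 3036 * a * b + 2074 * b * c - 14634 * b^2)^2
      + (1354 * c^2 - 4454 * a * b + 2862 * b * c - 24401 * b^2)^2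
      + (14308 * a * b - 3813 * b * c + 22921 * b^2)^2
      + (7365 * b * c - 8730 * b^2)^2
      + (32656 * b^2)^2) / 400000000

/-- Sum of squares multiplying the box constraint on `z(t - 1) = c`. -/
def sosY (a b c : ℝ) : ℝ :=
    (  (36759 * b - 6794 * a^2 - 7239 * a * c + 7299 * c^2 - 5481 * a * b + 23884 * b * c
        - 24100 * b^2)^2
      + (1467 * a^2 + 954 * a * c - 558 * c^2 + 721 * a * b - 4162 * b * c - 49923 * b^2)^2
      + (1610 * a * c + 59 * c^2 + 775 * a * b - 603 * b * c - 11338 * b^2)^2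
      + (1547 * c^2 + 28 * a * b + 3312 * b * c + 5715 * b^2)^2
      + (2876 * a * b - 1440 * b * c - 7464 * b^2)^2
      + (14150 * b * c + 11726 * b^2)^2
      + (31636 * b^2)^2) / 400000000

/-- Sum of squares multiplying the box constraint on `z(t - 2) = b - a`. -/
def sosZ (a b c : ℝ) : ℝ :=
    (  (29300 * b - 4619 * a^2 - 4405 * a * c + 5776 * c^2 - 29356 * a * b + 18298 * b * c
        + 15287 * b^2)^2
      + (3044 * a^2 + 502 * a * c - 944 * c^2 - 3970 * a * b - 5676 * b * c + 16029 * b^2)^2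
      + (1960 * a * c + 121 * c^2 - 6689 * a * b - 2098 * b * c + 6611 * b^2)^2
      + (1301 * c^2 + 295 * a * b + 3224 * b * c - 23023 * b^2)^2
      + (17248 * a * b + 1192 * b * c - 21011 * b^2)^2
      + (8644 * b * c - 15875 * b^2)^2
      + (38851 * b^2)^2) / 400000000

/-- Further squares, which absorb the rounding of the coefficients of the other sums of squares. -/
def sosRest (a b c : ℝ) : ℝ :=
    294743213/500000000000 * (b)^2
    + 746737321/1000000000000 * (a^2)^2
    + 816830491/1000000000000 * (a * c)^2
    + 110934621/125000000000 * (c^2)^2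
    + 41749753/50000000000 * (a * b)^2
    + 972887923/1000000000000 * (b * c)^2
    + 1010743501/1000000000000 * (b^2)^2
    + 868072873/1000000000000 * (a^3)^2
    + 471522927/500000000000 * (a^2 * c)^2
    + 846803589/1000000000000 * (a * c^2)^2
    + 471356451/500000000000 * (c^3)^2
    + 335039/400000000 * (a^2 * b)^2
    + 977616317/1000000000000 * (a * b^2)^2
    + 840713/2000000000 * (b^3)^2
    + 66941617/62500000000 * (a * b * c)^2
    + 817351489/1000000000000 * (b^2 * c)^2
    + 3245967/4000000000 * (b * c^2)^2
    + 5522733/250000000000 * (b + b^2)^2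
    + 69746939/1000000000000 * (b - a * b)^2
    + 236173/31250000000 * (b - a^2)^2
    + 39952183/1000000000000 * (b + a * b^2)^2
    + 42850127/1000000000000 * (b + a^3)^2
    + 255131/4000000000 * (b^2 - b^3)^2
    + 6713/800000000 * (a * b - b^3)^2
    + 233/25000000 * (a^2 + b^3)^2
    + 58773/2000000000 * (a^2 - a * b^2)^2
    + 11727/100000000 * (a^2 - a^2 * b)^2
    + 3339/2000000000 * (a^2 - a^3)^2
    + 48125567/1000000000000 * (b - c^2)^2
    + 12552481/250000000000 * (b - b * c)^2
    + 8279587/250000000000 * (b - c^3)^2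
    + 1181689/1000000000000 * (a * c + c^2)^2
    + 14354911/1000000000000 * (b - a * c^2)^2
    + 5414511/1000000000000 * (b - b^2 * c)^2
    + 1869641/125000000000 * (b - a * b * c)^2
    + 4237099/250000000000 * (b - a^2 * c)^2
    + 92441/62500000000 * (a^2 + a * c)^2
    + 1475497/200000000000 * (b + a * c)^2
    + 84259/4000000000 * (c^2 - b * c^2)^2
    + 4233/4000000000 * (a * c + c^3)^2
    + 8219/800000000 * (c^2 + b^2 * c)^2
    + 4817/4000000000 * (a^2 + c^3)^2
    + 73403/2000000000 * (a * c + b * c^2)^2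
    + 31941/1000000000 * (c^2 + b^3)^2
    + 11651/125000000 * (a * c + b^2 * c)^2
    + 76939/2000000000 * (a^2 + b * c^2)^2
    + 1527/500000000 * (a^2 - a * c^2)^2
    + 46773/1000000000 * (b * c + b^3)^2
    + 37133/1000000000 * (a * c + b^3)^2
    + 18759/2000000000 * (a^2 + a * b * c)^2
    + 30703/4000000000 * (a^2 - a^2 * c)^2
    + 137979/4000000000 * (a^2 - b^2 * c)^2
    + 637/800000000 * (c^2 + c^3)^2
    + 39/20000000 * (c^3 - b * c^2)^2
    + 247/400000000 * (a * c^2 + c^3)^2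
    + 327/40000000 * (a * c^2 - b * c^2)^2
    + 5631/400000000 * (c^3 - b^3)^2
    + 429/25000000 * (a * c^2 - b^2 * c)^2
    + 197/200000000 * (a^2 * c + b * c^2)^2
    + 739/200000000 * (a^3 - c^3)^2
    + 23701/200000000 * (a * c^2 + b^3)^2
    + 3547/400000000 * (a^3 - b * c^2)^2
    + 10283/400000000 * (b^3 + b^2 * c)^2
    + 289/20000000 * (a * b^2 + b^2 * c)^2
    + 11279/400000000 * (a^2 * c - b^3)^2
    + 1637/80000000 * (a^3 + b^2 * c)^2
    + 2557/400000000 * (a^3 - a * b * c)^2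
    + 787/200000000 * (a^3 + a^2 * c)^2
    + 3169/200000000 * (a^3 + a^2 * b)^2
    + 13451/400000000 * (a^3 + b^3)^2
    + 48009/400000000 * (a * b^2 - b^3)^2

end

set_option maxHeartbeats 4000000 in
/-- Positivstellensatz certificate for `dissipation_poly` on the box `[-31/50, 41/50]³`, in the
variables `z(t) = b + a`, `z(t - 1) = c`, `z(t - 2) = b - a`. -/
theorem sos_identity (a b c : ℝ) :
    -((1 - 3/100) * (b+a)^2 - 3/100 * (b+a) * (b-a)
      - ((b+a)^2 - (b+a)^3/2 + 8/25 * (b+a)^4 - 33/200 * (b+a)^5))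
      - (hPoly₁ (b+a) c * (c * (1 + (b+a))) + hPoly₂ (b+a) c * ((b-a) * (1 + c)))
      - (rPoly (b+a) c - rPoly c (b-a)) - c^4/50
    = sosOne a b c + (b+a+31/50)*(41/50-(b+a)) * sosX a b c + (c+31/50)*(41/50-c) * sosY a b c
      + (b-a+31/50)*(41/50-(b-a)) * sosZ a b c + sosRest a b c := by
  unfold hPoly₁ hPoly₂ rPoly sosOne sosX sosY sosZ sosRest
  ring

theorem sosOne_nonneg (a b c : ℝ) : 0 ≤ sosOne a b c := by unfold sosOne; positivity
theorem sosX_nonneg (a b c : ℝ) : 0 ≤ sosX a b c := by unfold sosX; positivity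
theorem sosY_nonneg (a b c : ℝ) : 0 ≤ sosY a b c := by unfold sosY; positivity
theorem sosZ_nonneg (a b c : ℝ) : 0 ≤ sosZ a b c := by unfold sosZ; positivity
theorem sosRest_nonneg (a b c : ℝ) : 0 ≤ sosRest a b c := by unfold sosRest; positivity

/-- On the box, the energy density with `z log(1 + z)` replaced by its quintic minorant is at most
`-q⁴ / 50` plus terms of bounded integral; here `p, q, r` stand for `z(t), z(t - 1), z(t - 2)`. -/
theorem dissipation_poly {p q r : ℝ} (hp : p ∈ Icc (-(31 / 50) : ℝ) (41 / 50))
    (hq : q ∈ Icc (-(31 / 50) : ℝ) (41 / 50)) (hr : r ∈ Icc (-(31 / 50) : ℝ) (41 / 50)) :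
    (1 - 3 / 100) * p ^ 2 - 3 / 100 * p * r -
        (p ^ 2 - p ^ 3 / 2 + 8 / 25 * p ^ 4 - 33 / 200 * p ^ 5) ≤
      -(hPoly₁ p q * (q * (1 + p)) + hPoly₂ p q * (r * (1 + q)))
        - (rPoly p q - rPoly q r) - q ^ 4 / 50 := by
  obtain ⟨a, b, rfl, rfl⟩ : ∃ a b, p = b + a ∧ r = b - a :=
    ⟨(p - r) / 2, (p + r) / 2, by ring, by ring⟩
  have h := sos_identity a b q
  have h1 := sosOne_nonneg a b q
  have h2 := mul_nonneg (mul_nonneg (show 0 ≤ b + a + 31 / 50 by linarith [hp.1])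
    (show 0 ≤ 41 / 50 - (b + a) by linarith [hp.2])) (sosX_nonneg a b q)
  have h3 := mul_nonneg (mul_nonneg (show 0 ≤ q + 31 / 50 by linarith [hq.1])
    (show 0 ≤ 41 / 50 - q by linarith [hq.2])) (sosY_nonneg a b q)
  have h4 := mul_nonneg (mul_nonneg (show 0 ≤ b - a + 31 / 50 by linarith [hr.1])
    (show 0 ≤ 41 / 50 - (b - a) by linarith [hr.2])) (sosZ_nonneg a b q)
  have h5 := sosRest_nonneg a b q
  linarith

/-! ### Dissipation in the box -/

/-- The quintic minorant of `z log(1 + z)`: the difference `log(1 + z) - (z - z²/2 + ⋯)` is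
increasing, since its derivative is `z² (1/25 - 3z/10 + 33z²/50) / (1 + z)`. -/
theorem mul_log_lower {z : ℝ} (hz : -1 < z) :
    z ^ 2 - z ^ 3 / 2 + 8 / 25 * z ^ 4 - 33 / 200 * z ^ 5 ≤ z * Real.log (1 + z) := by
  set f : ℝ → ℝ := fun z => Real.log (1 + z) - (z - z ^ 2 / 2 + 8 / 25 * z ^ 3 - 33 / 200 * z ^ 4)
    with hf
  have hder : ∀ z, -1 < z → HasDerivAt f (z ^ 2 * (1 / 25 - 3 / 10 * z + 33 / 50 * z ^ 2) / (1 + z)) z := by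
    intro z hz
    have hz' : (1 + z) ≠ 0 := by linarith
    refine (((((hasDerivAt_id z).const_add 1).log hz').sub ((((hasDerivAt_id z).sub
      ((hasDerivAt_pow 2 z).div_const 2)).add ((hasDerivAt_pow 3 z).const_mul (8 / 25))).sub
      ((hasDerivAt_pow 4 z).const_mul (33 / 200)))).congr_deriv ?_)
    simp only [id]
    field_simp
    ring
  have hmono : MonotoneOn f (Ioi (-1)) := by
    refine monotoneOn_of_deriv_nonneg (convex_Ioi _)
      (fun z hz => (hder z hz).continuousAt.continuousWithinAt)
      (fun z hz => (hder z (interior_subset hz)).differentiableAt.differentiableWithinAt)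
      fun z hz => ?_
    have hz := interior_subset hz
    rw [(hder z hz).deriv]
    refine div_nonneg (mul_nonneg (sq_nonneg _) ?_) (by linarith [mem_Ioi.1 hz])
    nlinarith [sq_nonneg (z - 5 / 22)]
  have hf0 : f 0 = 0 := by simp [hf]
  have h0 : (0 : ℝ) ∈ Ioi (-1 : ℝ) := by norm_num
  have key : 0 ≤ z * f z := by
    rcases le_total 0 z with h | h
    · exact mul_nonneg h (hf0 ▸ hmono h0 hz h)
    · exact mul_nonneg_of_nonpos_of_nonpos h (hf0 ▸ hmono hz h0 h)
  simp only [hf] at key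
  linarith

theorem hPoly_hasDerivAt {u v : ℝ → ℝ} {u' v' t : ℝ} (hu : HasDerivAt u u' t)
    (hv : HasDerivAt v v' t) :
    HasDerivAt (fun t => hPoly (u t) (v t))
      (hPoly₁ (u t) (v t) * u' + hPoly₂ (u t) (v t) * v') t := by
  have m : ∀ (k : ℝ) (i j : ℕ), HasDerivAt (fun t => k * u t ^ i * v t ^ j)
      (k * (i * u t ^ (i - 1) * u') * v t ^ j + k * u t ^ i * (j * v t ^ (j - 1) * v')) t :=
    fun k i j => ((hu.pow i).const_mul k).mul (hv.pow j)
  have h := ((((((((((((m (-99/25) 1 1).add (m (191/500) 1 2)).add (m (12/125) 2 1)).sub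
    (m (81/100) 3 0)).add (m (467/1000) 1 3)).add (m (33/500) 2 2)).add (m (3/4) 3 1)).add
    (m (539/1000) 4 0)).sub (m (33/1000) 1 4)).add (m (31/1000) 2 3)).add (m (17/1000) 3 2)).sub
    (m (61/500) 4 1)).sub (m (9/100) 5 0)
  refine (h.congr_deriv ?_).congr_of_eventuallyEq (Eventually.of_forall fun s => ?_)
  · unfold hPoly₁ hPoly₂; norm_num; ring
  · simp only [hPoly, Pi.add_apply, Pi.sub_apply]; ring

/-- Integrating the pointwise dissipation inequality and comparing with `energy_inequality` bounds
`∫ z⁴`. The functions `H, H₁, H₂, R` are kept abstract; they stand for `hPoly`, its partial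
derivatives and `rPoly`. -/
theorem integral_pow_four_bounded {α : ℝ} {y z : ℝ → ℝ} (hα : 0 < α) (hα2 : α < Real.pi / 2)
    (hy : Continuous y) (hzy : ∀ t, z t = Real.exp (y t) - 1) (hy1 : ∀ t, |y t| ≤ 1)
    (hbox : ∀ t, z t ∈ Icc (-(31 / 50) : ℝ) (41 / 50))
    (hd : ∀ t, -1 ≤ t → HasDerivAt y (-α * z (t - 1)) t)
    {H H₁ H₂ R : ℝ → ℝ → ℝ} (hHc : Continuous fun p : ℝ × ℝ => H p.1 p.2)
    (hH₁c : Continuous fun p : ℝ × ℝ => H₁ p.1 p.2) (hH₂c : Continuous fun p : ℝ × ℝ => H₂ p.1 p.2)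
    (hRc : Continuous fun p : ℝ × ℝ => R p.1 p.2)
    (hHchain : ∀ {u v : ℝ → ℝ} {u' v' t : ℝ}, HasDerivAt u u' t → HasDerivAt v v' t →
      HasDerivAt (fun t => H (u t) (v t)) (H₁ (u t) (v t) * u' + H₂ (u t) (v t) * v') t)
    (hdiss : ∀ {p q r : ℝ}, p ∈ Icc (-(31 / 50) : ℝ) (41 / 50) →
      q ∈ Icc (-(31 / 50) : ℝ) (41 / 50) → r ∈ Icc (-(31 / 50) : ℝ) (41 / 50) →
      (1 - 3 / 100) * p ^ 2 - 3 / 100 * p * r -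
        (p ^ 2 - p ^ 3 / 2 + 8 / 25 * p ^ 4 - 33 / 200 * p ^ 5) ≤
      -(H₁ p q * (q * (1 + p)) + H₂ p q * (r * (1 + q))) - (R p q - R q r) - q ^ 4 / 50) :
    ∃ C : ℝ, ∀ T, 2 ≤ T → ∫ t in (0 : ℝ)..T, z (t - 1) ^ 4 ≤ C := by
  have hz : Continuous z := by
    rw [show z = fun t => Real.exp (y t) - 1 from funext hzy]; fun_prop
  have hz1 : ∀ t, |z t| ≤ 1 := fun t => abs_le.2 ⟨by linarith [(hbox t).1], by linarith [(hbox t).2]⟩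
  obtain ⟨C, hC⟩ := energy_inequality hα hα2 hy hzy hy1 hz1 hd
  have hcomp : IsCompact (Icc (-(31 / 50) : ℝ) (41 / 50) ×ˢ Icc (-(31 / 50) : ℝ) (41 / 50)) :=
    isCompact_Icc.prod isCompact_Icc
  obtain ⟨M, hM⟩ := hcomp.exists_bound_of_continuousOn hHc.continuousOn
  obtain ⟨N, hN⟩ := hcomp.exists_bound_of_continuousOn hRc.continuousOn
  have hM' : ∀ t, |H (z t) (z (t - 1))| ≤ M := fun t => hM (z t, z (t - 1)) ⟨hbox _, hbox _⟩
  have hN' : ∀ t, |R (z t) (z (t - 1))| ≤ N := fun t => hN (z t, z (t - 1)) ⟨hbox _, hbox _⟩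
  have hRz : Continuous fun t => R (z t) (z (t - 1)) :=
    hRc.comp (hz.prodMk (hz.comp (continuous_id.sub continuous_const)))
  have hzd : ∀ t, -1 ≤ t → HasDerivAt z (-α * (z (t - 1) * (1 + z t))) t := by
    intro t ht
    have h2 : HasDerivAt z (Real.exp (y t) * (-α * z (t - 1))) t := by
      rw [show z = fun t => Real.exp (y t) - 1 from funext hzy]
      simpa [hzy] using ((hd t ht).exp.sub_const 1)
    refine h2.congr_deriv ?_
    rw [show Real.exp (y t) = z t + 1 by rw [hzy]; ring]; ring
  set D : ℝ → ℝ := fun t => -(H₁ (z t) (z (t - 1)) * (z (t - 1) * (1 + z t)) +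
    H₂ (z t) (z (t - 1)) * (z (t - 2) * (1 + z (t - 1)))) with hD
  have hDc : Continuous D := by
    have c1 : Continuous fun t => H₁ (z t) (z (t - 1)) :=
      hH₁c.comp (hz.prodMk (hz.comp (continuous_id.sub continuous_const)))
    have c2 : Continuous fun t => H₂ (z t) (z (t - 1)) :=
      hH₂c.comp (hz.prodMk (hz.comp (continuous_id.sub continuous_const)))
    fun_prop
  have hHd : ∀ t, 0 ≤ t → HasDerivAt (fun t => 1 / α * H (z t) (z (t - 1))) (D t) t := by
    intro t ht
    have h1 := hzd t (by linarith)
    have h2 := (hzd (t - 1) (by linarith)).comp_sub_const t 1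
    refine ((hHchain h1 h2).const_mul _).congr_deriv ?_
    simp only [hD]
    rw [show t - 1 - 1 = t - 2 by ring]
    field_simp
    ring
  refine ⟨50 * (C + 2 * M / α + 2 * N), fun T hT => ?_⟩
  have hpt : ∀ t, (1 - 3 / 100) * z t ^ 2 - 3 / 100 * z t * z (t - 2) - z t * y t ≤
      D t - (R (z t) (z (t - 1)) - R (z (t - 1)) (z (t - 1 - 1))) - z (t - 1) ^ 4 / 50 := by
    intro t
    have h1 := hdiss (hbox t) (hbox (t - 1)) (hbox (t - 2))
    have h2 := mul_log_lower (show -1 < z t by linarith [(hbox t).1])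
    rw [show 1 + z t = Real.exp (y t) by rw [hzy]; ring, Real.log_exp] at h2
    simp only [hD]
    rw [show t - 1 - 1 = t - 2 by ring]
    linarith
  have hRz1 : Continuous fun t => R (z (t - 1)) (z (t - 1 - 1)) := by
    exact hRz.comp (continuous_id.sub continuous_const)
  have hintg := intervalIntegral.integral_mono (a := 0) (b := T) (μ := volume) (by linarith)
    (Continuous.intervalIntegrable (by fun_prop) _ _)
    (Continuous.intervalIntegrable (by fun_prop) _ _) hpt
  have hrhs : ∫ t in (0 : ℝ)..T,
      (D t - (R (z t) (z (t - 1)) - R (z (t - 1)) (z (t - 1 - 1))) - z (t - 1) ^ 4 / 50) =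
      (∫ t in (0 : ℝ)..T, D t) - ((∫ t in (0 : ℝ)..T, R (z t) (z (t - 1))) -
        ∫ t in (0 : ℝ)..T, R (z (t - 1)) (z (t - 1 - 1))) -
          (∫ t in (0 : ℝ)..T, z (t - 1) ^ 4) / 50 := by
    rw [intervalIntegral.integral_sub
        (Continuous.intervalIntegrable (by fun_prop) _ _)
        (Continuous.intervalIntegrable (by fun_prop) _ _),
      intervalIntegral.integral_sub
        (Continuous.intervalIntegrable (by fun_prop) _ _)
        (Continuous.intervalIntegrable (by fun_prop) _ _),
      intervalIntegral.integral_sub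
        (Continuous.intervalIntegrable (by fun_prop) _ _)
        (Continuous.intervalIntegrable (by fun_prop) _ _),
      intervalIntegral.integral_div]
  have hDi : ∫ t in (0 : ℝ)..T, D t =
      1 / α * H (z T) (z (T - 1)) - 1 / α * H (z 0) (z (0 - 1)) :=
    intervalIntegral.integral_eq_sub_of_hasDerivAt
      (f := fun t => 1 / α * H (z t) (z (t - 1)))
      (fun t ht => hHd t (by rw [uIcc_of_le (by linarith)] at ht; exact ht.1))
      (hDc.intervalIntegrable _ _)
  have hDb : ∫ t in (0 : ℝ)..T, D t ≤ 2 * M / α := by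
    rw [hDi]
    have a1 := (abs_le.1 (hM' T)).2
    have a2 := (abs_le.1 (hM' 0)).1
    rw [show 1 / α * H (z T) (z (T - 1)) - 1 / α * H (z 0) (z (0 - 1)) =
      (H (z T) (z (T - 1)) - H (z 0) (z (0 - 1))) / α by ring]
    gcongr
    linarith
  have hshift : ∫ t in (0 : ℝ)..T, R (z (t - 1)) (z (t - 1 - 1)) =
      ∫ t in (-1 : ℝ)..(T - 1), R (z t) (z (t - 1)) := by
    rw [intervalIntegral.integral_comp_sub_right (fun t => R (z t) (z (t - 1)))]
    simp
  have hRi := intervalIntegral.integral_interval_sub_interval_comm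
    (hRz.intervalIntegrable (μ := volume) 0 T) (hRz.intervalIntegrable (-1) (T - 1))
    (hRz.intervalIntegrable 0 (-1))
  have r1 : ‖∫ t in (0 : ℝ)..(-1), R (z t) (z (t - 1))‖ ≤ N * |(-1) - 0| :=
    intervalIntegral.norm_integral_le_of_norm_le_const fun t _ => hN' t
  have r2 : ‖∫ t in T..(T - 1), R (z t) (z (t - 1))‖ ≤ N * |T - 1 - T| :=
    intervalIntegral.norm_integral_le_of_norm_le_const fun t _ => hN' t
  rw [Real.norm_eq_abs] at r1 r2
  rw [show |(-1 : ℝ) - 0| = 1 by norm_num] at r1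
  rw [show T - 1 - T = -1 by ring, show |(-1 : ℝ)| = 1 by norm_num] at r2
  have hr1a := abs_le.1 r1
  have hr2a := abs_le.1 r2
  have := hC T hT
  rw [hrhs, hshift, hRi] at hintg
  linarith [hr1a.1, hr1a.2, hr2a.1, hr2a.2]

/-- A solution of Wright's equation that stays in the box tends to `0`. The function `z⁵` and its
derivative are both dominated by the integrable function `z⁴`, so `z⁵ → 0`. -/
theorem tendsto_zero_of_box {α : ℝ} {y : ℝ → ℝ} (hα : 0 < α) (hα2 : α < Real.pi / 2)
    (hy : Continuous y) (hbox : ∀ t, Real.exp (y t) - 1 ∈ Icc (-(31 / 50) : ℝ) (41 / 50))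
    (hd : ∀ t, -1 ≤ t → HasDerivAt y (-α * (Real.exp (y (t - 1)) - 1)) t) :
    Tendsto y atTop (𝓝 0) := by
  set z : ℝ → ℝ := fun t => Real.exp (y t) - 1 with hzdef
  have hzy : ∀ t, z t = Real.exp (y t) - 1 := fun t => rfl
  have hz : Continuous z := by simp only [hzdef]; fun_prop
  have hy1 : ∀ t, |y t| ≤ 1 := by
    intro t
    have h := hbox t
    refine abs_le.2 ⟨?_, ?_⟩
    · rw [← Real.exp_le_exp]
      have h1 : Real.exp (-1) ≤ 0.38 := by
        rw [Real.exp_neg, inv_le_comm₀ (Real.exp_pos _) (by norm_num)]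
        have := Real.exp_one_gt_d9
        norm_num at this ⊢; linarith
      linarith [h.1]
    · rw [← Real.exp_le_exp]
      have := Real.exp_one_gt_d9
      norm_num at this; linarith [h.2]
  obtain ⟨C, hC⟩ := integral_pow_four_bounded hα hα2 hy hzy hy1 hbox hd
    (by unfold hPoly; fun_prop) (by unfold hPoly₁; fun_prop) (by unfold hPoly₂; fun_prop)
    (by unfold rPoly; fun_prop) hPoly_hasDerivAt dissipation_poly
  have hz1 : ∀ t, |z t| ≤ 1 := fun t => abs_le.2 ⟨by linarith [(hbox t).1], by linarith [(hbox t).2]⟩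
  have hI4 : IntegrableOn (fun t => z (t - 1) ^ 4) (Ioi 0) := by
    refine integrableOn_Ioi_of_intervalIntegral_norm_bounded (l := atTop) (b := id) C 0
      (fun i => ?_) tendsto_id ?_
    · exact (Continuous.integrableOn_Icc (by fun_prop)).mono_set Ioc_subset_Icc_self
    · filter_upwards [eventually_ge_atTop 2] with T hT
      refine le_trans (le_of_eq ?_) (hC T hT)
      refine intervalIntegral.integral_congr fun t _ => ?_
      simp only [Real.norm_eq_abs]
      exact abs_of_nonneg (by positivity)
  have hzd : ∀ t, 0 < t → HasDerivAt (fun t => z (t - 1) ^ 5)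
      (5 * z (t - 1) ^ 4 * (Real.exp (y (t - 1)) * (-α * z (t - 1 - 1)))) t := by
    intro t ht
    have h2 : HasDerivAt z (Real.exp (y (t - 1)) * (-α * z (t - 1 - 1))) (t - 1) :=
      (hd (t - 1) (by linarith)).exp.sub_const 1
    exact ((h2.comp_sub_const t 1).pow 5).congr_deriv (by norm_num)
  have h5 : Tendsto (fun t => z (t - 1) ^ 5) atTop (𝓝 0) := by
    refine tendsto_zero_of_hasDerivAt_of_integrableOn_Ioi (a := 0) (fun t ht => hzd t ht) ?_ ?_
    · refine Integrable.mono' (hI4.const_mul (5 * (2 * α)))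
        (Continuous.aestronglyMeasurable (by fun_prop)) (Eventually.of_forall fun t => ?_)
      have e1 : |Real.exp (y (t - 1))| ≤ 2 := by
        rw [abs_of_pos (Real.exp_pos _)]; linarith [(hbox (t - 1)).2]
      have e2 := hz1 (t - 1 - 1)
      rw [Real.norm_eq_abs, abs_mul, abs_mul, abs_mul, abs_mul, abs_neg, abs_of_pos hα,
        abs_of_nonneg (show 0 ≤ z (t - 1) ^ 4 by positivity), abs_of_pos (show (0 : ℝ) < 5 by norm_num)]
      calc 5 * z (t - 1) ^ 4 * (|Real.exp (y (t - 1))| * (α * |z (t - 1 - 1)|))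
          ≤ 5 * z (t - 1) ^ 4 * (2 * (α * 1)) := by gcongr
        _ = 5 * (2 * α) * z (t - 1) ^ 4 := by ring
    · refine Integrable.mono' hI4
        (Continuous.aestronglyMeasurable (by fun_prop)) (Eventually.of_forall fun t => ?_)
      rw [Real.norm_eq_abs, pow_succ, abs_mul, abs_of_nonneg (show 0 ≤ z (t - 1) ^ 4 by positivity)]
      exact mul_le_of_le_one_right (by positivity) (hz1 _)
  have hz0 : Tendsto (fun t => z (t - 1)) atTop (𝓝 0) := by
    have h := h5.abs.rpow_const (p := 1 / 5) (Or.inr (by norm_num))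
    rw [tendsto_zero_iff_abs_tendsto_zero]
    simp only [abs_zero] at h
    rw [Real.zero_rpow (by norm_num)] at h
    refine h.congr fun t => ?_
    simp only [Function.comp]
    rw [abs_pow, ← Real.rpow_natCast, ← Real.rpow_mul (abs_nonneg _)]
    norm_num
  have hz0' : Tendsto z atTop (𝓝 0) := by
    have := hz0.comp (tendsto_atTop_add_const_right atTop (1 : ℝ) tendsto_id)
    refine this.congr fun t => ?_
    simp
  have := (hz0'.const_add 1).log (by norm_num)
  rw [add_zero, Real.log_one] at this
  refine this.congr fun t => ?_
  rw [hzy, add_sub_cancel, Real.log_exp]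

/-! ### A priori bounds -/

theorem sub_le_of_deriv_le {f f' : ℝ → ℝ} {a b c : ℝ} (hab : a ≤ b)
    (hd : ∀ t ∈ Icc a b, HasDerivAt f (f' t) t) (h : ∀ t ∈ Icc a b, f' t ≤ c) :
    f b - f a ≤ c * (b - a) := by
  refine (convex_Icc a b).image_sub_le_mul_sub_of_deriv_le
    (fun t ht => (hd t ht).continuousAt.continuousWithinAt)
    (fun t ht => (hd t (interior_subset ht)).differentiableAt.differentiableWithinAt)
    (fun t ht => ?_) a (left_mem_Icc.2 hab) b (right_mem_Icc.2 hab) hab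
  rw [(hd t (interior_subset ht)).deriv]
  exact h t (interior_subset ht)

theorem deriv_nonneg_of_left_max {f : ℝ → ℝ} {f' a m : ℝ} (ham : a < m) (hd : HasDerivAt f f' m)
    (hmax : ∀ s ∈ Icc a m, f s ≤ f m) : 0 ≤ f' := by
  have h := (hasDerivWithinAt_iff_tendsto_slope' (s := Iio m) (by simp)).1 hd.hasDerivWithinAt
  refine ge_of_tendsto h ?_
  filter_upwards [Ioo_mem_nhdsLT ham] with s hs
  rw [slope_def_field]
  exact div_nonneg_of_nonpos (by linarith [hmax s ⟨hs.1.le, hs.2.le⟩]) (by linarith [hs.2])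

/-- A priori bound for `y' = -α g(y(t - 1))`. Above `U` there is a maximum point `m`, at which
`y(m - 1) ≤ 0`, so `y` vanishes at some `q ∈ [m - 1, m]`. Since `y' ≤ κ A`, going back from `q`
gives `y(s) ≥ -κ A (q - s)`, and feeding this into the equation bounds `y'` on `[q, m]` both by
`κ A` and by `-κ g(-κ A (q + 1 - u))`. The first bound is used up to `q + 1 - σ` and the second,
whose primitive is `G`, afterwards. -/
theorem eventually_le_of_feedback {α κ A U σ : ℝ} {y g G : ℝ → ℝ} (hα : 0 < α) (hακ : α ≤ κ)
    (hA : 0 < A) (hU : 0 < U) (hσ : σ ∈ Icc (0 : ℝ) 1) (hg : StrictMono g) (hg0 : g 0 = 0)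
    (hG : ∀ s, HasDerivAt G (-κ * g (-(κ * A * s))) s) (hG0 : G 0 = 0)
    (hbound : κ * A * (1 - σ) + G σ ≤ U) (hy : Continuous y)
    (hd : ∀ t, 0 < t → HasDerivAt y (-α * g (y (t - 1))) t)
    (hlow : ∀ᶠ t in atTop, -A ≤ g (y t)) : ∀ᶠ t in atTop, y t ≤ U := by
  have hκ : 0 < κ := hα.trans_le hακ
  obtain ⟨t₁, ht₁⟩ := eventually_atTop.1 hlow
  obtain ⟨t₀, ht₀, hlow⟩ : ∃ t₀ : ℝ, 0 < t₀ ∧ ∀ t, t₀ ≤ t → -A ≤ g (y t) :=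
    ⟨max t₁ 1, by positivity, fun t ht => ht₁ t ((le_max_left _ _).trans ht)⟩
  have hGnn : ∀ s, 0 ≤ s → 0 ≤ G s := fun s hs =>
    nonneg_of_deriv_nonneg hG hG0 (fun s hs => by
      have : g (-(κ * A * s)) ≤ g 0 := hg.monotone (by simp only [Left.neg_nonpos_iff]; positivity)
      rw [hg0] at this
      nlinarith) hs
  have hslope : ∀ t, t₀ + 1 ≤ t → -α * g (y (t - 1)) ≤ κ * A := by
    intro t ht
    have := hlow (t - 1) (by linarith)
    nlinarith
  -- the solution cannot stay above `U`, where its derivative is at most `-α g(U) < 0`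
  obtain ⟨r, hr, hyr⟩ : ∃ r, t₀ + 3 ≤ r ∧ y r ≤ U := by
    by_contra! hcon
    have hgU : 0 < g U := hg0 ▸ hg hU
    set S := (y (t₀ + 4) - U) / (α * g U) with hS
    have hSpos : 0 < S := div_pos (by linarith [hcon (t₀ + 4) (by linarith)]) (by positivity)
    have h := sub_le_of_deriv_le (f := y) (f' := fun t => -α * g (y (t - 1))) (a := t₀ + 4)
      (b := t₀ + 4 + S) (c := -(α * g U)) (by linarith) (fun t ht => hd t (by linarith [ht.1]))
      (fun t ht => by
        have := hg (hcon (t - 1) (by linarith [ht.1]))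
        nlinarith)
    have h2 := hcon (t₀ + 4 + S) (by linarith)
    have h3 : α * g U * S = y (t₀ + 4) - U := by rw [hS]; field_simp
    nlinarith
  refine eventually_atTop.2 ⟨r, fun t hrt => ?_⟩
  by_contra! hyt
  obtain ⟨m, hm, hmax⟩ := isCompact_Icc.exists_isMaxOn (nonempty_Icc.2 hrt) hy.continuousOn
  have hmax : ∀ s ∈ Icc r t, y s ≤ y m := fun s hs => hmax hs
  have hym : U < y m := hyt.trans_le (hmax t (right_mem_Icc.2 hrt))
  have hrm : r < m := by
    rcases hm.1.eq_or_lt with h | h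
    · rw [← h] at hym; linarith
    · exact h
  have hym1 : y (m - 1) ≤ 0 := by
    have h0 := deriv_nonneg_of_left_max hrm (hd m (by linarith))
      (fun s hs => hmax s ⟨hs.1, hs.2.trans hm.2⟩)
    by_contra! hpos
    have := hg hpos
    rw [hg0] at this
    nlinarith
  obtain ⟨q, hq, hq0⟩ : ∃ q ∈ Icc (m - 1) m, y q = 0 :=
    intermediate_value_Icc (by linarith) hy.continuousOn ⟨hym1, by linarith⟩
  have hback : ∀ s ∈ Icc (q - 1) q, -(κ * A * (q - s)) ≤ y s := by
    intro s hs
    have := sub_le_of_deriv_le (f := y) (f' := fun t => -α * g (y (t - 1))) hs.2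
      (fun t ht => hd t (by linarith [ht.1, hs.1, hq.1]))
      (fun t ht => hslope t (by linarith [ht.1, hs.1, hq.1]))
    rw [hq0] at this
    linarith
  have hfwd : ∀ u ∈ Icc q m, -α * g (y (u - 1)) ≤ -κ * g (-(κ * A * (q + 1 - u))) := by
    intro u hu
    have h1 := hg.monotone (hback (u - 1) ⟨by linarith [hu.1], by linarith [hu.2, hq.1]⟩)
    rw [show q - (u - 1) = q + 1 - u by ring] at h1
    have h2 : g (-(κ * A * (q + 1 - u))) ≤ g 0 := hg.monotone (by
      have : 0 ≤ q + 1 - u := by linarith [hu.2, hq.1]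
      simp only [Left.neg_nonpos_iff]; positivity)
    rw [hg0] at h2
    nlinarith
  have hcrude : ∀ b, q ≤ b → b ≤ m → y b ≤ κ * A * (b - q) := by
    intro b hb1 hb2
    have := sub_le_of_deriv_le (f := y) (f' := fun t => -α * g (y (t - 1))) hb1
      (fun t ht => hd t (by linarith [ht.1, hq.1]))
      (fun t ht => hslope t (by linarith [ht.1, hq.1]))
    rw [hq0] at this
    linarith
  rcases le_total m (q + 1 - σ) with hc | hc
  · have h1 := hcrude m hq.2 le_rfl
    have h2 : κ * A * (m - q) ≤ κ * A * (1 - σ) :=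
      mul_le_mul_of_nonneg_left (by linarith) (by positivity)
    linarith [hGnn σ hσ.1]
  · have h1 := hcrude (q + 1 - σ) (by linarith [hσ.2]) hc
    have h2 := sub_le_of_deriv_le (f := fun u => y u + G (q + 1 - u))
      (f' := fun u => -α * g (y (u - 1)) + -(-κ * g (-(κ * A * (q + 1 - u))))) (c := 0) hc
      (fun u hu => (hd u (by linarith [hu.1, hσ.2, hq.1])).add ((hG _).comp_const_sub (q + 1) u))
      (fun u hu => by linarith [hfwd u ⟨by linarith [hu.1, hσ.2], hu.2⟩])
    simp only [sub_sub_cancel] at h2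
    have h3 := hGnn (q + 1 - m) (by linarith [hq.1])
    rw [show q + 1 - σ - q = 1 - σ by ring] at h1
    linarith

/-- An eventual lower bound `-A` for `exp y - 1` yields an eventual upper bound `B`. -/
theorem upper_step {α κ A U B E : ℝ} {y : ℝ → ℝ} (hα : 0 < α) (hακ : α ≤ κ) (hA : 0 < A)
    (hU : 0 < U) (hE : Real.exp (-(κ * A)) ≤ E) (hbound : κ - (1 - E) / A ≤ U)
    (hB : Real.exp U ≤ 1 + B) (hy : Continuous y)
    (hd : ∀ t, 0 < t → HasDerivAt y (-α * (Real.exp (y (t - 1)) - 1)) t)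
    (hlow : ∀ᶠ t in atTop, -A ≤ Real.exp (y t) - 1) :
    ∀ᶠ t in atTop, Real.exp (y t) - 1 ≤ B := by
  have h := eventually_le_of_feedback (κ := κ) (A := A) (U := U) (σ := 1) (y := y)
    (g := fun v => Real.exp v - 1)
    (G := fun s => κ * s - (1 - Real.exp (-(κ * A * s))) / A) hα hακ hA hU (by norm_num)
    (fun a b h => by simpa using h) (by simp)
    (fun s => by
      have h1 : HasDerivAt (fun s => -(κ * A * s)) (-(κ * A)) s := by
        exact (((hasDerivAt_id s).const_mul (κ * A)).neg).congr_deriv (by simp)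
      refine (((hasDerivAt_id s).const_mul κ).sub
        (((h1.exp).const_sub 1).div_const A)).congr_deriv ?_
      field_simp; ring)
    (by simp) (by
      have : (1 - E) / A ≤ (1 - Real.exp (-(κ * A))) / A := by gcongr
      simp only [mul_one, sub_self, mul_zero, zero_add]
      linarith) hy hd hlow
  filter_upwards [h] with t ht
  linarith [Real.exp_le_exp.2 ht]

/-- An eventual upper bound `B` for `exp y - 1` yields an eventual lower bound `-A`: the a priori
bound applied to `-y`, which solves the equation with `g v = 1 - exp (-v)`. -/
theorem lower_step {α κ B V A σ E : ℝ} {y : ℝ → ℝ} (hα : 0 < α) (hακ : α ≤ κ) (hB : 0 < B)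
    (hV : 0 < V) (hσ : σ ∈ Icc (0 : ℝ) 1) (hE : Real.exp (κ * B * σ) ≤ E)
    (hbound : κ * B * (1 - σ) + ((E - 1) / B - κ * σ) ≤ V)
    (hA : 1 - A ≤ Real.exp (-V)) (hy : Continuous y)
    (hd : ∀ t, 0 < t → HasDerivAt y (-α * (Real.exp (y (t - 1)) - 1)) t)
    (hupp : ∀ᶠ t in atTop, Real.exp (y t) - 1 ≤ B) :
    ∀ᶠ t in atTop, -A ≤ Real.exp (y t) - 1 := by
  have h := eventually_le_of_feedback (κ := κ) (A := B) (U := V) (σ := σ) (y := fun t => -y t)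
    (g := fun v => 1 - Real.exp (-v))
    (G := fun s => (Real.exp (κ * B * s) - 1) / B - κ * s) hα hακ hB hV hσ
    (fun a b h => by simpa using h) (by simp)
    (fun s => by
      have h1 : HasDerivAt (fun s => κ * B * s) (κ * B) s := by
        simpa using ((hasDerivAt_id s).const_mul (κ * B))
      refine (((h1.exp.sub_const 1).div_const B).sub
        ((hasDerivAt_id s).const_mul κ)).congr_deriv ?_
      rw [neg_neg]
      field_simp; ring)
    (by simp) (by
      have : (Real.exp (κ * B * σ) - 1) / B ≤ (E - 1) / B := by gcongr
      linarith) hy.neg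
    (fun t ht => (hd t ht).neg.congr_deriv (by simp only [neg_neg]; ring))
    (by filter_upwards [hupp] with t ht; rw [neg_neg]; linarith)
  filter_upwards [h] with t ht
  linarith [Real.exp_le_exp.2 (show -V ≤ y t by linarith)]

theorem exp_le_of_sq {V E : ℝ} (hV : 0 ≤ V) (hV2 : V ≤ 2)
    (h : (∑ m ∈ Finset.range 7, (V / 2) ^ m / m.factorial +
      (V / 2) ^ 7 * (7 + 1) / (Nat.factorial 7 * 7)) ^ 2 ≤ E) : Real.exp V ≤ E := by
  have h1 := Real.exp_bound' (x := V / 2) (by linarith) (by linarith) (n := 7) (by norm_num)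
  have h2 : Real.exp V = Real.exp (V / 2) ^ 2 := by rw [← Real.exp_nat_mul]; congr 1; push_cast; ring
  rw [h2]
  refine le_trans ?_ h
  gcongr
  exact_mod_cast h1

theorem exp_neg_le_of_sum {p E : ℝ} (hp : 0 ≤ p) (hE : 0 < E)
    (h : 1 ≤ E * ∑ m ∈ Finset.range 12, p ^ m / m.factorial) : Real.exp (-p) ≤ E := by
  have h1 := Real.sum_le_exp_of_nonneg hp 12
  have h2 : 1 ≤ E * Real.exp p := h.trans (by gcongr)
  have h3 : Real.exp (-p) * Real.exp p = 1 := by rw [← Real.exp_add]; simp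
  have := Real.exp_pos p
  nlinarith

theorem le_exp_neg_of_exp_le {V E c : ℝ} (hc : 0 < c) (h : Real.exp V ≤ E) (hE : c * E ≤ 1) :
    c ≤ Real.exp (-V) := by
  rw [Real.exp_neg, le_inv_comm₀ hc (Real.exp_pos _)]
  refine h.trans ?_
  rw [inv_eq_one_div, le_div_iff₀ hc]
  linarith

/-- Six applications of the a priori bounds, with `κ = 1.5708 > π/2`, bring every solution of
Wright's equation into the box on which the certificate is valid. The intermediate bounds for
`exp y - 1` are `-1, 1.18, -0.758, 0.922, -0.664, 0.815, -0.615`. -/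
theorem eventually_box {α : ℝ} {y : ℝ → ℝ} (hα : 0 < α) (hα2 : α < Real.pi / 2)
    (hy : Continuous y)
    (hd : ∀ t, 0 < t → HasDerivAt y (-α * (Real.exp (y (t - 1)) - 1)) t) :
    ∀ᶠ t in atTop, Real.exp (y t) - 1 ∈ Icc (-(31 / 50) : ℝ) (41 / 50) := by
  have hακ : α ≤ 1.5708 := by linarith [Real.pi_lt_d6]
  have a0 : ∀ᶠ t in atTop, -(1 : ℝ) ≤ Real.exp (y t) - 1 :=
    Eventually.of_forall fun t => by linarith [Real.exp_pos (y t)]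
  have b1 := upper_step (A := 1) (U := 0.779) (B := 1.18) (E := 0.2079) hα hακ (by norm_num)
    (by norm_num) (exp_neg_le_of_sum (by norm_num) (by norm_num)
      (by norm_num [Finset.sum_range_succ, Nat.factorial]))
    (by norm_num) (exp_le_of_sq (by norm_num) (by norm_num)
      (by norm_num [Finset.sum_range_succ, Nat.factorial])) hy hd a0
  have a1 := lower_step (V := 1.416) (A := 0.758) (σ := 0.42) (E := 2.1783) hα hακ (by norm_num)
    (by norm_num) (by norm_num) (exp_le_of_sq (by norm_num) (by norm_num)
      (by norm_num [Finset.sum_range_succ, Nat.factorial]))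
    (by norm_num) (le_exp_neg_of_exp_le (E := 4.13) (by norm_num)
      (exp_le_of_sq (by norm_num) (by norm_num)
      (by norm_num [Finset.sum_range_succ, Nat.factorial])) (by norm_num)) hy hd b1
  have b2 := upper_step (U := 0.653) (B := 0.922) (E := 0.3041) hα hακ (by norm_num)
    (by norm_num) (exp_neg_le_of_sum (by norm_num) (by norm_num)
      (by norm_num [Finset.sum_range_succ, Nat.factorial]))
    (by norm_num) (exp_le_of_sq (by norm_num) (by norm_num)
      (by norm_num [Finset.sum_range_succ, Nat.factorial])) hy hd a1
  have a2 := lower_step (V := 1.088) (A := 0.664) (σ := 0.45) (E := 1.9191) hα hακ (by norm_num)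
    (by norm_num) (by norm_num) (exp_le_of_sq (by norm_num) (by norm_num)
      (by norm_num [Finset.sum_range_succ, Nat.factorial]))
    (by norm_num) (le_exp_neg_of_exp_le (E := 2.97) (by norm_num)
      (exp_le_of_sq (by norm_num) (by norm_num)
      (by norm_num [Finset.sum_range_succ, Nat.factorial])) (by norm_num)) hy hd b2
  have b3 := upper_step (U := 0.5958) (B := 0.815) (E := 0.3525) hα hακ (by norm_num)
    (by norm_num) (exp_neg_le_of_sum (by norm_num) (by norm_num)
      (by norm_num [Finset.sum_range_succ, Nat.factorial]))
    (by norm_num) (exp_le_of_sq (by norm_num) (by norm_num)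
      (by norm_num [Finset.sum_range_succ, Nat.factorial])) hy hd a2
  have a3 := lower_step (V := 0.9536) (A := 0.615) (σ := 0.47) (E := 1.8254) hα hακ (by norm_num)
    (by norm_num) (by norm_num) (exp_le_of_sq (by norm_num) (by norm_num)
      (by norm_num [Finset.sum_range_succ, Nat.factorial]))
    (by norm_num) (le_exp_neg_of_exp_le (E := 2.596) (by norm_num)
      (exp_le_of_sq (by norm_num) (by norm_num)
      (by norm_num [Finset.sum_range_succ, Nat.factorial])) (by norm_num)) hy hd b3
  filter_upwards [b3, a3] with t h1 h2
  constructor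
  · norm_num at h2 ⊢; linarith
  · norm_num at h1 ⊢; linarith

/-! ### Convergence -/

/-- Every solution of Wright's equation `y' = -α (exp (y(t - 1)) - 1)` with `α < π/2` tends to `0`. -/
theorem wright_convergence {α : ℝ} {y : ℝ → ℝ} (hα : 0 < α) (hα2 : α < Real.pi / 2)
    (hy : Continuous y)
    (hd : ∀ t, 0 < t → HasDerivAt y (-α * (Real.exp (y (t - 1)) - 1)) t) :
    Tendsto y atTop (𝓝 0) := by
  obtain ⟨T₀, hT₀⟩ := eventually_atTop.1 (eventually_box hα hα2 hy hd)
  set S : ℝ := max T₀ 0 + 3 with hS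
  have hS1 : T₀ ≤ S - 3 := by rw [hS]; linarith [le_max_left T₀ 0]
  have hS2 : 0 ≤ S - 3 := by rw [hS]; linarith [le_max_right T₀ 0]
  -- shift time past the entrance into the box and freeze the solution before that
  set Y : ℝ → ℝ := fun t => y (max (t + S) (S - 2)) with hY
  have hYeq : ∀ t, -2 ≤ t → Y t = y (t + S) := fun t ht => by
    simp only [hY]; rw [max_eq_left (by linarith)]
  have hYlim : Tendsto Y atTop (𝓝 0) := by
    refine tendsto_zero_of_box hα hα2 (by fun_prop)
      (fun t => hT₀ _ (by linarith [le_max_right (t + S) (S - 2)])) fun t ht => ?_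
    rw [hYeq (t - 1) (by linarith)]
    have h := (hd (t + S) (by linarith)).comp_add_const t S
    rw [show t + S - 1 = t - 1 + S by ring] at h
    refine h.congr_of_eventuallyEq ?_
    filter_upwards [Ioi_mem_nhds (show -2 < t by linarith)] with s hs
    exact hYeq s (le_of_lt hs)
  have h := hYlim.comp (tendsto_atTop_add_const_right atTop (-S) tendsto_id)
  refine h.congr' ?_
  filter_upwards [eventually_ge_atTop (S - 2)] with t ht
  simp only [Function.comp, id]
  rw [hYeq _ (by linarith), neg_add_cancel_right]

/-- Solutions of the linear equation `x' = b x` keep their sign: `x exp(-∫ b)` is constant. -/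
theorem solution_pos {x b : ℝ → ℝ} (hb : Continuous b) (hx0 : 0 < x 0)
    (hx : ∀ t, 0 ≤ t → HasDerivWithinAt x (x t * b t) (Ici 0) t) {t : ℝ} (ht : 0 ≤ t) :
    0 < x t := by
  set F : ℝ → ℝ := fun t => x t * Real.exp (-∫ s in (0 : ℝ)..t, b s) with hF
  have hFd : ∀ s, 0 ≤ s → HasDerivWithinAt F 0 (Ici 0) s := by
    intro s hs
    have h1 : HasDerivAt (fun t => ∫ s in (0 : ℝ)..t, b s) (b s) s :=
      intervalIntegral.integral_hasDerivAt_right (hb.intervalIntegrable _ _)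
        hb.stronglyMeasurable.stronglyMeasurableAtFilter hb.continuousAt
    refine ((hx s hs).mul (h1.neg.exp.hasDerivWithinAt)).congr_deriv ?_
    simp only [Pi.neg_apply]
    ring
  have hconst := constant_of_has_deriv_right_zero (f := F) (a := 0) (b := t)
    (fun s hs => ((hFd s hs.1).continuousWithinAt).mono Icc_subset_Ici_self)
    (fun s hs => (hFd s hs.1).mono (Ici_subset_Ici.2 hs.1)) t (right_mem_Icc.2 ht)
  simp only [hF, intervalIntegral.integral_same, neg_zero, Real.exp_zero, mul_one] at hconst
  refine pos_of_mul_pos_left (b := Real.exp (-∫ s in (0 : ℝ)..t, b s)) ?_ (Real.exp_pos _).le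
  rw [hconst]; exact hx0

end DelayLogistic

open DelayLogistic
/-- For the delay logistic (Hutchinson) equation `x'(t) = ρ x(t)(1 - x(t-τ))` with
`ρτ < π/2` and a positive initial history `φ`, the solution converges to the
equilibrium `x̄ = 1` as `t → +∞`. -/
theorem delay_logistic_convergence_to_equilibrium
    (ρ τ : ℝ) (hρ : 0 < ρ) (hτ : 0 < τ) (hρτ : ρ * τ < Real.pi / 2)
    (φ : ℝ → ℝ) (hφ : ContinuousOn φ (Set.Icc (-τ) 0))
    (hφpos : ∀ s ∈ Set.Icc (-τ) (0 : ℝ), 0 < φ s)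
    (x : ℝ → ℝ)
    (hxc : ContinuousOn x (Set.Ici (-τ)))
    (hinit : ∀ s ∈ Set.Icc (-τ) (0 : ℝ), x s = φ s)
    (hx : ∀ t, 0 ≤ t → HasDerivWithinAt x (ρ * x t * (1 - x (t - τ))) (Set.Ici 0) t) :
    Tendsto x atTop (𝓝 1) := by
  -- `X` extends `x` to the left of `-τ` by a constant, which makes it continuous on `ℝ`
  set X : ℝ → ℝ := fun t => x (max t (-τ)) with hX
  have hXeq : ∀ t, -τ ≤ t → X t = x t := fun t ht => by simp only [hX]; rw [max_eq_left ht]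
  have hXc : Continuous X :=
    hxc.comp_continuous (by fun_prop) fun t => mem_Ici.2 (le_max_right _ _)
  have hx0 : ∀ s ∈ Set.Icc (-τ) (0 : ℝ), 0 < x s := fun s hs => hinit s hs ▸ hφpos s hs
  have hXpos : ∀ t, 0 < X t := by
    intro t
    simp only [hX]
    rcases le_total (max t (-τ)) 0 with h | h
    · exact hx0 _ ⟨le_max_right _ _, h⟩
    · refine solution_pos (b := fun t => ρ * (1 - X (t - τ))) (by fun_prop)
        (hx0 0 ⟨by linarith, le_rfl⟩) (fun t ht => (hx t ht).congr_deriv ?_) h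
      rw [hXeq (t - τ) (by linarith)]; ring
  have hlim : Tendsto (fun t => Real.log (X (τ * t))) atTop (𝓝 0) := by
    refine wright_convergence (mul_pos hρ hτ) hρτ
      (Continuous.log (by fun_prop) fun t => (hXpos _).ne') fun t ht => ?_
    have hτt : 0 < τ * t := mul_pos hτ ht
    have h1 : HasDerivAt X (ρ * x (τ * t) * (1 - x (τ * t - τ))) (τ * t) := by
      refine ((hx _ hτt.le).hasDerivAt (Ici_mem_nhds hτt)).congr_of_eventuallyEq ?_
      filter_upwards [Ioi_mem_nhds hτt] with s hs
      exact hXeq s (by linarith [mem_Ioi.1 hs])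
    have h2 : HasDerivAt (fun t => X (τ * t)) (ρ * x (τ * t) * (1 - x (τ * t - τ)) * τ) t :=
      (h1.comp t ((hasDerivAt_id t).const_mul τ)).congr_deriv (by simp)
    refine (h2.log (hXpos _).ne').congr_deriv ?_
    have hne := (hXpos (τ * t)).ne'
    rw [Real.exp_log (hXpos _), hXeq (τ * (t - 1)) (by nlinarith)]
    rw [hXeq (τ * t) (by linarith)] at hne ⊢
    rw [show τ * (t - 1) = τ * t - τ by ring]
    field_simp
    ring
  have h1 : Tendsto (fun t => X (τ * t)) atTop (𝓝 1) := by
    have := hlim.rexp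
    rw [Real.exp_zero] at this
    exact this.congr fun t => Real.exp_log (hXpos _)
  refine (h1.comp (tendsto_id.atTop_div_const hτ)).congr' ?_
  filter_upwards [eventually_ge_atTop 0] with t ht
  simp only [Function.comp, id]
  rw [mul_div_cancel₀ _ hτ.ne', hXeq t (by linarith)]
end

section
/- Let ρ, τ > 0 with ρτ > π/2. Then there exists a nonconstant periodic differentiable function x : ℝ → ℝ with x(t) > 0 for all t, satisfying x′(t) = ρ x(t)(1 − x(t−τ)) for all t ∈ ℝ (i.e., past the Hopf bifurcation at ρτ = π/2, the delay logistic equation admits a limit cycle). -/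
/-!
With `α = ρ τ` and `x t = exp (y (t / τ))` the equation becomes Wright's equation
`y'(t) = α (1 - exp (y (t - 1)))`, for which a nonconstant periodic solution is wanted when
`α > π / 2`. It is found as the limit of one explicit solution, by a Poincaré–Bendixson argument in
place of a fixed point theorem.

Take the solution on `[0, ∞)` with `y t = α t` on `[0, 1]`. Since `α` exceeds every later slope, `y`
and each difference `y (t + c) - y t` with `c ≥ 1` are strictly monotone on `[0, 1]`, and both obey the
negative feedback rule `sign f'(t) = -sign f(t - 1)`. By Rolle's theorem and descent the zeros of such
functions are more than one unit apart (`zeros_separated`). For `y` itself this gives slow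
oscillation, with zeros `z n`, extrema at `z n + 1` and bounded gaps (`WrightSol.exists_zeros`). For the
differences it says that the planar curve `(y t, y (t - 1))` does not cross itself, so that its turns
are nested and the amplitudes of the maxima decrease (`Zeros.amp_lt`).

The amplitudes do not tend to zero (`Zeros.not_tendsto`). Indeed `l exp l = -α` has a root with
`Re l > 0` and `0 < Im l < π`; the component of the solution along it is comparable to the amplitude
and does not decrease from one small extremum to the next.

Translating `y` by its maxima and passing to a limit along an ultrafilter gives an entire solution `x`
and a limit return time `c` such that `x (t + c) - x t` vanishes at `0` and `-1` and changes sign at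
most once on every unit interval (`exists_entire`). Such a function vanishes identically
(`eq_zero_of_pattern`), so `x` has period `c`; it is nonconstant because `x (-1) = 0` while `x 0` is the
positive limit of the maxima.
-/

open Set Filter Topology

namespace DelayLogistic

/-! ### Construction of the solution and separation of zeros -/

/-- A solution `y` on `[0, ∞)` of Wright's equation `y'(t) = α (1 - exp (y (t - 1)))`, which is the
delay logistic equation with unit delay in the variable `y = log x`, with the linear initial
segment `y t = α t` on `[0, 1]`. -/
structure WrightSol (α : ℝ) (y : ℝ → ℝ) : Prop where
  cont : Continuous y
  start : ∀ t, 0 ≤ t → t ≤ 1 → y t = α * t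
  deriv : ∀ t, 1 < t → HasDerivAt y (α * (1 - Real.exp (y (t - 1)))) t

/-- The method of steps: `steps α n` is the solution up to time `n + 1`. -/
noncomputable def steps (α : ℝ) : ℕ → ℝ → ℝ
  | 0 => fun t => α * t
  | n + 1 => fun t =>
      α * min t 1 + ∫ s in (1 : ℝ)..(max t 1), α * (1 - Real.exp (steps α n (s - 1)))

lemma steps_continuous (α : ℝ) (n : ℕ) : Continuous (steps α n) := by
  induction n with
  | zero => simp only [steps]; fun_prop
  | succ n ih =>
    simp only [steps]
    have h : Continuous fun s : ℝ => α * (1 - Real.exp (steps α n (s - 1))) := by fun_prop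
    have h2 : Continuous fun u : ℝ => ∫ s in (1 : ℝ)..u, α * (1 - Real.exp (steps α n (s - 1))) :=
      intervalIntegral.continuous_primitive (fun a b => h.intervalIntegrable a b) 1
    exact (continuous_const.mul (continuous_id.min continuous_const)).add
      (h2.comp (continuous_id.max continuous_const))

lemma steps_succ_eq (α : ℝ) (n : ℕ) : ∀ t : ℝ, t ≤ n + 1 → steps α (n + 1) t = steps α n t := by
  induction n with
  | zero =>
    intro t ht
    have ht : t ≤ 1 := by simpa using ht
    simp [steps, ht]
  | succ n ih =>
    intro t ht
    have hn : (0 : ℝ) ≤ n := by positivity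
    change α * min t 1 + (∫ s in (1 : ℝ)..(max t 1), α * (1 - Real.exp (steps α (n + 1) (s - 1)))) =
      α * min t 1 + ∫ s in (1 : ℝ)..(max t 1), α * (1 - Real.exp (steps α n (s - 1)))
    congr 1
    apply intervalIntegral.integral_congr
    intro s hs
    rw [uIcc_of_le (le_max_right _ _)] at hs
    push_cast at ht
    have h1 : max t 1 ≤ (n : ℝ) + 1 + 1 := max_le ht (by linarith)
    simp only
    rw [ih _ (by linarith [hs.2])]

lemma steps_eq (α : ℝ) (n k : ℕ) (t : ℝ) (ht : t ≤ n + 1) : steps α (n + k) t = steps α n t := by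
  induction k with
  | zero => rfl
  | succ k ih =>
    rw [← add_assoc, steps_succ_eq, ih]
    push_cast
    have : (0 : ℝ) ≤ k := by positivity
    linarith

lemma steps_hasDerivAt (α : ℝ) (n : ℕ) (t : ℝ) (ht : 1 < t) :
    HasDerivAt (steps α (n + 1)) (α * (1 - Real.exp (steps α n (t - 1)))) t := by
  have hc := steps_continuous α n
  have h : Continuous fun s : ℝ => α * (1 - Real.exp (steps α n (s - 1))) := by fun_prop
  have h2 := (intervalIntegral.integral_hasDerivAt_right (h.intervalIntegrable 1 t)
    h.stronglyMeasurable.stronglyMeasurableAtFilter h.continuousAt).const_add α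
  refine h2.congr_of_eventuallyEq ?_
  filter_upwards [lt_mem_nhds ht] with s hs
  simp [steps, hs.le]

lemma exists_wrightSol (α : ℝ) : ∃ y, WrightSol α y := by
  have key : ∀ n : ℕ, ∀ t : ℝ, t ≤ n + 1 → steps α ⌈t⌉₊ t = steps α n t := by
    intro n t ht
    rcases le_total n ⌈t⌉₊ with h | h
    · obtain ⟨k, hk⟩ := Nat.exists_eq_add_of_le h
      rw [hk, steps_eq α n k t ht]
    · obtain ⟨k, hk⟩ := Nat.exists_eq_add_of_le h
      rw [hk, steps_eq]
      linarith [Nat.le_ceil t]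
  have key2 : ∀ t : ℝ, ∃ n : ℕ, t < n := exists_nat_gt
  have loc : ∀ (t : ℝ) (n : ℕ), t < n → (fun t : ℝ => steps α ⌈t⌉₊ t) =ᶠ[𝓝 t] steps α n := by
    intro t n hn
    filter_upwards [gt_mem_nhds hn] with s hs
    exact key n s (by linarith)
  refine ⟨fun t => steps α ⌈t⌉₊ t, ?_, ?_, ?_⟩
  · rw [continuous_iff_continuousAt]
    intro t
    obtain ⟨n, hn⟩ := key2 t
    exact ((steps_continuous α n).continuousAt).congr (loc t n hn).symm
  · intro t _ ht
    rw [key 0 t (by simpa using ht)]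
    rfl
  · intro t ht
    obtain ⟨n, hn⟩ := key2 t
    have := (steps_hasDerivAt α n t ht).congr_of_eventuallyEq (loc t (n + 1) (by push_cast; linarith))
    rwa [key n (t - 1) (by linarith)]

/-- The negative feedback rule `sign f'(t) = -sign f(t - 1)` is shared by the solution and by its
differences with time shifts of itself. If moreover `f` is strictly decreasing on `[0, 1]`, no two
zeros of `f` in `[0, ∞)` lie at distance at most one: by Rolle, zeros `a < b ≤ a + 1` give a zero
of `f` in `(a - 1, a)`, and the descent ends in the initial interval. -/
lemma zeros_separated {f f' : ℝ → ℝ} (hc : Continuous f) (hanti : StrictAntiOn f (Icc 0 1))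
    (hd : ∀ t, 1 < t → HasDerivAt f (f' t) t)
    (hpos : ∀ t, 1 < t → 0 < f (t - 1) → f' t < 0)
    (hneg : ∀ t, 1 < t → f (t - 1) < 0 → 0 < f' t)
    {a b : ℝ} (ha : 0 ≤ a) (hab : a < b) (hfa : f a = 0) (hfb : f b = 0) : a + 1 < b := by
  suffices H : ∀ n : ℕ, ∀ a b : ℝ, 0 ≤ a → a < b → f a = 0 → f b = 0 → b ≤ a + 1 → a + b < n →
      False by
    by_contra hcon
    obtain ⟨n, hn⟩ := exists_nat_gt (a + b)
    exact H n a b ha hab hfa hfb (not_lt.1 hcon) hn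
  intro n
  induction n with
  | zero =>
    intro a b ha hab _ _ _ h
    push_cast at h
    linarith
  | succ n ih =>
    intro a b ha hab hfa hfb hba hn
    rcases lt_or_ge a 1 with ha1 | ha1
    · rcases le_or_gt b 1 with hb1 | hb1
      · have := hanti ⟨ha, ha1.le⟩ ⟨by linarith, hb1⟩ hab
        linarith
      · have h1 : f 1 < 0 := by
          have := hanti ⟨ha, ha1.le⟩ ⟨by linarith, le_rfl⟩ ha1
          linarith
        have h2 : AntitoneOn f (Icc 1 b) := by
          apply antitoneOn_of_deriv_nonpos (convex_Icc 1 b) hc.continuousOn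
          · intro t ht
            rw [interior_Icc] at ht
            exact (hd t ht.1).differentiableAt.differentiableWithinAt
          · intro t ht
            rw [interior_Icc] at ht
            rw [(hd t ht.1).deriv]
            have h3 : f a < f (t - 1) :=
              hanti ⟨by linarith [ht.1], by linarith [ht.2]⟩ ⟨ha, ha1.le⟩ (by linarith [ht.2])
            exact (hpos t ht.1 (by linarith)).le
        have := h2 ⟨le_rfl, hb1.le⟩ ⟨hb1.le, le_rfl⟩ hb1.le
        linarith
    · obtain ⟨ξ, hξ, hξ'⟩ := exists_hasDerivAt_eq_zero (f := f) (f' := f') hab hc.continuousOn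
        (hfa.trans hfb.symm) (fun t ht => hd t (by linarith [ht.1]))
      have hξ1 : 1 < ξ := by linarith [hξ.1]
      have h0 : f (ξ - 1) = 0 := by
        rcases lt_trichotomy (f (ξ - 1)) 0 with h | h | h
        · have := hneg ξ hξ1 h; linarith
        · exact h
        · have := hpos ξ hξ1 h; linarith
      refine ih (ξ - 1) a (by linarith) (by linarith [hξ.2]) h0 hfa (by linarith [hξ.1]) ?_
      push_cast at hn
      linarith [hξ.2]

/-- A priori bound: after a zero `s` of `f` the value can grow, with slope at most `C`, only up to time
`s + 1`; from then on negative feedback makes `f` decrease until its next zero. -/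
lemma le_of_slope {f f' : ℝ → ℝ} {C : ℝ} (hC : 0 ≤ C) (hc : Continuous f) (h0 : f 0 = 0)
    (hlip : ∀ s t, 0 ≤ s → s ≤ t → f t - f s ≤ C * (t - s))
    (hd : ∀ t, 1 < t → HasDerivAt f (f' t) t)
    (hpos : ∀ t, 1 < t → 0 < f (t - 1) → f' t < 0)
    {t : ℝ} (ht : 0 ≤ t) : f t ≤ C := by
  by_contra hcon
  push Not at hcon
  -- the last zero before `t`
  let S := {s | s ∈ Icc 0 t ∧ f s = 0}
  have hS : IsCompact S := isCompact_Icc.inter_right (isClosed_eq hc continuous_const)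
  obtain ⟨s, ⟨hs, hs0⟩, hmax⟩ := hS.exists_isMaxOn ⟨0, ⟨le_rfl, ht⟩, h0⟩ continuousOn_id
  have hpos' : ∀ r, s < r → r ≤ t → 0 < f r := by
    intro r hr hrt
    by_contra hneg
    push Not at hneg
    obtain ⟨q, hq, hq0⟩ := intermediate_value_Icc hrt hc.continuousOn ⟨hneg, by linarith⟩
    have : q ≤ s := hmax ⟨⟨by linarith [hq.1, hs.1], hq.2⟩, hq0⟩
    linarith [hq.1]
  have h1 := hlip s (min (s + 1) t) hs.1 (le_min (by linarith) hs.2)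
  have h1' : f (min (s + 1) t) ≤ C := by
    have : C * (min (s + 1) t - s) ≤ C * 1 :=
      mul_le_mul_of_nonneg_left (by linarith [min_le_left (s + 1) t]) hC
    linarith
  rcases le_total t (s + 1) with h | h
  · rw [min_eq_right h] at h1'; linarith
  · rw [min_eq_left h] at h1'
    have h2 : AntitoneOn f (Icc (s + 1) t) := by
      apply antitoneOn_of_deriv_nonpos (convex_Icc _ _) hc.continuousOn
      · intro r hr
        rw [interior_Icc] at hr
        exact (hd r (by linarith [hr.1, hs.1])).differentiableAt.differentiableWithinAt
      · intro r hr
        rw [interior_Icc] at hr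
        have h3 : 1 < r := by linarith [hr.1, hs.1]
        rw [(hd r h3).deriv]
        exact (hpos r h3 (hpos' _ (by linarith [hr.1]) (by linarith [hr.2]))).le
    have := h2 ⟨le_rfl, h⟩ ⟨h, le_rfl⟩ h
    linarith

/-! ### A priori bounds and slow oscillation -/

variable {α : ℝ} {y : ℝ → ℝ}

lemma WrightSol.zero (h : WrightSol α y) : y 0 = 0 := by
  simpa using h.start 0 le_rfl zero_le_one

lemma WrightSol.slope_lt (h : WrightSol α y) (hα : 0 < α) {s t : ℝ} (hs : 1 ≤ s) (hst : s < t) :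
    y t - y s < α * (t - s) := by
  obtain ⟨ξ, hξ, he⟩ := exists_hasDerivAt_eq_slope y _ hst h.cont.continuousOn
    (fun r hr => h.deriv r (by linarith [hr.1]))
  have h2 : 0 < t - s := by linarith
  rw [eq_div_iff h2.ne'] at he
  rw [← he]
  have : α * (1 - Real.exp (y (ξ - 1))) < α := by nlinarith [Real.exp_pos (y (ξ - 1))]
  exact mul_lt_mul_of_pos_right this h2

lemma WrightSol.slope_le (h : WrightSol α y) (hα : 0 < α) {s t : ℝ} (hs : 0 ≤ s) (hst : s ≤ t) :
    y t - y s ≤ α * (t - s) := by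
  have h1 : ∀ s t, 1 ≤ s → s ≤ t → y t - y s ≤ α * (t - s) := by
    intro s t hs hst
    rcases hst.eq_or_lt with rfl | hst
    · simp
    · exact (h.slope_lt hα hs hst).le
  rcases le_total 1 s with h1s | h1s
  · exact h1 s t h1s hst
  rcases le_total t 1 with ht | ht
  · rw [h.start s hs h1s, h.start t (hs.trans hst) ht]; linarith
  · have := h1 1 t le_rfl ht
    rw [h.start 1 zero_le_one le_rfl] at this
    rw [h.start s hs h1s]; linarith

lemma WrightSol.le (h : WrightSol α y) (hα : 0 < α) {t : ℝ} (ht : 0 ≤ t) : y t ≤ α := by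
  refine le_of_slope hα.le h.cont h.zero (fun s t hs hst => h.slope_le hα hs hst) h.deriv ?_ ht
  intro t _ hp
  have := Real.one_lt_exp_iff.2 hp
  nlinarith

lemma WrightSol.slope_ge (h : WrightSol α y) (hα : 0 < α) {s t : ℝ} (hs : 0 ≤ s) (hst : s ≤ t) :
    y s - y t ≤ α * (Real.exp α - 1) * (t - s) := by
  have hB : 0 < α * (Real.exp α - 1) := by
    have := Real.one_lt_exp_iff.2 hα
    exact mul_pos hα (by linarith)
  have h1 : ∀ s t, 1 ≤ s → s ≤ t → y s - y t ≤ α * (Real.exp α - 1) * (t - s) := by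
    intro s t hs hst
    rcases hst.eq_or_lt with rfl | hst
    · simp
    obtain ⟨ξ, hξ, he⟩ := exists_hasDerivAt_eq_slope y _ hst h.cont.continuousOn
      (fun r hr => h.deriv r (by linarith [hr.1]))
    have h2 : 0 < t - s := by linarith
    rw [eq_div_iff h2.ne'] at he
    have h3 : Real.exp (y (ξ - 1)) ≤ Real.exp α :=
      Real.exp_le_exp.2 (h.le hα (by linarith [hξ.1]))
    have h4 : α * (Real.exp (y (ξ - 1)) - 1) ≤ α * (Real.exp α - 1) :=
      mul_le_mul_of_nonneg_left (by linarith) hα.le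
    have := mul_le_mul_of_nonneg_right h4 h2.le
    linarith
  rcases le_total 1 s with h1s | h1s
  · exact h1 s t h1s hst
  rcases le_total t 1 with ht | ht
  · rw [h.start s hs h1s, h.start t (hs.trans hst) ht]
    have : 0 ≤ (α * (Real.exp α - 1)) * (t - s) := mul_nonneg hB.le (by linarith)
    nlinarith
  · have := h1 1 t le_rfl ht
    rw [h.start 1 zero_le_one le_rfl] at this
    rw [h.start s hs h1s]
    have : 0 ≤ (α * (Real.exp α - 1)) * (1 - s) := mul_nonneg hB.le (by linarith)
    nlinarith

lemma WrightSol.neg_le (h : WrightSol α y) (hα : 0 < α) {t : ℝ} (ht : 0 ≤ t) :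
    -y t ≤ α * (Real.exp α - 1) := by
  have hB : 0 < α * (Real.exp α - 1) := by
    have := Real.one_lt_exp_iff.2 hα
    exact mul_pos hα (by linarith)
  refine le_of_slope (f := fun t => -y t) hB.le h.cont.neg (by simp [h.zero]) ?_
    (fun t ht => (h.deriv t ht).neg) ?_ ht
  · intro s t hs hst
    have := h.slope_ge hα hs hst
    linarith
  · intro t _ hp
    have := Real.exp_lt_one_iff.2 (neg_pos.1 hp)
    nlinarith

/-- Uniform bound and Lipschitz constant for the solution on `[0, ∞)`. -/
lemma WrightSol.exists_bound (h : WrightSol α y) (hα : 0 < α) :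
    ∃ B : ℝ, 0 < B ∧ (∀ t, 0 ≤ t → |y t| ≤ B) ∧
      ∀ s t, 0 ≤ s → 0 ≤ t → |y t - y s| ≤ B * |t - s| := by
  refine ⟨max α (α * (Real.exp α - 1)), lt_max_of_lt_left hα, ?_, ?_⟩
  · intro t ht
    rw [abs_le]
    have h1 := h.le hα ht
    have h2 := h.neg_le hα ht
    have h3 := le_max_left α (α * (Real.exp α - 1))
    have h4 := le_max_right α (α * (Real.exp α - 1))
    constructor <;> linarith
  · have key : ∀ s t, 0 ≤ s → s ≤ t →
        |y t - y s| ≤ max α (α * (Real.exp α - 1)) * (t - s) := by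
      intro s t hs hst
      have h0 : 0 ≤ t - s := by linarith
      have h1 := h.slope_le hα hs hst
      have h2 := h.slope_ge hα hs hst
      have h3 := mul_le_mul_of_nonneg_right (le_max_left α (α * (Real.exp α - 1))) h0
      have h4 := mul_le_mul_of_nonneg_right (le_max_right α (α * (Real.exp α - 1))) h0
      rw [abs_le]
      constructor <;> linarith
    intro s t hs ht
    rcases le_total s t with hst | hst
    · rw [abs_of_nonneg (sub_nonneg.2 hst)]
      exact key s t hs hst
    · rw [abs_sub_comm, abs_sub_comm t s, abs_of_nonneg (sub_nonneg.2 hst)]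
      exact key t s ht hst

lemma WrightSol.zeros_sep (h : WrightSol α y) (hα : 0 < α) {a b : ℝ} (ha : 0 ≤ a) (hab : a < b)
    (hya : y a = 0) (hyb : y b = 0) : a + 1 < b := by
  refine zeros_separated (f := fun t => -y t) h.cont.neg ?_ (fun t ht => (h.deriv t ht).neg) ?_ ?_
    ha hab (by simp [hya]) (by simp [hyb])
  · intro s hs t ht hst
    simp only
    rw [h.start s hs.1 hs.2, h.start t ht.1 ht.2]
    nlinarith
  · intro t _ hp
    have := Real.exp_lt_one_iff.2 (neg_pos.1 hp)
    nlinarith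
  · intro t _ hp
    have := Real.one_lt_exp_iff.2 (neg_lt_zero.1 hp)
    nlinarith

/-- The difference of the solution with a time shift of itself also has separated zeros. This is
the reason for the initial slope `α`: it exceeds every later slope, so the difference is strictly
decreasing on `[0, 1]`. -/
lemma WrightSol.diff_zeros_sep (h : WrightSol α y) (hα : 0 < α) {c a b : ℝ} (hc : 1 ≤ c)
    (ha : 0 ≤ a) (hab : a < b) (hya : y (a + c) = y a) (hyb : y (b + c) = y b) : a + 1 < b := by
  refine zeros_separated (f := fun t => y (t + c) - y t)
    (f' := fun t => α * (1 - Real.exp (y (t + c - 1))) - α * (1 - Real.exp (y (t - 1))))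
    ((h.cont.comp (continuous_add_const c)).sub h.cont) ?_ ?_ ?_ ?_
    ha hab (by simp [hya]) (by simp [hyb])
  · intro s hs t ht hst
    simp only
    rw [h.start s hs.1 hs.2, h.start t ht.1 ht.2]
    have := h.slope_lt hα (s := s + c) (t := t + c) (by linarith [hs.1]) (by linarith)
    nlinarith
  · intro t ht
    exact ((h.deriv (t + c) (by linarith)).comp_add_const t c).sub (h.deriv t ht)
  · intro t _ hp
    have : Real.exp (y (t - 1)) < Real.exp (y (t - 1 + c)) := Real.exp_lt_exp.2 (by linarith)
    rw [show t - 1 + c = t + c - 1 by ring] at this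
    nlinarith
  · intro t _ hp
    have : Real.exp (y (t - 1 + c)) < Real.exp (y (t - 1)) := Real.exp_lt_exp.2 (by linarith)
    rw [show t - 1 + c = t + c - 1 by ring] at this
    nlinarith

/-- For `α > 1` the feedback `α |exp u - 1|` dominates `min |u| δ` for some `δ > 0`. -/
lemma exists_feedback (hα : 1 < α) : ∃ δ > 0, ∀ σ : ℝ, (σ = 1 ∨ σ = -1) → ∀ u, 0 ≤ u →
    min u δ ≤ σ * (α * (Real.exp (σ * u) - 1)) := by
  have hα0 : 0 < α := by linarith
  -- `exp (-u) ≤ 1 / (1 + u)`, hence `α (1 - exp (-u)) ≥ α u / (1 + u) ≥ u` for `u ≤ α - 1`.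
  have key : ∀ u, 0 ≤ u → u ≤ α - 1 → u ≤ α * (1 - Real.exp (-u)) := by
    intro u hu hu1
    have h1 : Real.exp (-u) ≤ 1 / (1 + u) := by
      rw [Real.exp_neg, ← one_div]
      exact one_div_le_one_div_of_le (by linarith) (by linarith [Real.add_one_le_exp u])
    have h2 : α * (1 - 1 / (1 + u)) ≤ α * (1 - Real.exp (-u)) :=
      mul_le_mul_of_nonneg_left (by linarith) hα0.le
    have h3 : u ≤ α * (1 - 1 / (1 + u)) := by
      have : α * (1 - 1 / (1 + u)) = α * u / (1 + u) := by field_simp; ring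
      rw [this, le_div_iff₀ (by linarith)]
      nlinarith
    linarith
  refine ⟨α - 1, by linarith, ?_⟩
  rintro σ (rfl | rfl) u hu
  · have := Real.add_one_le_exp u
    have h1 : min u (α - 1) ≤ u := min_le_left _ _
    have h2 : u ≤ α * u := by nlinarith
    have h3 : α * u ≤ α * (Real.exp u - 1) := mul_le_mul_of_nonneg_left (by linarith) hα0.le
    simp only [one_mul]
    linarith
  · have h0 : 0 ≤ min u (α - 1) := le_min hu (by linarith)
    have h1 := key (min u (α - 1)) h0 (min_le_right _ _)
    have h2 : Real.exp (-u) ≤ Real.exp (-(min u (α - 1))) :=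
      Real.exp_le_exp.2 (by linarith [min_le_left u (α - 1)])
    have h3 : α * (1 - Real.exp (-(min u (α - 1)))) ≤ α * (1 - Real.exp (-u)) :=
      mul_le_mul_of_nonneg_left (by linarith) hα0.le
    rw [neg_one_mul, neg_one_mul]
    linarith

lemma sign_feedback (hα : 0 < α) {σ u : ℝ} (hσ : σ = 1 ∨ σ = -1) (hu : 0 < σ * u) :
    σ * (α * (1 - Real.exp u)) < 0 := by
  rcases hσ with rfl | rfl
  · have := Real.one_lt_exp_iff.2 (show 0 < u by linarith)
    nlinarith
  · have := Real.exp_lt_one_iff.2 (show u < 0 by linarith)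
    nlinarith

/-- After an interval `(p, q)` with `σ y > 0`, the function `σ y` decreases strictly. -/
lemma WrightSol.strictAnti (h : WrightSol α y) (hα : 0 < α) {σ p q : ℝ} (hσ : σ = 1 ∨ σ = -1)
    (hp : 0 ≤ p) (hpos : ∀ t, p < t → t < q → 0 < σ * y t) :
    StrictAntiOn (fun t => σ * y t) (Icc (p + 1) (q + 1)) := by
  apply strictAntiOn_of_deriv_neg (convex_Icc _ _) (by have := h.cont; fun_prop)
  intro t ht
  rw [interior_Icc] at ht
  rw [((h.deriv t (by linarith [ht.1])).const_mul σ).deriv]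
  exact sign_feedback hα hσ (hpos _ (by linarith [ht.1]) (by linarith [ht.2]))

/-- The solution keeps no sign for longer than some time `K`: by `exists_feedback`, while `σ y > 0`
each unit of time lowers `σ y` by `δ`. -/
lemma WrightSol.exists_gap (h : WrightSol α y) (hα : 1 < α) :
    ∃ K : ℝ, 0 < K ∧ ∀ σ : ℝ, (σ = 1 ∨ σ = -1) → ∀ z, 0 ≤ z →
      ¬ ∀ t, z < t → t ≤ z + K → 0 < σ * y t := by
  have hα0 : 0 < α := by linarith
  obtain ⟨B, hB, hyB, -⟩ := h.exists_bound hα0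
  obtain ⟨δ, hδ, hfb⟩ := exists_feedback hα
  obtain ⟨N, hN⟩ := exists_nat_gt (B / δ)
  rw [div_lt_iff₀ hδ] at hN
  refine ⟨N + 3, by positivity, ?_⟩
  intro σ hσ z hz hpos
  have hσσ : σ * σ = 1 := by rcases hσ with rfl | rfl <;> norm_num
  have hanti : StrictAntiOn (fun t => σ * y t) (Icc (z + 1) (z + (N + 3) + 1)) :=
    h.strictAnti hα0 hσ hz (fun t h1 h2 => hpos t h1 h2.le)
  have hstep : ∀ t, z + 2 ≤ t → t + 1 ≤ z + (N + 3) →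
      σ * y (t + 1) ≤ σ * y t - min (σ * y t) δ := by
    intro t ht1 ht2
    obtain ⟨ξ, hξ, he⟩ := exists_hasDerivAt_eq_slope (fun t => σ * y t) _ (lt_add_one t)
      (by have := h.cont; fun_prop) (fun r hr => (h.deriv r (by linarith [hr.1])).const_mul σ)
    have h1 : σ * y t ≤ σ * y (ξ - 1) :=
      hanti.antitoneOn ⟨by linarith [hξ.1], by linarith [hξ.2]⟩ ⟨by linarith, by linarith⟩
        (by linarith [hξ.2])
    have h2 := hfb σ hσ (σ * y (ξ - 1))
      (hpos _ (by linarith [hξ.1]) (by linarith [hξ.2])).le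
    rw [← mul_assoc σ σ, hσσ, one_mul] at h2
    have h3 : min (σ * y t) δ ≤ min (σ * y (ξ - 1)) δ := min_le_min_right _ h1
    simp only [add_sub_cancel_left, div_one] at he
    nlinarith
  have hind : ∀ k : ℕ, k ≤ N → σ * y (z + 2 + k) ≤ B - k * δ := by
    intro k
    induction k with
    | zero =>
      intro _
      have := hyB (z + 2) (by linarith)
      have h2 := abs_le.1 this
      simp only [Nat.cast_zero, add_zero, zero_mul, sub_zero]
      rcases hσ with rfl | rfl <;> linarith
    | succ k ih =>
      intro hk
      have hk' : (k : ℝ) + 1 ≤ N := by exact_mod_cast hk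
      have h0 : (0 : ℝ) ≤ k := by positivity
      have h1 := ih (by omega)
      have h2 := hstep (z + 2 + k) (by linarith) (by linarith)
      have h3 := hpos (z + 2 + k + 1) (by linarith) (by linarith)
      have h4 : min (σ * y (z + 2 + k)) δ = δ := by
        rcases min_choice (σ * y (z + 2 + k)) δ with h | h
        · rw [h] at h2; linarith
        · exact h
      rw [h4] at h2
      push_cast
      rw [← add_assoc]
      linarith
  have h1 := hind N le_rfl
  have h0 : (0 : ℝ) ≤ N := by positivity
  have h2 := hpos (z + 2 + N) (by linarith) (by linarith)
  linarith

lemma WrightSol.exists_next (h : WrightSol α y) (hα : 1 < α) :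
    ∃ K : ℝ, ∀ z, 0 ≤ z → y z = 0 →
      ∃ z', z + 1 < z' ∧ z' ≤ z + K ∧ y z' = 0 ∧ ∀ t, z < t → t < z' → y t ≠ 0 := by
  have hα0 : 0 < α := by linarith
  obtain ⟨K, hK, hgap⟩ := h.exists_gap hα
  refine ⟨K + 1, fun z hz hyz => ?_⟩
  have hex : ∃ t, z < t ∧ t ≤ z + (K + 1) ∧ y t = 0 := by
    by_contra hcon
    push Not at hcon
    -- a nonvanishing continuous function on the interval has constant sign
    have hz1 : z < z + (K + 1) := by linarith
    rcases lt_or_gt_of_ne (hcon (z + (K + 1)) hz1 le_rfl) with hs | hs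
    · apply hgap (-1) (Or.inr rfl) z hz
      intro t ht1 ht2
      by_contra hneg
      obtain ⟨q, hq, hq0⟩ := intermediate_value_Icc' (show t ≤ z + (K + 1) by linarith)
        h.cont.continuousOn ⟨hs.le, show (0 : ℝ) ≤ y t by linarith⟩
      exact hcon q (by linarith [hq.1]) hq.2 hq0
    · apply hgap 1 (Or.inl rfl) z hz
      intro t ht1 ht2
      by_contra hneg
      obtain ⟨q, hq, hq0⟩ := intermediate_value_Icc (show t ≤ z + (K + 1) by linarith)
        h.cont.continuousOn ⟨show y t ≤ (0 : ℝ) by linarith, hs.le⟩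
      exact hcon q (by linarith [hq.1]) hq.2 hq0
  obtain ⟨t, ht1, ht2, ht0⟩ := hex
  let S := {s | s ∈ Icc (z + 1) (z + (K + 1)) ∧ y s = 0}
  have hS : IsCompact S := isCompact_Icc.inter_right (isClosed_eq h.cont continuous_const)
  have ht3 := h.zeros_sep hα0 hz ht1 hyz ht0
  obtain ⟨s, ⟨hs, hs0⟩, hmin⟩ := hS.exists_isMinOn ⟨t, ⟨ht3.le, ht2⟩, ht0⟩ continuousOn_id
  refine ⟨s, h.zeros_sep hα0 hz (by linarith [hs.1]) hyz hs0, hs.2, hs0, ?_⟩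
  intro r hr1 hr2 hr0
  have h1 := h.zeros_sep hα0 hz hr1 hyz hr0
  have : s ≤ r := hmin ⟨⟨h1.le, by linarith [hs.2]⟩, hr0⟩
  linarith

/-- `z` enumerates the zeros of `y` on `[0, ∞)`, with gaps in `(1, K]` and alternating signs of `y`
in between. The extrema of `y` are then at the times `z n + 1`. -/
structure Zeros (y : ℝ → ℝ) (z : ℕ → ℝ) (K : ℝ) : Prop where
  zero : z 0 = 0
  root : ∀ n, y (z n) = 0
  gap : ∀ n, z n + 1 < z (n + 1)
  gap_le : ∀ n, z (n + 1) ≤ z n + K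
  sign : ∀ n t, z n < t → t < z (n + 1) → 0 < (-1) ^ n * y t

lemma neg_one_pow_or (n : ℕ) : ((-1 : ℝ) ^ n = 1 ∨ (-1 : ℝ) ^ n = -1) := neg_one_pow_eq_or ℝ n

/-- Constant sign on an interval where `f` does not vanish, from the sign at one point. -/
lemma pos_of_ne_zero {f : ℝ → ℝ} (hf : Continuous f) {p q s : ℝ}
    (hne : ∀ t, p < t → t < q → f t ≠ 0) (hs : p < s) (hsq : s < q) (hfs : 0 < f s) :
    ∀ t, p < t → t < q → 0 < f t := by
  intro t ht htq
  by_contra hneg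
  push Not at hneg
  have := (isPreconnected_Ioo (a := p) (b := q)).intermediate_value ⟨ht, htq⟩ ⟨hs, hsq⟩
    hf.continuousOn ⟨hneg, hfs.le⟩
  obtain ⟨r, hr, hr0⟩ := this
  exact hne r hr.1 hr.2 hr0

lemma WrightSol.exists_zeros (h : WrightSol α y) (hα : 1 < α) : ∃ z K, Zeros y z K := by
  have hα0 : 0 < α := by linarith
  obtain ⟨K, hK⟩ := h.exists_next hα
  choose! nx h1 h2 h3 h4 using hK
  let z : ℕ → ℝ := fun n => nx^[n] 0
  have hsucc : ∀ n, z (n + 1) = nx (z n) := fun n => Function.iterate_succ_apply' nx n 0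
  have hz : ∀ n, 0 ≤ z n ∧ y (z n) = 0 := by
    intro n
    induction n with
    | zero => exact ⟨le_rfl, h.zero⟩
    | succ n ih =>
      rw [hsucc]
      exact ⟨by linarith [h1 _ ih.1 ih.2, ih.1], h3 _ ih.1 ih.2⟩
  have hgap : ∀ n, z n + 1 < z (n + 1) := fun n => by rw [hsucc]; exact h1 _ (hz n).1 (hz n).2
  refine ⟨z, K, rfl, fun n => (hz n).2, hgap, fun n => ?_, ?_⟩
  · rw [hsucc]; exact h2 _ (hz n).1 (hz n).2
  intro n
  have hne : ∀ n t, z n < t → t < z (n + 1) → (-1 : ℝ) ^ n * y t ≠ 0 := by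
    intro n t ht1 ht2
    rw [hsucc] at ht2
    exact mul_ne_zero (pow_ne_zero _ (by norm_num)) (h4 _ (hz n).1 (hz n).2 t ht1 ht2)
  have hcont : ∀ n : ℕ, Continuous fun t => (-1 : ℝ) ^ n * y t := fun n => by
    have := h.cont; fun_prop
  induction n with
  | zero =>
    apply pos_of_ne_zero (hcont 0) (hne 0) (s := 1)
    · simp [z]
    · have := hgap 0
      simp only [z, Function.iterate_zero, id] at this ⊢
      linarith
    · rw [h.start 1 zero_le_one le_rfl]
      simpa using hα0
  | succ n ih =>
    -- `(-1)^n y` is strictly decreasing on `[z n + 1, z (n+1) + 1]`, which contains `z (n+1)`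
    have hanti := h.strictAnti hα0 (neg_one_pow_or n) (hz n).1 ih
    have := hgap n
    have h5 := hanti ⟨this.le, by linarith⟩ ⟨by linarith, le_rfl⟩ (lt_add_one (z (n + 1)))
    simp only [(hz (n + 1)).2, mul_zero] at h5
    apply pos_of_ne_zero (hcont (n + 1)) (hne (n + 1)) (s := z (n + 1) + 1)
    · linarith
    · exact hgap (n + 1)
    · rw [pow_succ]; linarith

/-! ### Nested half-turns -/

variable {z : ℕ → ℝ} {K : ℝ}

lemma Zeros.nonneg (hz : Zeros y z K) (n : ℕ) : 0 ≤ z n := by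
  induction n with
  | zero => rw [hz.zero]
  | succ n ih => linarith [hz.gap n]

lemma Zeros.natCast_le (hz : Zeros y z K) (n : ℕ) : (n : ℝ) ≤ z n := by
  induction n with
  | zero => simp [hz.zero]
  | succ n ih => push_cast; linarith [hz.gap n]

lemma Zeros.strictAnti (hz : Zeros y z K) (h : WrightSol α y) (hα : 0 < α) (n : ℕ) :
    StrictAntiOn (fun t => (-1) ^ n * y t) (Icc (z n + 1) (z (n + 1) + 1)) :=
  h.strictAnti hα (neg_one_pow_or n) (hz.nonneg n) (hz.sign n)

/-- The amplitude of the `n`-th extremum. -/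
def amp (y : ℝ → ℝ) (z : ℕ → ℝ) (n : ℕ) : ℝ := (-1) ^ n * y (z n + 1)

lemma Zeros.amp_pos (hz : Zeros y z K) (n : ℕ) : 0 < amp y z n :=
  hz.sign n _ (lt_add_one _) (hz.gap n)

/-- A continuous strictly decreasing function on a segment has a continuous inverse. -/
lemma exists_inverse {f : ℝ → ℝ} (hf : Continuous f) {p q : ℝ} (hpq : p ≤ q)
    (hanti : StrictAntiOn f (Icc p q)) :
    ∃ g : ℝ → ℝ, ContinuousOn g (Icc (f q) (f p)) ∧
      ∀ u ∈ Icc (f q) (f p), g u ∈ Icc p q ∧ f (g u) = u := by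
  have himg : ∀ u ∈ Icc (f q) (f p), ∃ t ∈ Icc p q, f t = u := fun u hu =>
    intermediate_value_Icc' hpq hf.continuousOn hu
  choose! g hg hfg using himg
  refine ⟨g, ?_, fun u hu => ⟨hg u hu, hfg u hu⟩⟩
  rw [continuousOn_iff_continuous_domRestrict]
  -- `f` restricts to a continuous bijection from a compact space
  let e : Icc p q ≃ Icc (f q) (f p) :=
    { toFun := fun t => ⟨f t, hanti.antitoneOn t.2 ⟨hpq, le_rfl⟩ t.2.2,
        hanti.antitoneOn ⟨le_rfl, hpq⟩ t.2 t.2.1⟩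
      invFun := fun u => ⟨g u, hg u u.2⟩
      left_inv := fun t => Subtype.ext <| hanti.injOn
        (hg _ ⟨hanti.antitoneOn t.2 ⟨hpq, le_rfl⟩ t.2.2,
        hanti.antitoneOn ⟨le_rfl, hpq⟩ t.2 t.2.1⟩) t.2 (hfg _ ⟨hanti.antitoneOn t.2 ⟨hpq, le_rfl⟩ t.2.2,
        hanti.antitoneOn ⟨le_rfl, hpq⟩ t.2 t.2.1⟩)
      right_inv := fun u => Subtype.ext (hfg u u.2) }
  have he : Continuous e := Continuous.subtype_mk (hf.comp continuous_subtype_val) _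
  have h2 := (he.homeoOfEquivCompactToT2).symm.continuous
  exact continuous_subtype_val.comp h2

/-- The planar curve `t ↦ (y t, y (t - 1))` does not cross itself, so its turns are nested: if one
half-turn starts inside the half-turn two steps before, it also ends inside it. The initial slope `α`,
larger than all later ones, starts the induction. -/
lemma Zeros.amp_lt (hz : Zeros y z K) (h : WrightSol α y) (hα : 0 < α) (n : ℕ) :
    amp y z (n + 2) < amp y z n := by
  induction n with
  | zero =>
    have h1 : 1 ≤ z 2 := by linarith [hz.nonneg 1, hz.gap 1]
    have := h.slope_lt hα h1 (lt_add_one (z 2))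
    rw [hz.root 2] at this
    have h2 := h.start 1 zero_le_one le_rfl
    simp only [amp, hz.zero, zero_add, h2, pow_zero]
    norm_num
    linarith
  | succ n ih =>
    by_contra hcon
    push Not at hcon
    set a : ℝ → ℝ := fun t => (-1) ^ n * y t with ha
    have hac : Continuous a := by have := h.cont; fun_prop
    have hp2 : (-1 : ℝ) ^ (n + 2) = (-1) ^ n := by rw [pow_add]; norm_num
    have anti1 : StrictAntiOn a (Icc (z n + 1) (z (n + 1) + 1)) := hz.strictAnti h hα n
    have anti2 : StrictAntiOn a (Icc (z (n + 2) + 1) (z (n + 3) + 1)) := by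
      have := hz.strictAnti h hα (n + 2)
      rwa [hp2] at this
    have sign1 : ∀ t, z n < t → t < z (n + 1) → 0 < a t := hz.sign n
    have sign2 : ∀ t, z (n + 2) < t → t < z (n + 3) → 0 < a t := by
      have := hz.sign (n + 2)
      rwa [hp2] at this
    have root : ∀ m, a (z m) = 0 := fun m => by simp [ha, hz.root]
    have e0 : a (z n + 1) = amp y z n := rfl
    have e1 : a (z (n + 1) + 1) = -amp y z (n + 1) := by simp only [ha, amp, pow_succ]; ring
    have e2 : a (z (n + 2) + 1) = amp y z (n + 2) := by simp only [ha, amp, pow_succ]; ring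
    have e3 : a (z (n + 3) + 1) = -amp y z (n + 3) := by simp only [ha, amp, pow_succ]; ring
    have g0 := hz.gap n
    have g1 : z (n + 1) + 1 < z (n + 2) := hz.gap (n + 1)
    have g2 : z (n + 2) + 1 < z (n + 3) := hz.gap (n + 2)
    have p1 := hz.amp_pos (n + 1)
    have p2 := hz.amp_pos (n + 2)
    have hcon' : amp y z (n + 1) ≤ amp y z (n + 3) := hcon
    -- both half-turns are graphs over the first coordinate `u`: at heights `a (T u - 1)` and
    -- `a (S u - 1)`
    obtain ⟨T, hTc, hT⟩ := exists_inverse hac (by linarith) anti1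
    obtain ⟨S, hSc, hS⟩ := exists_inverse hac (by linarith) anti2
    rw [e0, e1] at hTc hT
    rw [e2, e3] at hSc hS
    have hle : -amp y z (n + 1) ≤ amp y z (n + 2) := by linarith
    have sub1 : Icc (-amp y z (n + 1)) (amp y z (n + 2)) ⊆ Icc (-amp y z (n + 1)) (amp y z n) :=
      Icc_subset_Icc le_rfl ih.le
    have sub2 : Icc (-amp y z (n + 1)) (amp y z (n + 2)) ⊆
        Icc (-amp y z (n + 3)) (amp y z (n + 2)) := Icc_subset_Icc (by linarith) le_rfl
    have hD : ContinuousOn (fun u => a (S u - 1) - a (T u - 1))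
        (Icc (-amp y z (n + 1)) (amp y z (n + 2))) :=
      (hac.comp_continuousOn ((hSc.mono sub2).sub continuousOn_const)).sub
        (hac.comp_continuousOn ((hTc.mono sub1).sub continuousOn_const))
    have hr : (amp y z (n + 2)) ∈ Icc (-amp y z (n + 1)) (amp y z (n + 2)) := ⟨hle, le_rfl⟩
    have hl : (-amp y z (n + 1)) ∈ Icc (-amp y z (n + 1)) (amp y z (n + 2)) := ⟨le_rfl, hle⟩
    have hDr : a (S (amp y z (n + 2)) - 1) - a (T (amp y z (n + 2)) - 1) ≤ 0 := by
      obtain ⟨hs1, hs2⟩ := hS _ (sub2 hr)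
      obtain ⟨ht1, ht2⟩ := hT _ (sub1 hr)
      have hs3 : S (amp y z (n + 2)) = z (n + 2) + 1 :=
        anti2.injOn hs1 ⟨le_rfl, by linarith⟩ (by rw [hs2, e2])
      have h4 : 0 ≤ a (T (amp y z (n + 2)) - 1) := by
        rcases eq_or_lt_of_le ht1.1 with h5 | h5
        · rw [← h5, add_sub_cancel_right, root]
        rcases eq_or_lt_of_le ht1.2 with h6 | h6
        · rw [h6, add_sub_cancel_right, root]
        exact (sign1 _ (by linarith) (by linarith)).le
      rw [hs3, add_sub_cancel_right, root]
      linarith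
    have hDl : 0 ≤ a (S (-amp y z (n + 1)) - 1) - a (T (-amp y z (n + 1)) - 1) := by
      obtain ⟨hs1, hs2⟩ := hS _ (sub2 hl)
      obtain ⟨ht1, ht2⟩ := hT _ (sub1 hl)
      have ht3 : T (-amp y z (n + 1)) = z (n + 1) + 1 :=
        anti1.injOn ht1 ⟨by linarith, le_rfl⟩ (by rw [ht2, e1])
      have h4 : 0 ≤ a (S (-amp y z (n + 1)) - 1) := by
        rcases eq_or_lt_of_le hs1.1 with h5 | h5
        · rw [← h5, add_sub_cancel_right, root]
        rcases eq_or_lt_of_le hs1.2 with h6 | h6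
        · rw [h6, add_sub_cancel_right, root]
        exact (sign2 _ (by linarith) (by linarith)).le
      rw [ht3, add_sub_cancel_right, root]
      linarith
    obtain ⟨u, hu, hu0⟩ := intermediate_value_Icc' hle hD ⟨hDr, hDl⟩
    obtain ⟨hs1, hs2⟩ := hS _ (sub2 hu)
    obtain ⟨ht1, ht2⟩ := hT _ (sub1 hu)
    have hinj : ∀ s t, a s = a t → y s = y t := fun s t hst =>
      mul_left_cancel₀ (pow_ne_zero n (by norm_num)) hst
    -- a crossing of the two half-turns is a pair of zeros of a difference at distance one
    have := h.diff_zeros_sep hα (c := S u - T u) (a := T u - 1) (b := T u)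
      (by linarith [hs1.1, ht1.2]) (by linarith [ht1.1, hz.nonneg n]) (by linarith)
      (hinj _ _ (by rw [show T u - 1 + (S u - T u) = S u - 1 by ring]; linarith))
      (hinj _ _ (by rw [show T u + (S u - T u) = S u by ring, hs2, ht2]))
    linarith

/-! ### Instability of the zero solution -/

/-- For `α > π / 2` the characteristic equation `l = -α exp (-l)` of the linearization at `0` has a
root `l = μ + i ω` with `μ > 0` and `0 < ω < π`. -/
lemma exists_eigenvalue (hα : Real.pi / 2 < α) :
    ∃ l : ℂ, 0 < l.re ∧ 0 < l.im ∧ l.im < Real.pi ∧ l * Complex.exp l = -α := by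
  have hpi := Real.pi_gt_three
  have hα1 : 1 < α := by linarith
  have hinv : 1 / α < 1 := by rw [div_lt_one (by linarith)]; exact hα1
  have hinv0 : 0 < 1 / α := by positivity
  -- for `l = -w cot w + i w` the number `l exp l` is `-φ w`
  set φ : ℝ → ℝ := fun w => w / Real.sin w * Real.exp (-(w * Real.cos w / Real.sin w)) with hφ
  have hsin : ∀ w ∈ Icc (Real.pi / 2) (Real.pi - 1 / α), 0 < Real.sin w := fun w hw =>
    Real.sin_pos_of_pos_of_lt_pi (by linarith [hw.1]) (by linarith [hw.2])
  have hle : Real.pi / 2 ≤ Real.pi - 1 / α := by linarith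
  have hcont : ContinuousOn φ (Icc (Real.pi / 2) (Real.pi - 1 / α)) := by
    intro w hw
    have hw0 := (hsin w hw).ne'
    apply ContinuousAt.continuousWithinAt
    simp only [hφ]
    fun_prop (disch := assumption)
  have h0 : φ (Real.pi / 2) ≤ α := by simp [hφ]; linarith
  have h1 : α ≤ φ (Real.pi - 1 / α) := by
    simp only [hφ, Real.sin_pi_sub, Real.cos_pi_sub]
    have hs : 0 < Real.sin (1 / α) := Real.sin_pos_of_pos_of_lt_pi hinv0 (by linarith)
    have hs2 : Real.sin (1 / α) ≤ 1 / α := Real.sin_le hinv0.le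
    have hc : 0 ≤ Real.cos (1 / α) :=
      Real.cos_nonneg_of_neg_pi_div_two_le_of_le (by linarith) (by linarith)
    have e1 : 1 ≤ Real.exp (-((Real.pi - 1 / α) * -Real.cos (1 / α) / Real.sin (1 / α))) := by
      apply Real.one_le_exp
      rw [mul_neg, neg_div, neg_neg]
      exact div_nonneg (mul_nonneg (by linarith) hc) hs.le
    have e2 : α ≤ (Real.pi - 1 / α) / Real.sin (1 / α) := by
      rw [le_div_iff₀ hs]
      have : α * Real.sin (1 / α) ≤ α * (1 / α) := mul_le_mul_of_nonneg_left hs2 (by linarith)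
      have h4 : α * (1 / α) = 1 := by field_simp
      linarith
    nlinarith
  obtain ⟨w, hw, hwα⟩ := intermediate_value_Icc hle hcont ⟨h0, h1⟩
  have hs := hsin w hw
  have hw2 : Real.pi / 2 < w := by
    rcases eq_or_lt_of_le hw.1 with h | h
    · rw [← h] at hwα; simp [hφ] at hwα; linarith
    · exact h
  have hc : Real.cos w < 0 := Real.cos_neg_of_pi_div_two_lt_of_lt hw2 (by linarith [hw.2])
  refine ⟨⟨-(w * Real.cos w / Real.sin w), w⟩, ?_, ?_, ?_, ?_⟩
  · simp only [Left.neg_pos_iff]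
    exact div_neg_of_neg_of_pos (mul_neg_of_pos_of_neg (by linarith) hc) hs
  · simp only; linarith
  · simp only; linarith [hw.2]
  · simp only [hφ] at hwα
    have hsq := Real.sin_sq_add_cos_sq w
    apply Complex.ext
    · rw [Complex.mul_re, Complex.exp_re, Complex.exp_im]
      simp only [Complex.neg_re, Complex.ofReal_re]
      rw [← hwα]
      field_simp
      linear_combination (-w) * hsq
    · rw [Complex.mul_im, Complex.exp_re, Complex.exp_im]
      simp only [Complex.neg_im, Complex.ofReal_im]
      field_simp
      ring

lemma Zeros.abs_le_amp (hz : Zeros y z K) (h : WrightSol α y) (hα : 0 < α) (n : ℕ) {t : ℝ}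
    (h1 : z (n + 1) ≤ t) (h2 : t ≤ z (n + 2)) : |y t| ≤ amp y z (n + 1) := by
  have g0 := hz.gap n
  have g1 : z (n + 1) + 1 < z (n + 2) := hz.gap (n + 1)
  have habs : |y t| = (-1) ^ (n + 1) * y t := by
    have hnn : 0 ≤ (-1) ^ (n + 1) * y t := by
      rcases eq_or_lt_of_le h1 with rfl | h1
      · simp [hz.root]
      rcases eq_or_lt_of_le h2 with rfl | h2
      · simp [hz.root]
      exact (hz.sign (n + 1) t h1 h2).le
    rw [← abs_of_nonneg hnn, abs_mul, abs_pow]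
    simp
  rw [habs, amp]
  rcases le_total t (z (n + 1) + 1) with h3 | h3
  · have := (hz.strictAnti h hα n).antitoneOn (a := t) (b := z (n + 1) + 1)
      ⟨by linarith, h3⟩ ⟨by linarith, le_rfl⟩ h3
    rw [pow_succ]
    linarith
  · exact (hz.strictAnti h hα (n + 1)).antitoneOn (a := z (n + 1) + 1) (b := t)
      ⟨le_rfl, by linarith⟩ ⟨h3, by linarith [show z (n + 1 + 1) = z (n + 2) from rfl]⟩ h3

/-- A small extremum is followed by one at most `2 α` times as large. -/
lemma Zeros.amp_succ_le (hz : Zeros y z K) (h : WrightSol α y) (hα : 0 < α) (n : ℕ)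
    (h1 : amp y z (n + 1) ≤ 1) : amp y z (n + 2) ≤ 2 * α * amp y z (n + 1) := by
  have g1 : z (n + 1) + 1 < z (n + 2) := hz.gap (n + 1)
  have g0 := hz.nonneg (n + 1)
  obtain ⟨ξ, hξ, he⟩ := exists_hasDerivAt_eq_slope y _ (lt_add_one (z (n + 2)))
    h.cont.continuousOn (fun r hr => h.deriv r (by linarith [hr.1]))
  rw [hz.root, add_sub_cancel_left, div_one, sub_zero] at he
  have h2 := hz.abs_le_amp h hα n (t := ξ - 1) (by linarith [hξ.1]) (by linarith [hξ.2])
  have h3 := Real.abs_exp_sub_one_le (h2.trans h1)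
  have h4 : amp y z (n + 2) ≤ |y (z (n + 2) + 1)| := by
    rw [amp]
    refine (le_abs_self _).trans ?_
    rw [abs_mul, abs_pow]
    simp
  rw [← he, abs_mul, abs_of_pos hα, abs_sub_comm] at h4
  have : α * |Real.exp (y (ξ - 1)) - 1| ≤ α * (2 * amp y z (n + 1)) :=
    mul_le_mul_of_nonneg_left (by linarith) hα.le
  linarith

/-- The primitive of `exp (-l s) y s`. -/
noncomputable def prim (l : ℂ) (y : ℝ → ℝ) (u : ℝ) : ℂ :=
  ∫ s in (0 : ℝ)..u, Complex.exp (-l * s) * y s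

/-- The spectral functional: `exp (l t)` times this is the component of the history of `y` at time
`t` along the eigenvalue `l` of the linearized equation. -/
noncomputable def spec (l : ℂ) (y : ℝ → ℝ) (t : ℝ) : ℂ :=
  Complex.exp (-l * t) * y t + l * (prim l y t - prim l y (t - 1))

lemma prim_hasDerivAt (l : ℂ) (hy : Continuous y) (t : ℝ) :
    HasDerivAt (prim l y) (Complex.exp (-l * t) * y t) t := by
  have hc : Continuous fun s : ℝ => Complex.exp (-l * s) * (y s : ℂ) := by fun_prop
  exact intervalIntegral.integral_hasDerivAt_right (hc.intervalIntegrable _ _)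
    hc.stronglyMeasurable.stronglyMeasurableAtFilter hc.continuousAt

lemma expmul_hasDerivAt (l : ℂ) (h : WrightSol α y) (t : ℝ) (ht : 1 < t) :
    HasDerivAt (fun t : ℝ => Complex.exp (-l * t) * y t)
      (Complex.exp (-l * t) * (-l) * y t +
        Complex.exp (-l * t) * ((α * (1 - Real.exp (y (t - 1))) : ℝ) : ℂ)) t := by
  have h1 : HasDerivAt (fun t : ℝ => -l * (t : ℂ)) (-l) t := by
    simpa using (Complex.ofRealCLM.hasDerivAt (x := t)).const_mul (-l)
  exact h1.cexp.mul (h.deriv t ht).ofReal_comp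

lemma spec_hasDerivAt {l : ℂ} (hl : l * Complex.exp l = -α) (h : WrightSol α y) (t : ℝ)
    (ht : 1 < t) :
    HasDerivAt (spec l y) (Complex.exp (-l * t) *
      ((α * (1 - Real.exp (y (t - 1))) + α * y (t - 1) : ℝ) : ℂ)) t := by
  have h2 := prim_hasDerivAt l h.cont t
  have h3 := (prim_hasDerivAt l h.cont (t - 1)).comp_sub_const t 1
  refine ((expmul_hasDerivAt l h t ht).add ((h2.sub h3).const_mul l)).congr_deriv ?_
  have h4 : Complex.exp (-l * ((t - 1 : ℝ) : ℂ)) = Complex.exp (-l * t) * Complex.exp l := by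
    rw [← Complex.exp_add]; congr 1; push_cast; ring
  rw [h4]
  push_cast
  linear_combination (-(Complex.exp (-l * t) * y (t - 1))) * hl

lemma norm_exp_neg_mul (l : ℂ) (t : ℝ) : ‖Complex.exp (-l * t)‖ = Real.exp (-l.re * t) := by
  rw [Complex.norm_exp]; simp

lemma sin_ge {d x : ℝ} (hd : 0 ≤ d) (h1 : d ≤ x) (h2 : x ≤ Real.pi - d) :
    Real.sin d ≤ Real.sin x := by
  rcases le_total x (Real.pi / 2) with h | h
  · exact Real.sin_le_sin_of_le_of_le_pi_div_two (by linarith [Real.pi_pos]) h h1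
  · rw [← Real.sin_pi_sub x]
    exact Real.sin_le_sin_of_le_of_le_pi_div_two (by linarith [Real.pi_pos]) (by linarith)
      (by linarith)

/-- At an extremum the spectral functional controls the amplitude: integrating by parts it is an
integral of the one-signed function `y'` against `exp (l θ)`, `0 ≤ θ ≤ 1`, and these values stay in
a sector as `0 < Im l < π`. -/
lemma spec_lower {l : ℂ} (hre : 0 < l.re) (him : 0 < l.im) (him' : l.im < Real.pi)
    (h : WrightSol α y) (hα : 0 < α) (hz : Zeros y z K) (n : ℕ) :
    Real.sin ((Real.pi - l.im) / 2) * amp y z (n + 1) ≤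
      Real.exp (l.re * (z (n + 1) + 1)) * ‖spec l y (z (n + 1) + 1)‖ := by
  set d := (Real.pi - l.im) / 2 with hd
  set p := z (n + 1) with hp
  set σ : ℝ := (-1) ^ (n + 1) with hσ
  have g0 := hz.gap n
  have gn := hz.nonneg n
  -- rotating by `d` centres the sector of the arguments `Im l θ` on the imaginary axis, so that the
  -- imaginary part bounds the modulus from below
  set E : ℂ := Complex.exp (d * Complex.I + l * ((p + 1 : ℝ) : ℂ)) * σ with hE
  let Q : ℝ → ℝ := fun t =>
    (E * (Complex.exp (-l * t) * y t + l * (prim l y t - prim l y p))).im - Real.sin d * (σ * y t)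
  have hQd : ∀ t : ℝ, 1 < t → HasDerivAt Q
      ((E * (Complex.exp (-l * t) * ((α * (1 - Real.exp (y (t - 1))) : ℝ) : ℂ))).im
        - Real.sin d * (σ * (α * (1 - Real.exp (y (t - 1)))))) t := by
    intro t ht
    have h1 := (((expmul_hasDerivAt l h t ht).add
      (((prim_hasDerivAt l h.cont t).sub_const (prim l y p)).const_mul l)).const_mul E)
    have h2 := Complex.imCLM.hasFDerivAt.comp_hasDerivAt t h1
    refine (h2.sub (((h.deriv t ht).const_mul σ).const_mul (Real.sin d))).congr_deriv ?_
    rw [Complex.imCLM_apply]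
    congr 3
    ring
  have hprim : Continuous (prim l y) :=
    continuous_iff_continuousAt.2 fun t => (prim_hasDerivAt l h.cont t).continuousAt
  have hQc : Continuous Q := by
    have := h.cont
    fun_prop
  have hmono : MonotoneOn Q (Icc p (p + 1)) := by
    apply monotoneOn_of_deriv_nonneg (convex_Icc _ _) hQc.continuousOn
    · intro t ht
      rw [interior_Icc] at ht
      exact (hQd t (by linarith [ht.1])).differentiableAt.differentiableWithinAt
    · intro t ht
      rw [interior_Icc] at ht
      rw [(hQd t (by linarith [ht.1])).deriv]
      have hs := sign_feedback hα (neg_one_pow_or n)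
        (hz.sign n (t - 1) (by linarith [ht.1]) (by linarith [ht.2]))
      have hs' : 0 ≤ σ * (α * (1 - Real.exp (y (t - 1)))) := by
        rw [hσ, pow_succ]; linarith
      have e1 : E * (Complex.exp (-l * t) * ((α * (1 - Real.exp (y (t - 1))) : ℝ) : ℂ)) =
          ((σ * (α * (1 - Real.exp (y (t - 1)))) : ℝ) : ℂ) *
            Complex.exp (d * Complex.I + l * ((p + 1 - t : ℝ) : ℂ)) := by
        have : Complex.exp (d * Complex.I + l * ((p + 1 - t : ℝ) : ℂ)) =
            Complex.exp (d * Complex.I + l * ((p + 1 : ℝ) : ℂ)) * Complex.exp (-l * t) := by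
          rw [← Complex.exp_add]; congr 1; push_cast; ring
        rw [this, hE]
        push_cast
        ring
      rw [e1, Complex.im_ofReal_mul, Complex.exp_im]
      have e2 : (d * Complex.I + l * ((p + 1 - t : ℝ) : ℂ)).re = l.re * (p + 1 - t) := by simp
      have e3 : (d * Complex.I + l * ((p + 1 - t : ℝ) : ℂ)).im = d + l.im * (p + 1 - t) := by simp
      rw [e2, e3]
      have u1 : 0 ≤ l.im * (p + 1 - t) := mul_nonneg him.le (by linarith [ht.2])
      have u2 : l.im * (p + 1 - t) ≤ l.im * 1 :=
        mul_le_mul_of_nonneg_left (by linarith [ht.1]) him.le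
      have s1 : Real.sin d ≤ Real.sin (d + l.im * (p + 1 - t)) :=
        sin_ge (by rw [hd]; linarith) (by linarith) (by rw [hd] at *; linarith)
      have s0 : 0 ≤ Real.sin d :=
        Real.sin_nonneg_of_nonneg_of_le_pi (by rw [hd]; linarith) (by rw [hd]; linarith)
      have s2 : 1 ≤ Real.exp (l.re * (p + 1 - t)) :=
        Real.one_le_exp (mul_nonneg hre.le (by linarith [ht.2]))
      have s3 : Real.sin d ≤ Real.exp (l.re * (p + 1 - t)) * Real.sin (d + l.im * (p + 1 - t)) := by
        nlinarith
      nlinarith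
  have hQ0 : Q p = 0 := by simp [Q, hp, hz.root]
  have hQ1 := hmono ⟨le_rfl, by linarith⟩ ⟨by linarith, le_rfl⟩ (show p ≤ p + 1 by linarith)
  rw [hQ0] at hQ1
  have hQe : Q (p + 1) = (E * spec l y (p + 1)).im - Real.sin d * amp y z (n + 1) := by
    simp only [Q, spec, amp, add_sub_cancel_right]
    rfl
  rw [hQe] at hQ1
  have hEn : ‖E‖ = Real.exp (l.re * (p + 1)) := by
    rw [hE, norm_mul, Complex.norm_exp, hσ]
    simp
  calc _ ≤ (E * spec l y (p + 1)).im := by linarith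
    _ ≤ ‖E * spec l y (p + 1)‖ := (le_abs_self _).trans (Complex.abs_im_le_norm _)
    _ = _ := by rw [norm_mul, hEn]

/-- Conversely the spectral functional at an extremum is bounded by a multiple of the amplitude. -/
lemma spec_upper {l : ℂ} (hre : 0 < l.re) (h : WrightSol α y) (hα : 0 < α) (hz : Zeros y z K)
    (n : ℕ) : Real.exp (l.re * (z (n + 1) + 1)) * ‖spec l y (z (n + 1) + 1)‖ ≤
      (1 + ‖l‖ * Real.exp l.re) * amp y z (n + 1) := by
  set p := z (n + 1) with hp
  have g1 : p + 1 < z (n + 2) := hz.gap (n + 1)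
  have hA := hz.amp_pos (n + 1)
  have hc : Continuous fun s : ℝ => Complex.exp (-l * s) * (y s : ℂ) := by
    have := h.cont; fun_prop
  have hprim : prim l y (p + 1) - prim l y p = ∫ s in p..(p + 1), Complex.exp (-l * s) * y s := by
    rw [prim, prim, intervalIntegral.integral_interval_sub_left] <;>
      exact hc.intervalIntegrable _ _
  have hint : ‖∫ s in p..(p + 1), Complex.exp (-l * s) * y s‖ ≤
      Real.exp (-l.re * p) * amp y z (n + 1) * |p + 1 - p| := by
    apply intervalIntegral.norm_integral_le_of_norm_le_const
    intro s hs
    rw [uIoc_of_le (by linarith)] at hs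
    rw [norm_mul, norm_exp_neg_mul, Complex.norm_real, Real.norm_eq_abs]
    apply mul_le_mul _ (hz.abs_le_amp h hα n hs.1.le (by linarith [hs.2])) (abs_nonneg _)
      (Real.exp_pos _).le
    apply Real.exp_le_exp.2
    nlinarith [hs.1]
  rw [add_sub_cancel_left, abs_one, mul_one, ← hprim] at hint
  have h1 : ‖spec l y (p + 1)‖ ≤ Real.exp (-l.re * (p + 1)) * amp y z (n + 1) +
      ‖l‖ * (Real.exp (-l.re * p) * amp y z (n + 1)) := by
    rw [spec, add_sub_cancel_right]
    refine (norm_add_le _ _).trans (add_le_add ?_ ?_)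
    · rw [norm_mul, norm_exp_neg_mul, Complex.norm_real, Real.norm_eq_abs]
      exact mul_le_mul_of_nonneg_left (hz.abs_le_amp h hα n (by linarith) g1.le)
        (Real.exp_pos _).le
    · rw [norm_mul]
      exact mul_le_mul_of_nonneg_left hint (norm_nonneg _)
  have h2 := mul_le_mul_of_nonneg_left h1 (Real.exp_pos (l.re * (p + 1))).le
  refine h2.trans (le_of_eq ?_)
  have e1 : Real.exp (l.re * (p + 1)) * Real.exp (-l.re * (p + 1)) = 1 := by
    rw [← Real.exp_add, ← Real.exp_zero]; congr 1; ring
  have e2 : Real.exp (l.re * (p + 1)) * Real.exp (-l.re * p) = Real.exp l.re := by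
    rw [← Real.exp_add]; congr 1; ring
  linear_combination amp y z (n + 1) * e1 + ‖l‖ * amp y z (n + 1) * e2

/-- Between consecutive extrema the spectral functional changes only by the quadratic remainder of
the nonlinearity. -/
lemma spec_step {l : ℂ} (hre : 0 < l.re) (hl : l * Complex.exp l = -α) (h : WrightSol α y)
    (hα : 0 < α) (hz : Zeros y z K) (n : ℕ) (h1 : amp y z (n + 1) ≤ 1) :
    Real.exp (l.re * (z (n + 1) + 1)) * ‖spec l y (z (n + 2) + 1) - spec l y (z (n + 1) + 1)‖ ≤
      α * K * amp y z (n + 1) ^ 2 := by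
  have g1 : z (n + 1) + 1 < z (n + 2) := hz.gap (n + 1)
  have g2 : z (n + 2) ≤ z (n + 1) + K := hz.gap_le (n + 1)
  have gn := hz.nonneg n
  have g0 := hz.gap n
  have hA := hz.amp_pos (n + 1)
  have key : ‖spec l y (z (n + 2) + 1) - spec l y (z (n + 1) + 1)‖ ≤
      (Real.exp (-l.re * (z (n + 1) + 1)) * (α * amp y z (n + 1) ^ 2)) *
        ‖(z (n + 2) + 1) - (z (n + 1) + 1)‖ := by
    apply Convex.norm_image_sub_le_of_norm_hasDerivWithin_le
      (s := Icc (z (n + 1) + 1) (z (n + 2) + 1))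
      (f' := fun t : ℝ => Complex.exp (-l * t) *
        ((α * (1 - Real.exp (y (t - 1))) + α * y (t - 1) : ℝ) : ℂ))
      (fun t ht => (spec_hasDerivAt hl h t (by linarith [ht.1])).hasDerivWithinAt) _
      (convex_Icc _ _) ⟨le_rfl, by linarith⟩ ⟨by linarith, le_rfl⟩
    intro t ht
    rw [norm_mul, norm_exp_neg_mul, Complex.norm_real, Real.norm_eq_abs]
    have a1 := hz.abs_le_amp h hα n (t := t - 1) (by linarith [ht.1]) (by linarith [ht.2])
    have a2 := Real.abs_exp_sub_one_sub_id_le (a1.trans h1)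
    have a3 : |α * (1 - Real.exp (y (t - 1))) + α * y (t - 1)| ≤ α * amp y z (n + 1) ^ 2 := by
      rw [show α * (1 - Real.exp (y (t - 1))) + α * y (t - 1) =
        α * -(Real.exp (y (t - 1)) - 1 - y (t - 1)) by ring, abs_mul, abs_neg, abs_of_pos hα]
      apply mul_le_mul_of_nonneg_left _ hα.le
      refine a2.trans ?_
      rw [← sq_abs]
      exact pow_le_pow_left₀ (abs_nonneg _) a1 2
    apply mul_le_mul _ a3 (abs_nonneg _) (Real.exp_pos _).le
    apply Real.exp_le_exp.2
    nlinarith [ht.1]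
  rw [Real.norm_eq_abs, abs_of_pos (by linarith)] at key
  have h2 := mul_le_mul_of_nonneg_left key (Real.exp_pos (l.re * (z (n + 1) + 1))).le
  refine h2.trans ?_
  have e1 : Real.exp (l.re * (z (n + 1) + 1)) * Real.exp (-l.re * (z (n + 1) + 1)) = 1 := by
    rw [← Real.exp_add, ← Real.exp_zero]; congr 1; ring
  rw [← mul_assoc, ← mul_assoc, e1, one_mul]
  have h5 : 0 ≤ α * amp y z (n + 1) ^ 2 := by positivity
  calc _ ≤ α * amp y z (n + 1) ^ 2 * K := mul_le_mul_of_nonneg_left (by linarith) h5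
    _ = _ := by ring

/-- Instability of the zero solution: the oscillation does not die out, because the unstable
spectral component is nondecreasing along small extrema. -/
lemma Zeros.not_tendsto (hz : Zeros y z K) (h : WrightSol α y) (hα : Real.pi / 2 < α) :
    ¬ Tendsto (amp y z) atTop (𝓝 0) := by
  intro hlim
  have hα0 : 0 < α := by linarith [Real.pi_pos]
  obtain ⟨l, hre, him, him', hl⟩ := exists_eigenvalue hα
  set s := Real.sin ((Real.pi - l.im) / 2) with hs
  have hs0 : 0 < s := Real.sin_pos_of_pos_of_lt_pi (by linarith) (by linarith)
  have hK : 0 < K := by linarith [hz.gap 0, hz.gap_le 0]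
  have hexp : Real.exp (-l.re) < 1 := Real.exp_lt_one_iff.2 (by linarith)
  -- below `η` the quadratic error is absorbed by the growth over one unit of time
  set η := s * (1 - Real.exp (-l.re)) / (α * K) with hη
  have hη0 : 0 < η := div_pos (mul_pos hs0 (by linarith)) (mul_pos hα0 hK)
  let U : ℕ → ℝ := fun n => Real.exp (l.re * (z (n + 1) + 1)) * ‖spec l y (z (n + 1) + 1)‖
  have hlim1 : Tendsto (fun n => amp y z (n + 1)) atTop (𝓝 0) := (tendsto_add_atTop_iff_nat 1).2 hlim
  have hsmall : ∀ᶠ n in atTop, amp y z (n + 1) < min 1 η :=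
    hlim1.eventually (gt_mem_nhds (lt_min one_pos hη0))
  obtain ⟨N, hN⟩ := eventually_atTop.1 hsmall
  have hstep : ∀ n, N ≤ n → U n ≤ U (n + 1) := by
    intro n hn
    have hA := hN n hn
    have hA0 := hz.amp_pos (n + 1)
    have hA1 : amp y z (n + 1) ≤ 1 := (hA.trans_le (min_le_left _ _)).le
    have hA2 : amp y z (n + 1) ≤ η := (hA.trans_le (min_le_right _ _)).le
    have hlow : s * amp y z (n + 1) ≤ U n := spec_lower hre him him' h hα0 hz n
    have hst := spec_step hre hl h hα0 hz n hA1
    have herr : α * K * amp y z (n + 1) ^ 2 ≤ (1 - Real.exp (-l.re)) * U n := by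
      have h1 : α * K * amp y z (n + 1) ≤ s * (1 - Real.exp (-l.re)) := by
        have := mul_le_mul_of_nonneg_left hA2 (mul_pos hα0 hK).le
        rwa [hη, mul_div_cancel₀ _ (mul_pos hα0 hK).ne'] at this
      have h2 := mul_le_mul_of_nonneg_right h1 hA0.le
      have h3 := mul_le_mul_of_nonneg_left hlow (show 0 ≤ 1 - Real.exp (-l.re) by linarith)
      nlinarith
    have hn1 : ‖spec l y (z (n + 1) + 1)‖ - ‖spec l y (z (n + 2) + 1)‖ ≤
        ‖spec l y (z (n + 2) + 1) - spec l y (z (n + 1) + 1)‖ := by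
      rw [norm_sub_rev]; exact norm_sub_norm_le _ _
    have hn2 := mul_le_mul_of_nonneg_left hn1 (Real.exp_pos (l.re * (z (n + 1) + 1))).le
    have hn3 : Real.exp (-l.re) * U n ≤
        Real.exp (l.re * (z (n + 1) + 1)) * ‖spec l y (z (n + 2) + 1)‖ := by
      simp only [U] at herr ⊢
      linarith
    have hn4 := mul_le_mul_of_nonneg_left hn3 (Real.exp_pos l.re).le
    rw [← mul_assoc, ← Real.exp_add, add_neg_cancel, Real.exp_zero, one_mul, ← mul_assoc,
      ← Real.exp_add] at hn4
    refine hn4.trans ?_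
    simp only [U]
    apply mul_le_mul_of_nonneg_right _ (norm_nonneg _)
    apply Real.exp_le_exp.2
    have g1 : z (n + 1) + 1 < z (n + 2) := hz.gap (n + 1)
    rw [show z (n + 1 + 1) = z (n + 2) from rfl]
    nlinarith
  have hmono : ∀ n, N ≤ n → U N ≤ U n := by
    intro n hn
    induction n, hn using Nat.le_induction with
    | base => exact le_rfl
    | succ n hn ih => exact ih.trans (hstep n hn)
  have hUN : 0 < U N :=
    (mul_pos hs0 (hz.amp_pos (N + 1))).trans_le (spec_lower hre him him' h hα0 hz N)
  have hlim2 : Tendsto (fun n => (1 + ‖l‖ * Real.exp l.re) * amp y z (n + 1)) atTop (𝓝 0) := by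
    simpa using hlim1.const_mul (1 + ‖l‖ * Real.exp l.re)
  have : U N ≤ 0 := ge_of_tendsto hlim2 (eventually_atTop.2 ⟨N, fun n hn =>
    (hmono n hn).trans (spec_upper hre h hα0 hz n)⟩)
  linarith

/-- The maxima decrease to a positive limit. -/
lemma Zeros.exists_limit (hz : Zeros y z K) (h : WrightSol α y) (hα : Real.pi / 2 < α) :
    ∃ M, 0 < M ∧ Tendsto (fun k => y (z (2 * k) + 1)) atTop (𝓝 M) := by
  have hα0 : 0 < α := by linarith [Real.pi_pos]
  have heq : (fun k => y (z (2 * k) + 1)) = fun k => amp y z (2 * k) := by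
    funext k; simp [amp]
  rw [heq]
  have hanti : Antitone fun k => amp y z (2 * k) := antitone_nat_of_succ_le fun k =>
    (hz.amp_lt h hα0 (2 * k)).le
  have hbdd : BddBelow (range fun k => amp y z (2 * k)) :=
    ⟨0, by rintro _ ⟨k, rfl⟩; exact (hz.amp_pos _).le⟩
  have hlim := tendsto_atTop_ciInf hanti hbdd
  refine ⟨_, ?_, hlim⟩
  refine lt_of_le_of_ne (ge_of_tendsto' hlim fun k => (hz.amp_pos _).le) fun h0 => ?_
  rw [← h0] at hlim
  apply hz.not_tendsto h hα
  have hlim' : Tendsto (fun k => amp y z (2 * (k + 1))) atTop (𝓝 0) :=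
    (tendsto_add_atTop_iff_nat 1).2 hlim
  -- the minima are controlled by the preceding maxima
  have hodd : Tendsto (fun k => amp y z (2 * (k + 1) + 1)) atTop (𝓝 0) := by
    have h2 : Tendsto (fun k => 2 * α * amp y z (2 * (k + 1))) atTop (𝓝 0) := by
      simpa using hlim'.const_mul (2 * α)
    refine squeeze_zero' (Eventually.of_forall fun k => (hz.amp_pos _).le) ?_ h2
    filter_upwards [hlim'.eventually (gt_mem_nhds one_pos)] with k hk
    exact hz.amp_succ_le h hα0 (2 * k + 1) hk.le
  have hodd' : Tendsto (fun k => amp y z (2 * k + 1)) atTop (𝓝 0) :=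
    (tendsto_add_atTop_iff_nat 1).1 hodd
  rw [Metric.tendsto_atTop] at hlim hodd' ⊢
  intro ε hε
  obtain ⟨N1, h1⟩ := hlim ε hε
  obtain ⟨N2, h2⟩ := hodd' ε hε
  refine ⟨2 * (N1 + N2), fun n hn => ?_⟩
  rcases Nat.even_or_odd' n with ⟨k, rfl | rfl⟩
  · exact h1 k (by omega)
  · exact h2 k (by omega)

/-! ### The limiting entire solution and rigidity -/

lemma exists_ultralimit (U : Ultrafilter ℕ) {f : ℕ → ℝ} {B : ℝ}
    (hf : ∀ᶠ k in (U : Filter ℕ), |f k| ≤ B) : ∃ L, Tendsto f U (𝓝 L) := by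
  have hmem : Icc (-B) B ∈ (U.map f : Ultrafilter ℝ) := by
    rw [Ultrafilter.mem_map]
    filter_upwards [hf] with k hk
    exact abs_le.1 hk
  obtain ⟨L, -, hL⟩ := (isCompact_Icc (a := -B) (b := B)).ultrafilter_le_nhds' (U.map f) hmem
  exact ⟨L, hL⟩

lemma abs_exp_sub_exp_le {u v B : ℝ} (hu : u ≤ B) (hv : v ≤ B) :
    |Real.exp u - Real.exp v| ≤ Real.exp B * |u - v| := by
  have key : ∀ u v, u ≤ B → v ≤ u → Real.exp u - Real.exp v ≤ Real.exp B * (u - v) := by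
    intro u v hu hvu
    have h1 := Real.add_one_le_exp (v - u)
    have h2 : Real.exp v = Real.exp u * Real.exp (v - u) := by rw [← Real.exp_add]; congr 1; ring
    have h3 := mul_le_mul_of_nonneg_left h1 (Real.exp_pos u).le
    have h4 := mul_le_mul_of_nonneg_right (Real.exp_le_exp.2 hu) (sub_nonneg.2 hvu)
    linarith
  rcases le_total v u with h | h
  · rw [abs_of_nonneg (sub_nonneg.2 h), abs_of_nonneg (sub_nonneg.2 (Real.exp_le_exp.2 h))]
    exact key u v hu h
  · rw [abs_sub_comm, abs_sub_comm u v, abs_of_nonneg (sub_nonneg.2 h),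
      abs_of_nonneg (sub_nonneg.2 (Real.exp_le_exp.2 h))]
    exact key v u hv h

/-- First order Taylor estimate with a uniform constant; unlike the differential equation itself, it
passes to pointwise limits. -/
lemma WrightSol.taylor (h : WrightSol α y) (hα : 0 < α) : ∃ L : ℝ, ∀ s t, 2 ≤ s → 2 ≤ t →
    |y t - y s - (t - s) * (α * (1 - Real.exp (y (s - 1))))| ≤ L * (t - s) ^ 2 := by
  obtain ⟨B, hB, hyB, hlip⟩ := h.exists_bound hα
  have hd : ∀ r s, 2 ≤ r → 2 ≤ s → |α * (1 - Real.exp (y (r - 1))) - α * (1 - Real.exp (y (s - 1)))|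
      ≤ α * Real.exp B * B * |r - s| := by
    intro r s hr hs
    have h1 := abs_exp_sub_exp_le (le_of_abs_le (hyB (s - 1) (by linarith)))
      (le_of_abs_le (hyB (r - 1) (by linarith)))
    have h2 := hlip (r - 1) (s - 1) (by linarith) (by linarith)
    rw [show s - 1 - (r - 1) = s - r by ring] at h2
    rw [show α * (1 - Real.exp (y (r - 1))) - α * (1 - Real.exp (y (s - 1))) =
      α * (Real.exp (y (s - 1)) - Real.exp (y (r - 1))) by ring, abs_mul, abs_of_pos hα,
      abs_sub_comm r s, mul_assoc, mul_assoc]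
    exact mul_le_mul_of_nonneg_left
      (h1.trans (mul_le_mul_of_nonneg_left h2 (Real.exp_pos _).le)) hα.le
  refine ⟨α * Real.exp B * B, ?_⟩
  set L := α * Real.exp B * B with hL
  have hL0 : 0 ≤ L := by positivity
  intro s t hs ht
  have hbound : ‖(y t - t * (α * (1 - Real.exp (y (s - 1))))) -
      (y s - s * (α * (1 - Real.exp (y (s - 1)))))‖ ≤ (L * |t - s|) * ‖t - s‖ := by
    apply Convex.norm_image_sub_le_of_norm_hasDerivWithin_le (s := uIcc s t)
      (f := fun r => y r - r * (α * (1 - Real.exp (y (s - 1)))))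
      (f' := fun r => α * (1 - Real.exp (y (r - 1))) - 1 * (α * (1 - Real.exp (y (s - 1))))) _ _
      (convex_uIcc _ _) left_mem_uIcc right_mem_uIcc
    · intro r hr
      have hr2 : 2 ≤ r := le_trans (le_min hs ht) hr.1
      exact ((h.deriv r (by linarith)).sub ((hasDerivAt_id r).mul_const _)).hasDerivWithinAt
    · intro r hr
      have hr2 : 2 ≤ r := le_trans (le_min hs ht) hr.1
      rw [one_mul, Real.norm_eq_abs]
      refine (hd r s hr2 hs).trans (mul_le_mul_of_nonneg_left ?_ hL0)
      have := abs_sub_left_of_mem_uIcc hr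
      rwa [abs_sub_comm t s, abs_sub_comm] at *
  rw [Real.norm_eq_abs, Real.norm_eq_abs, mul_assoc, abs_mul_abs_self] at hbound
  rw [← sq] at hbound
  convert hbound using 2
  ring

/-- The limit of the translates of the solution by its maxima is an entire solution `x`; as
consecutive maxima have the same limit, `x` and its shift by the limit `c` of the return times agree
at `0` and `-1`, and their difference still has at most one sign change on unit intervals. -/
lemma exists_entire (hα : Real.pi / 2 < α) : ∃ (x : ℝ → ℝ) (c : ℝ), 0 < c ∧ x 0 ≠ x (-1) ∧
    (∀ t, HasDerivAt x (α * (1 - Real.exp (x (t - 1)))) t) ∧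
    x (0 + c) = x 0 ∧ x (-1 + c) = x (-1) ∧
    ∀ p q r, p < q → q < r → r ≤ p + 1 → ∀ σ : ℝ, (σ = 1 ∨ σ = -1) →
      ¬ (0 < σ * (x (p + c) - x p) ∧ σ * (x (q + c) - x q) < 0 ∧ 0 < σ * (x (r + c) - x r)) := by
  have hα1 : 1 < α := by linarith [Real.pi_gt_three]
  have hα0 : 0 < α := by linarith
  obtain ⟨y, h⟩ := exists_wrightSol α
  obtain ⟨z, K, hz⟩ := h.exists_zeros hα1
  obtain ⟨M, hM, hMlim⟩ := hz.exists_limit h hα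
  obtain ⟨B, hB, hyB, hlip⟩ := h.exists_bound hα0
  obtain ⟨L, hL⟩ := h.taylor hα0
  let U : Ultrafilter ℕ := hyperfilter ℕ
  have hU : (U : Filter ℕ) ≤ atTop := Nat.hyperfilter_le_atTop
  let e : ℕ → ℝ := fun k => z (2 * k) + 1
  have he : Tendsto e atTop atTop := by
    apply tendsto_atTop_mono (f := fun k : ℕ => (k : ℝ)) _ tendsto_natCast_atTop_atTop
    intro k
    have := hz.natCast_le (2 * k)
    push_cast at this
    have h0 : (0 : ℝ) ≤ k := by positivity
    simp only [e]; linarith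
  have hev : ∀ t T : ℝ, ∀ᶠ k in (U : Filter ℕ), T ≤ t + e k := by
    intro t T
    filter_upwards [hU (he.eventually_ge_atTop (T - t))] with k hk
    linarith
  have hx : ∀ t, ∃ L, Tendsto (fun k => y (t + e k)) U (𝓝 L) := fun t =>
    exists_ultralimit U (B := B) ((hev t 0).mono fun k hk => hyB _ hk)
  choose x hx using hx
  let c' : ℕ → ℝ := fun k => e (k + 1) - e k
  have hc'1 : ∀ k, 1 ≤ c' k := by
    intro k
    have h1 := hz.gap (2 * k)
    have h2 := hz.gap (2 * k + 1)
    simp only [c', e]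
    rw [show 2 * (k + 1) = 2 * k + 1 + 1 by ring]
    linarith
  have hc'2 : ∀ k, c' k ≤ 2 * K := by
    intro k
    have h1 := hz.gap_le (2 * k)
    have h2 := hz.gap_le (2 * k + 1)
    simp only [c', e]
    rw [show 2 * (k + 1) = 2 * k + 1 + 1 by ring]
    linarith
  obtain ⟨c, hc⟩ := exists_ultralimit U (f := c') (B := 2 * K)
    (Eventually.of_forall fun k => abs_le.2 ⟨by linarith [hc'1 k, hc'2 k], hc'2 k⟩)
  have hc1 : 1 ≤ c := ge_of_tendsto' hc hc'1
  have hxc : ∀ t, Tendsto (fun k => y (t + e k + c' k)) U (𝓝 (x (t + c))) := by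
    intro t
    have h1 : Tendsto (fun k => y (t + e k + c' k) - y (t + c + e k)) U (𝓝 0) := by
      have h2 : Tendsto (fun k => B * |c' k - c|) U (𝓝 0) := by
        have := ((hc.sub_const c).abs).const_mul B
        simpa using this
      refine squeeze_zero_norm' ?_ h2
      filter_upwards [hev t 0] with k hk
      have := hlip (t + c + e k) (t + e k + c' k) (by linarith) (by linarith [hc'1 k])
      rwa [show t + e k + c' k - (t + c + e k) = c' k - c by ring] at this
    have := h1.add (hx (t + c))
    simpa using this
  have hx0 : x 0 = M := by
    refine tendsto_nhds_unique (hx 0) ?_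
    simpa [e] using hMlim.mono_left hU
  have hxm : x (-1) = 0 := by
    refine tendsto_nhds_unique (hx (-1)) ?_
    simp [e, hz.root]
  have hxc0 : x (0 + c) = M := by
    refine tendsto_nhds_unique (hxc 0) ?_
    have := ((tendsto_add_atTop_iff_nat 1).2 hMlim).mono_left hU
    refine this.congr fun k => ?_
    congr 1
    simp only [c', e]; ring
  have hxcm : x (-1 + c) = 0 := by
    refine tendsto_nhds_unique (hxc (-1)) ?_
    refine tendsto_const_nhds.congr fun k => ?_
    rw [show -1 + e k + c' k = z (2 * (k + 1)) by simp only [c', e]; ring, hz.root]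
  refine ⟨x, c, by linarith, by rw [hx0, hxm]; exact hM.ne', ?_, by rw [hxc0, hx0],
    by rw [hxcm, hxm], ?_⟩
  · intro s
    have hT : ∀ t, |x t - x s - (t - s) * (α * (1 - Real.exp (x (s - 1))))| ≤ L * (t - s) ^ 2 := by
      intro t
      have h1 : Tendsto (fun k => |y (t + e k) - y (s + e k) -
          (t - s) * (α * (1 - Real.exp (y (s - 1 + e k))))|) U
          (𝓝 |x t - x s - (t - s) * (α * (1 - Real.exp (x (s - 1))))|) :=
        (((hx t).sub (hx s)).sub ((((hx (s - 1)).rexp.const_sub 1).const_mul α).const_mul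
          (t - s))).abs
      refine le_of_tendsto h1 ?_
      filter_upwards [hev t 2, hev s 2] with k hk1 hk2
      have := hL (s + e k) (t + e k) hk2 hk1
      rwa [show t + e k - (s + e k) = t - s by ring, show s + e k - 1 = s - 1 + e k by ring] at this
    rw [hasDerivAt_iff_isLittleO]
    refine Asymptotics.IsBigO.trans_isLittleO ?_ (Asymptotics.isLittleO_pow_sub_sub s one_lt_two)
    refine Asymptotics.IsBigO.of_bound L (Eventually.of_forall fun t => ?_)
    have := hT t
    rw [smul_eq_mul, Real.norm_eq_abs, Real.norm_eq_abs, Real.norm_eq_abs, abs_pow, abs_abs,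
      sq_abs]
    exact this
  · rintro p q r hpq hqr hrp σ hσ ⟨h1, h2, h3⟩
    -- strict signs persist along the approximating differences, whose zeros are separated
    have hlim : ∀ t, Tendsto (fun k => σ * (y (t + e k + c' k) - y (t + e k))) U
        (𝓝 (σ * (x (t + c) - x t))) := fun t => ((hxc t).sub (hx t)).const_mul σ
    have hall := ((hlim p).eventually (lt_mem_nhds h1)).and (((hlim q).eventually
      (gt_mem_nhds h2)).and (((hlim r).eventually (lt_mem_nhds h3)).and (hev p 0)))
    obtain ⟨k, k1, k2, k3, k4⟩ := hall.exists
    have hcont : Continuous fun s => σ * (y (s + c' k) - y s) := by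
      have := h.cont; fun_prop
    obtain ⟨a, ha, ha0⟩ := intermediate_value_Ioo' (show p + e k ≤ q + e k by linarith)
      hcont.continuousOn ⟨k2, k1⟩
    obtain ⟨b, hb, hb0⟩ := intermediate_value_Ioo (show q + e k ≤ r + e k by linarith)
      hcont.continuousOn ⟨k2, k3⟩
    have hσ0 : σ ≠ 0 := by rcases hσ with rfl | rfl <;> norm_num
    have := h.diff_zeros_sep hα0 (hc'1 k) (a := a) (b := b) (by linarith [ha.1])
      (by linarith [ha.2, hb.1])
      (by simpa [hσ0, sub_eq_zero] using ha0) (by simpa [hσ0, sub_eq_zero] using hb0)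
    linarith [ha.1, hb.2]

section Rigidity

variable {d d' : ℝ → ℝ}

/-- An entire function with `d'(t) ~ -d(t - 1)` and at most one sign change on unit intervals cannot
be positive somewhere between zeros at `-1` and `0`: a positive hump there forces signs `+`, `-` on
`(-2, -1)`, then a double zero at `-1` and hence a zero at `-2`, and finally signs `+`, `-`, `+`
on `(-3, -2)`. -/
lemma not_pos_of_pattern (hd : ∀ t, HasDerivAt d (d' t) t)
    (hpos : ∀ t, 0 < d (t - 1) → d' t < 0) (hneg : ∀ t, d (t - 1) < 0 → 0 < d' t)
    (hzero : ∀ t, d (t - 1) = 0 → d' t = 0)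
    (pat : ∀ p q r, p < q → q < r → r ≤ p + 1 → ¬ (0 < d p ∧ d q < 0 ∧ 0 < d r))
    (pat' : ∀ p q r, p < q → q < r → r ≤ p + 1 → ¬ (d p < 0 ∧ 0 < d q ∧ d r < 0))
    (h0 : d 0 = 0) (h1 : d (-1) = 0) {s : ℝ} (hs1 : -1 < s) (hs0 : s < 0) : d s ≤ 0 := by
  by_contra hs
  push Not at hs
  have hcont : Continuous d := continuous_iff_continuousAt.2 fun t => (hd t).continuousAt
  -- a rise of `d` comes from a negative value one unit earlier, a fall from a positive one
  have rise : ∀ a b, a < b → d a < d b → ∃ ξ, a - 1 < ξ ∧ ξ < b - 1 ∧ d ξ < 0 := by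
    intro a b hab hlt
    obtain ⟨ξ, hξ, he⟩ := exists_hasDerivAt_eq_slope d d' hab hcont.continuousOn fun t _ => hd t
    refine ⟨ξ - 1, by linarith [hξ.1], by linarith [hξ.2], ?_⟩
    have hp : 0 < d' ξ := by rw [he]; exact div_pos (by linarith) (by linarith)
    by_contra hge
    rcases (not_lt.1 hge).eq_or_lt with h | h
    · linarith [hzero ξ h.symm]
    · linarith [hpos ξ h]
  have fall : ∀ a b, a < b → d b < d a → ∃ ξ, a - 1 < ξ ∧ ξ < b - 1 ∧ 0 < d ξ := by
    intro a b hab hlt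
    obtain ⟨ξ, hξ, he⟩ := exists_hasDerivAt_eq_slope d d' hab hcont.continuousOn fun t _ => hd t
    refine ⟨ξ - 1, by linarith [hξ.1], by linarith [hξ.2], ?_⟩
    have hp : d' ξ < 0 := by rw [he]; exact div_neg_of_neg_of_pos (by linarith) (by linarith)
    by_contra hge
    rcases (not_lt.1 hge).eq_or_lt with h | h
    · linarith [hzero ξ h]
    · linarith [hneg ξ h]
  obtain ⟨p, hp1, hp2, hp⟩ := rise (-1) s hs1 (by linarith)
  obtain ⟨q, hq1, hq2, hq⟩ := fall s 0 hs0 (by linarith)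
  -- near the zero at `-1` there is no sign change, so `d'(-1) = 0` and `d (-2) = 0`
  have hloc1 : ∀ r, q < r → r < -1 → 0 ≤ d r := by
    intro r hr1 hr2
    by_contra hneg'
    exact pat' p q r (by linarith) hr1 (by linarith) ⟨hp, hq, not_le.1 hneg'⟩
  have hloc2 : ∀ r, -1 < r → r < s → 0 ≤ d r := by
    intro r hr1 hr2
    by_contra hneg'
    exact pat q r s (by linarith) hr2 (by linarith) ⟨hq, not_le.1 hneg', hs⟩
  have hmin : IsLocalMin d (-1) := by
    have : Ioo q s ∈ 𝓝 (-1 : ℝ) := Ioo_mem_nhds (by linarith) hs1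
    filter_upwards [this] with r hr
    rw [h1]
    rcases lt_trichotomy r (-1) with h | h | h
    · exact hloc1 r hr.1 h
    · rw [h, h1]
    · exact hloc2 r h hr.2
  have hd1 : d' (-1) = 0 := hmin.hasDerivAt_eq_zero (hd (-1))
  have h2 : d (-2) = 0 := by
    rcases lt_trichotomy (d (-1 - 1)) 0 with h | h | h
    · linarith [hneg (-1) h]
    · rwa [show (-1 : ℝ) - 1 = -2 by norm_num] at h
    · linarith [hpos (-1) h]
  obtain ⟨a, ha1, ha2, ha⟩ := fall (-2) p (by linarith) (by linarith)
  obtain ⟨b, hb1, hb2, hb⟩ := rise p q (by linarith) (by linarith)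
  obtain ⟨e, he1, he2, he⟩ := fall q (-1) (by linarith) (by linarith)
  exact pat a b e (by linarith) (by linarith) (by linarith) ⟨ha, hb, he⟩

/-- Rigidity: such a function vanishes identically, since it vanishes on `[-1, 0]` and the feedback
rule propagates this both ways. -/
lemma eq_zero_of_pattern (hd : ∀ t, HasDerivAt d (d' t) t)
    (hpos : ∀ t, 0 < d (t - 1) → d' t < 0) (hneg : ∀ t, d (t - 1) < 0 → 0 < d' t)
    (hzero : ∀ t, d (t - 1) = 0 → d' t = 0)
    (pat : ∀ p q r, p < q → q < r → r ≤ p + 1 → ¬ (0 < d p ∧ d q < 0 ∧ 0 < d r))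
    (pat' : ∀ p q r, p < q → q < r → r ≤ p + 1 → ¬ (d p < 0 ∧ 0 < d q ∧ d r < 0))
    (h0 : d 0 = 0) (h1 : d (-1) = 0) (t : ℝ) : d t = 0 := by
  have hcont : Continuous d := continuous_iff_continuousAt.2 fun t => (hd t).continuousAt
  have base : ∀ s, -1 ≤ s → s ≤ 0 → d s = 0 := by
    intro s hs1 hs0
    rcases hs1.eq_or_lt with rfl | hs1
    · exact h1
    rcases hs0.eq_or_lt with rfl | hs0
    · exact h0
    apply le_antisymm
    · exact not_pos_of_pattern hd hpos hneg hzero pat pat' h0 h1 hs1 hs0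
    · have := not_pos_of_pattern (d := fun t => -d t) (d' := fun t => -d' t) (fun t => (hd t).neg)
        (fun t ht => by linarith [hneg t (by linarith)])
        (fun t ht => by linarith [hpos t (by linarith)])
        (fun t ht => by rw [hzero t (by linarith), neg_zero])
        (fun p q r h1 h2 h3 ⟨h4, h5, h6⟩ =>
          pat' p q r h1 h2 h3 ⟨by linarith, by linarith, by linarith⟩)
        (fun p q r h1 h2 h3 ⟨h4, h5, h6⟩ =>
          pat p q r h1 h2 h3 ⟨by linarith, by linarith, by linarith⟩)
        (by simp [h0]) (by simp [h1]) hs1 hs0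
      linarith
  have fwd : ∀ n : ℕ, ∀ s : ℝ, -1 ≤ s → s ≤ n → d s = 0 := by
    intro n
    induction n with
    | zero => simpa using base
    | succ n ih =>
      intro s hs1 hs2
      rcases le_or_gt s n with hs | hs
      · exact ih s hs1 hs
      obtain ⟨ξ, hξ, he⟩ := exists_hasDerivAt_eq_slope d d' hs hcont.continuousOn fun t _ => hd t
      have hn : (0 : ℝ) ≤ n := by positivity
      push_cast at hs2
      rw [hzero ξ (ih _ (by linarith [hξ.1]) (by linarith [hξ.2])), ih n (by linarith) le_rfl,
        sub_zero, eq_comm, div_eq_zero_iff] at he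
      rcases he with he | he
      · exact he
      · linarith
  have bwd : ∀ n : ℕ, ∀ s : ℝ, -1 - n < s → s ≤ 0 → d s = 0 := by
    intro n
    induction n with
    | zero => intro s hs; simp at hs; exact base s hs.le
    | succ n ih =>
      intro s hs1 hs2
      rcases le_or_gt (-1) s with hs | hs
      · exact base s hs hs2
      push_cast at hs1
      have hloc : d =ᶠ[𝓝 (s + 1)] fun _ => 0 := by
        filter_upwards [Ioo_mem_nhds (show -1 - (n : ℝ) < s + 1 by linarith)
          (show s + 1 < 0 by linarith)] with r hr
        exact ih r hr.1 hr.2.le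
      have hder : d' (s + 1) = 0 :=
        (hd (s + 1)).unique ((hasDerivAt_const (s + 1) (0 : ℝ)).congr_of_eventuallyEq hloc)
      rcases lt_trichotomy (d (s + 1 - 1)) 0 with h | h | h
      · linarith [hneg (s + 1) h]
      · rwa [add_sub_cancel_right] at h
      · linarith [hpos (s + 1) h]
  obtain ⟨n, hn⟩ := exists_nat_gt |t|
  rcases le_total 0 t with ht | ht
  · exact fwd n t (by linarith) (by linarith [le_abs_self t])
  · exact bwd n t (by linarith [neg_abs_le t]) ht

end Rigidity

/-- Wright's equation has a nonconstant periodic solution for `α > π / 2`. -/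
lemma exists_periodic (hα : Real.pi / 2 < α) : ∃ (x : ℝ → ℝ) (c : ℝ), 0 < c ∧ x 0 ≠ x (-1) ∧
    (∀ t, HasDerivAt x (α * (1 - Real.exp (x (t - 1)))) t) ∧ ∀ t, x (t + c) = x t := by
  have hα0 : 0 < α := by linarith [Real.pi_pos]
  obtain ⟨x, c, hc, hne, hx, h0, h1, pat⟩ := exists_entire hα
  refine ⟨x, c, hc, hne, hx, fun t => ?_⟩
  have := eq_zero_of_pattern (d := fun t => x (t + c) - x t)
    (d' := fun t => α * (1 - Real.exp (x (t - 1 + c))) - α * (1 - Real.exp (x (t - 1))))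
    (fun t => ?_) (fun t ht => ?_) (fun t ht => ?_) (fun t ht => ?_)
    (fun p q r a1 a2 a3 a4 => pat p q r a1 a2 a3 1 (Or.inl rfl) (by simpa only [one_mul] using a4))
    (fun p q r a1 a2 a3 ⟨a4, a5, a6⟩ => pat p q r a1 a2 a3 (-1) (Or.inr rfl)
      ⟨by linarith, by linarith, by linarith⟩)
    (sub_eq_zero.2 h0) (sub_eq_zero.2 h1) t
  · exact sub_eq_zero.1 this
  · have := ((hx (t + c)).comp_add_const t c).sub (hx t)
    rwa [show t + c - 1 = t - 1 + c by ring] at this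
  · have := Real.exp_lt_exp.2 (sub_pos.1 ht)
    nlinarith
  · have := Real.exp_lt_exp.2 (sub_neg.1 ht)
    nlinarith
  · rw [sub_eq_zero.1 ht, sub_self]

end DelayLogistic

/-- Past the Hopf bifurcation at `ρτ = π/2`, i.e. for `ρτ > π/2`, the delay logistic
equation `x'(t) = ρ x(t)(1 - x(t-τ))` admits a limit cycle: there exists a
nonconstant periodic differentiable positive solution `x : ℝ → ℝ`. -/
theorem delay_logistic_limit_cycle
    (ρ τ : ℝ) (hρ : 0 < ρ) (hτ : 0 < τ) (h : Real.pi / 2 < ρ * τ) :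
    ∃ x : ℝ → ℝ,
      (∀ t : ℝ, HasDerivAt x (ρ * x t * (1 - x (t - τ))) t) ∧
      (∀ t : ℝ, 0 < x t) ∧
      (∃ T : ℝ, 0 < T ∧ ∀ t : ℝ, x (t + T) = x t) ∧
      (∃ t₁ t₂ : ℝ, x t₁ ≠ x t₂) := by
  obtain ⟨y, c, hc, hne, hy, hper⟩ := DelayLogistic.exists_periodic h
  -- rescale time by the delay and undo the logarithm
  refine ⟨fun t => Real.exp (y (t / τ)), fun t => ?_, fun t => Real.exp_pos _,
    ⟨c * τ, mul_pos hc hτ, fun t => ?_⟩, ⟨0, -τ, ?_⟩⟩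
  · have h1 : HasDerivAt (fun t : ℝ => t / τ) (1 / τ) t := (hasDerivAt_id t).div_const τ
    refine ((hy (t / τ)).comp t h1).exp.congr_deriv ?_
    simp only [Function.comp, sub_div, div_self hτ.ne']
    field_simp
  · simp only
    rw [add_div, mul_div_cancel_right₀ _ hτ.ne', hper]
  · simp only [zero_div, neg_div, div_self hτ.ne']
    exact fun he => hne (Real.exp_injective he)
end

section
/- Let ρ, τ > 0. The characteristic equation λ + ρ e^{−λτ} = 0 has a real root λ ∈ ℝ if and only if ρτ ≤ 1/e. -/
/-!
A real root `λ` gives `u = -λτ` with `ρτ e^u = u`. Since `u ≤ e^(u-1)` for all real `u`, this forces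
`ρτ ≤ 1/e`. Conversely, if `ρτ ≤ 1/e`, the function `λ ↦ λ + ρ e^(-λτ)` is nonpositive at `-1/τ`
and positive at `0`, so the intermediate value theorem yields a root.
-/

/-- The characteristic equation `λ + ρ e^{-λτ} = 0` of the delay logistic equation
linearized at the equilibrium `x̄ = 1` has a real root if and only if `ρτ ≤ 1/e`. -/
theorem characteristic_equation_real_root_iff
    (ρ τ : ℝ) (hρ : 0 < ρ) (hτ : 0 < τ) :
    (∃ lam : ℝ, lam + ρ * Real.exp (-lam * τ) = 0) ↔ ρ * τ ≤ 1 / Real.exp 1 := by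
  rw [le_div_iff₀ (Real.exp_pos 1)]
  constructor
  · rintro ⟨l, hl⟩
    -- With `u = -lτ` the equation reads `ρτ e^u = u`, and `u ≤ e^(u-1)`.
    have h1 : -l * τ ≤ Real.exp (-l * τ - 1) := by
      linarith [Real.add_one_le_exp (-l * τ - 1)]
    have h2 : Real.exp (-l * τ) = Real.exp (-l * τ - 1) * Real.exp 1 := by
      rw [← Real.exp_add]; ring_nf
    have h3 : ρ * τ * Real.exp 1 * Real.exp (-l * τ - 1) = -l * τ := by
      rw [h2] at hl
      linear_combination τ * hl
    have h4 := Real.exp_pos (-l * τ - 1)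
    exact le_of_mul_le_mul_right (by linarith) h4
  · intro h
    -- The left-hand side changes sign on `[-1/τ, 0]`; `-1/τ` is the double root when `ρτ = 1/e`.
    have hc : ContinuousOn (fun l : ℝ => l + ρ * Real.exp (-l * τ)) (Set.Icc (-(1 / τ)) 0) := by
      fun_prop
    have ha : -(1 / τ) ≤ 0 := by
      have : 0 < 1 / τ := by positivity
      linarith
    have hleft : -(1 / τ) + ρ * Real.exp (-(-(1 / τ)) * τ) ≤ 0 := by
      have e : -(-(1 / τ)) * τ = 1 := by field_simp
      have : ρ * Real.exp 1 ≤ 1 / τ := by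
        rw [le_div_iff₀ hτ]; linarith
      rw [e]; linarith
    have hright : 0 ≤ (0 : ℝ) + ρ * Real.exp (-0 * τ) := by positivity
    obtain ⟨l, -, hl⟩ := intermediate_value_Icc ha hc ⟨hleft, hright⟩
    exact ⟨l, hl⟩
end
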